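/- arXiv:1402.1818 — 4 statements merged into one kernel-verified Lean document; each statement's English description precedes it below -/
import Mathlib

section
/- (Mixing Lemma) Let (X, γ) be a probability space and let (Eᵢ) be a sequence of measurable subsets of X that are pairwise independent (γ(Eᵢ ∩ Eⱼ) = γ(Eᵢ)γ(Eⱼ) for all i ≠ j) and satisfy ∑ᵢ γ(Eᵢ) = ∞. Then for every measurable set E ⊆ X and every ε > 0 there exists a positive integer i such that γ(E ∩ Eᵢ) > (γ(E) − ε) γ(Eᵢ). -/
open MeasureTheory

/-!
For a finite set `t` of indices put `S = ∑ i ∈ t, 1_{E i}` and `s = ∑ i ∈ t, γ (E i)`, the mean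
of `S`. Pairwise independence gives `Var S ≤ s`. If no `i ∈ t` mixes `F` up to `ε`, then
`Cov (S, 1_F) ≤ -ε s`, so Cauchy-Schwarz yields `(ε s)² ≤ s Var 1_F`, that is
`s ≤ Var 1_F / ε²`. This bound does not depend on `t`, so the measures of the sets that fail to
mix `F` have a finite sum.
-/

open ProbabilityTheory

section Covariance

variable {X ι : Type*} {mX : MeasurableSpace X} {μ : Measure X}

lemma sq_covariance_le_variance_mul_variance [IsFiniteMeasure μ] {f g : X → ℝ}
    (hf : MemLp f 2 μ) (hg : MemLp g 2 μ) : cov[f, g; μ] ^ 2 ≤ Var[f; μ] * Var[g; μ] := by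
  have quadratic_nonneg (x : ℝ) :
      0 ≤ Var[f; μ] * (x * x) + 2 * cov[f, g; μ] * x + Var[g; μ] := by
    calc 0 ≤ Var[x • f + g; μ] := variance_nonneg _ _
      _ = Var[f; μ] * (x * x) + 2 * cov[f, g; μ] * x + Var[g; μ] := by
        rw [variance_add (hf.const_smul x) hg, variance_smul, covariance_smul_left]
        ring
  have hdiscrim := discrim_le_zero quadratic_nonneg
  rw [discrim] at hdiscrim
  linarith

lemma memLp_indicator_one [IsFiniteMeasure μ] {A : Set X} (p : ENNReal) (hA : MeasurableSet A) :
    MemLp (A.indicator (1 : X → ℝ)) p μ :=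
  memLp_indicator_const p hA (1 : ℝ) (Or.inr (measure_ne_top μ A))

variable [IsProbabilityMeasure μ]

lemma covariance_indicator_one {A B : Set X} (hA : MeasurableSet A) (hB : MeasurableSet B) :
    cov[A.indicator (1 : X → ℝ), B.indicator (1 : X → ℝ); μ]
      = μ.real (A ∩ B) - μ.real A * μ.real B := by
  rw [covariance_eq_sub (memLp_indicator_one 2 hA) (memLp_indicator_one 2 hB),
    ← Set.inter_indicator_one, integral_indicator_one hA, integral_indicator_one hB,
    integral_indicator_one (hA.inter hB)]

lemma variance_sum_indicator_one_le {E : ι → Set X} {t : Finset ι}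
    (hE : ∀ i ∈ t, MeasurableSet (E i))
    (hneg : (t : Set ι).Pairwise fun i j ↦ μ.real (E i ∩ E j) ≤ μ.real (E i) * μ.real (E j)) :
    Var[∑ i ∈ t, (E i).indicator (1 : X → ℝ); μ] ≤ ∑ i ∈ t, μ.real (E i) := by
  classical
  have hcov : ∀ i ∈ t, ∀ j ∈ t,
      cov[(E i).indicator (1 : X → ℝ), (E j).indicator (1 : X → ℝ); μ]
        ≤ if i = j then μ.real (E i) else 0 := by
    intro i hi j hj
    rw [covariance_indicator_one (hE i hi) (hE j hj)]
    split_ifs with hij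
    · subst hij
      rw [Set.inter_self]
      exact sub_le_self _ (mul_self_nonneg _)
    · exact sub_nonpos.2 (hneg hi hj hij)
  calc Var[∑ i ∈ t, (E i).indicator (1 : X → ℝ); μ]
      = ∑ i ∈ t, ∑ j ∈ t,
          cov[(E i).indicator (1 : X → ℝ), (E j).indicator (1 : X → ℝ); μ] :=
        variance_sum' fun i hi ↦ memLp_indicator_one 2 (hE i hi)
    _ ≤ ∑ i ∈ t, ∑ j ∈ t, if i = j then μ.real (E i) else 0 :=
        Finset.sum_le_sum fun i hi ↦ Finset.sum_le_sum (hcov i hi)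
    _ = ∑ i ∈ t, μ.real (E i) :=
        Finset.sum_congr rfl fun i hi ↦ by rw [Finset.sum_ite_eq, if_pos hi]

lemma sum_measureReal_le_variance_div_sq {E : ι → Set X} {t : Finset ι}
    (hE : ∀ i ∈ t, MeasurableSet (E i))
    (hneg : (t : Set ι).Pairwise fun i j ↦ μ.real (E i ∩ E j) ≤ μ.real (E i) * μ.real (E j))
    {f : X → ℝ} (hf : MemLp f 2 μ) {ε : ℝ} (hε : 0 < ε)
    (hcov : ∀ i ∈ t, cov[(E i).indicator (1 : X → ℝ), f; μ] ≤ -(ε * μ.real (E i))) :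
    ∑ i ∈ t, μ.real (E i) ≤ Var[f; μ] / ε ^ 2 := by
  set S : X → ℝ := ∑ i ∈ t, (E i).indicator 1
  set s := ∑ i ∈ t, μ.real (E i)
  have hind : ∀ i ∈ t, MemLp ((E i).indicator (1 : X → ℝ)) 2 μ :=
    fun i hi ↦ memLp_indicator_one 2 (hE i hi)
  have hs : 0 ≤ s := Finset.sum_nonneg fun _ _ ↦ measureReal_nonneg
  have hcovS : ε * s ≤ -cov[S, f; μ] := by
    rw [covariance_sum_left' hind hf, Finset.mul_sum, ← Finset.sum_neg_distrib]
    exact Finset.sum_le_sum fun i hi ↦ le_neg_of_le_neg (hcov i hi)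
  have hsq : s * (s * ε ^ 2) ≤ s * Var[f; μ] :=
    calc s * (s * ε ^ 2) = (ε * s) ^ 2 := by ring
      _ ≤ (-cov[S, f; μ]) ^ 2 := by gcongr
      _ = cov[S, f; μ] ^ 2 := neg_sq _
      _ ≤ Var[S; μ] * Var[f; μ] :=
        sq_covariance_le_variance_mul_variance (memLp_finsetSum' t hind) hf
      _ ≤ s * Var[f; μ] :=
        mul_le_mul_of_nonneg_right (variance_sum_indicator_one_le hE hneg) (variance_nonneg _ _)
  rw [le_div_iff₀ (by positivity)]
  rcases hs.eq_or_lt with hs0 | hspos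
  · rw [← hs0, zero_mul]
    exact variance_nonneg _ _
  · exact le_of_mul_le_mul_left hsq hspos

lemma exists_neg_mul_lt_covariance_indicator_one {E : ι → Set X}
    (hE : ∀ i, MeasurableSet (E i))
    (hneg : Pairwise fun i j ↦ μ (E i ∩ E j) ≤ μ (E i) * μ (E j))
    (hsum : ∑' i, μ (E i) = ⊤) {f : X → ℝ} (hf : MemLp f 2 μ) {ε : ℝ} (hε : 0 < ε) :
    ∃ i, -(ε * μ.real (E i)) < cov[(E i).indicator (1 : X → ℝ), f; μ] := by
  by_contra! hcov
  have hneg_real : Pairwise fun i j ↦ μ.real (E i ∩ E j) ≤ μ.real (E i) * μ.real (E j) := by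
    intro i j hij
    simpa only [measureReal_def, ENNReal.toReal_mul] using
      ENNReal.toReal_mono (by finiteness) (hneg hij)
  have hsummable : Summable fun i ↦ μ.real (E i) :=
    summable_of_sum_le (fun _ ↦ measureReal_nonneg) fun t ↦
      sum_measureReal_le_variance_div_sq (fun i _ ↦ hE i) (hneg_real.set_pairwise t) hf hε
        fun i _ ↦ hcov i
  refine hsummable.tsum_ofReal_ne_top ?_
  simpa [ofReal_measureReal] using hsum

end Covariance

theorem stmt1_general {X ι : Type*} [MeasurableSpace X] (γ : Measure X) [IsProbabilityMeasure γ]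
    (E : ι → Set X) (hE : ∀ i, MeasurableSet (E i))
    (hneg : Pairwise fun i j ↦ γ (E i ∩ E j) ≤ γ (E i) * γ (E j))
    (hsum : ∑' i, γ (E i) = ⊤) (F : Set X) (ε : ℝ) (hε : 0 < ε) :
    ∃ i, (γ.real F - ε) * γ.real (E i) < γ.real (F ∩ E i) := by
  have hF : MeasurableSet (toMeasurable γ F) := measurableSet_toMeasurable γ F
  obtain ⟨i, hi⟩ :=
    exists_neg_mul_lt_covariance_indicator_one hE hneg hsum (memLp_indicator_one 2 hF) hε
  have hinter : γ.real (E i ∩ toMeasurable γ F) = γ.real (F ∩ E i) := by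
    rw [Set.inter_comm, measureReal_def,
      Measure.measure_toMeasurable_inter (hE i) (measure_ne_top γ F), measureReal_def]
  have hhull : γ.real (toMeasurable γ F) = γ.real F :=
    congrArg ENNReal.toReal (measure_toMeasurable F)
  rw [covariance_indicator_one (hE i) hF, hinter, hhull] at hi
  exact ⟨i, by linarith⟩

/-- Mixing Lemma: if `(E i)` are pairwise independent sets in a probability space `(X, γ)`
with divergent sum of measures, then any set `E` is mixed by some `E i` up to `ε`. -/
theorem stmt1 {X : Type*} [MeasurableSpace X] (γ : Measure X) [IsProbabilityMeasure γ]
    (E : ℕ → Set X) (hE : ∀ i, MeasurableSet (E i))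
    (hind : ∀ i j, i ≠ j → γ (E i ∩ E j) = γ (E i) * γ (E j))
    (hsum : ∑' i, γ (E i) = ⊤)
    (F : Set X) (hF : MeasurableSet F) (ε : ℝ) (hε : 0 < ε) :
    ∃ i : ℕ, (γ (F ∩ E i)).toReal > ((γ F).toReal - ε) * (γ (E i)).toReal :=
  stmt1_general γ E hE (fun i j hij ↦ (hind i j hij).le) hsum F ε hε
end

section
/- (Double Mixing Lemma) Let (X, γ) and (Y, ν) be probability spaces. Suppose (Eᵢ)ᵢ₌₁^∞ ⊆ X and (Fᵢ)ᵢ₌₁^∞ ⊆ Y are each sequences of pairwise independent measurable sets such that γ(Eᵢ) = ν(Fᵢ) for all i and ∑ᵢ γ(Eᵢ) = ∑ᵢ ν(Fᵢ) = ∞. Then for all measurable sets E ⊆ X and F ⊆ Y and every ε > 0, there exists a positive integer i such that both γ(E ∩ Eᵢ) > (γ(E) − ε) γ(Eᵢ) and ν(F ∩ Fᵢ) > (ν(F) − ε) ν(Fᵢ). -/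
/-!
Call an index `i` deficient for `A` if `γ (A ∩ E i) ≤ (γ A - ε) * γ (E i)`, that is, if the
indicators of `E i` and `A` have covariance at most `-ε * γ (E i)`. For a finite set `S` of
deficient indices let `N` be the sum of the indicators of the `E i`, `i ∈ S`, and
`M = ∑ i ∈ S, γ (E i)`. Pairwise independence gives `Var N ≤ M`, so expanding the variance of
`ε * N + 1_A` yields `0 ≤ ε² M - 2 ε² M + 1`, that is, `M ≤ 1 / ε²`. Hence the deficient indices for
`A` and those for `B` both carry finite total measure, and by divergence they cannot exhaust all
indices.
-/

open MeasureTheory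

open ProbabilityTheory
open scoped ENNReal

section RandomVariables

variable {Ω ι : Type*} [MeasurableSpace Ω] {μ : Measure Ω} {s : Finset ι} {X : ι → Ω → ℝ}

theorem variance_sum_le_sum_variance [IsFiniteMeasure μ] (hX : ∀ i ∈ s, MemLp (X i) 2 μ)
    (hcov : (s : Set ι).Pairwise fun i j => cov[X i, X j; μ] ≤ 0) :
    Var[∑ i ∈ s, X i; μ] ≤ ∑ i ∈ s, Var[X i; μ] := by
  classical
  rw [variance_sum' hX]
  refine Finset.sum_le_sum fun i hi => ?_
  have hoff : ∑ j ∈ s.erase i, cov[X i, X j; μ] ≤ 0 :=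
    Finset.sum_nonpos fun j hj =>
      hcov hi (Finset.mem_of_mem_erase hj) (Finset.ne_of_mem_erase hj).symm
  rw [← Finset.add_sum_erase s _ hi, covariance_self (hX i hi).aemeasurable]
  linarith

theorem sq_mul_sum_le_variance_of_covariance_le [IsFiniteMeasure μ] {Z : Ω → ℝ} {m : ι → ℝ} {ε : ℝ}
    (hε : 0 ≤ ε) (hX : ∀ i ∈ s, MemLp (X i) 2 μ) (hZ : MemLp Z 2 μ)
    (hpair : (s : Set ι).Pairwise fun i j => cov[X i, X j; μ] ≤ 0)
    (hvar : ∀ i ∈ s, Var[X i; μ] ≤ m i) (hcov : ∀ i ∈ s, cov[X i, Z; μ] ≤ -ε * m i) :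
    ε ^ 2 * ∑ i ∈ s, m i ≤ Var[Z; μ] := by
  have hN : MemLp (∑ i ∈ s, X i) 2 μ := memLp_finsetSum' s hX
  have hvarN : Var[∑ i ∈ s, X i; μ] ≤ ∑ i ∈ s, m i :=
    (variance_sum_le_sum_variance hX hpair).trans (Finset.sum_le_sum hvar)
  have hcovN : cov[∑ i ∈ s, X i, Z; μ] ≤ -ε * ∑ i ∈ s, m i := by
    rw [covariance_sum_left' hX hZ, Finset.mul_sum]
    exact Finset.sum_le_sum hcov
  have hexpand : Var[ε • ∑ i ∈ s, X i + Z; μ]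
      = ε ^ 2 * Var[∑ i ∈ s, X i; μ] + 2 * (ε * cov[∑ i ∈ s, X i, Z; μ]) + Var[Z; μ] := by
    rw [variance_add (hN.const_smul ε) hZ, variance_smul, covariance_smul_left]
  have hnonneg := variance_nonneg (ε • ∑ i ∈ s, X i + Z) μ
  have hvarN' := mul_le_mul_of_nonneg_left hvarN (sq_nonneg ε)
  have hcovN' := mul_le_mul_of_nonneg_left hcovN hε
  linarith

end RandomVariables

section Events

variable {Ω ι : Type*} [MeasurableSpace Ω] {μ : Measure Ω}

theorem memLp_indicator_one_s2 [IsFiniteMeasure μ] {s : Set Ω} (hs : MeasurableSet s) (p : ℝ≥0∞) :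
    MemLp (s.indicator (1 : Ω → ℝ)) p μ :=
  memLp_indicator_const p hs 1 (.inr (measure_ne_top μ s))

theorem covariance_indicator_one_s2 [IsProbabilityMeasure μ] {s t : Set Ω} (hs : MeasurableSet s)
    (ht : MeasurableSet t) :
    cov[s.indicator 1, t.indicator 1; μ] = μ.real (s ∩ t) - μ.real s * μ.real t := by
  rw [covariance_eq_sub (memLp_indicator_one_s2 hs 2) (memLp_indicator_one_s2 ht 2),
    ← Set.inter_indicator_one, integral_indicator_one (hs.inter ht), integral_indicator_one hs,
    integral_indicator_one ht]

theorem variance_indicator_one_le [IsProbabilityMeasure μ] {s : Set Ω} (hs : MeasurableSet s) :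
    Var[s.indicator 1; μ] ≤ μ.real s := by
  rw [← covariance_self (memLp_indicator_one_s2 hs 2).aemeasurable, covariance_indicator_one_s2 hs hs,
    Set.inter_self]
  exact sub_le_self _ (mul_self_nonneg _)

theorem covariance_indicator_one_nonpos [IsProbabilityMeasure μ] {s t : Set Ω}
    (hs : MeasurableSet s) (ht : MeasurableSet t) (h : μ (s ∩ t) ≤ μ s * μ t) :
    cov[s.indicator 1, t.indicator 1; μ] ≤ 0 := by
  rw [covariance_indicator_one_s2 hs ht, sub_nonpos]
  simpa only [Measure.real, ENNReal.toReal_mul] using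
    ENNReal.toReal_mono (ENNReal.mul_ne_top (measure_ne_top μ s) (measure_ne_top μ t)) h

/-- The indices `i` for which `E i` meets `A` in a proportion at most `μ A - ε` of its measure, so
that mixing of `A` by `E i` fails by at least `ε`. The proportion is written without division, which
makes every index with `μ (E i) = 0` deficient. -/
def deficientIndices (μ : Measure Ω) (E : ι → Set Ω) (A : Set Ω) (ε : ℝ) : Set ι :=
  {i | μ.real (A ∩ E i) ≤ (μ.real A - ε) * μ.real (E i)}

variable [IsProbabilityMeasure μ] {E : ι → Set Ω} {A : Set Ω} {ε : ℝ}

theorem covariance_indicator_one_le_of_mem_deficientIndices {i : ι} (hE : MeasurableSet (E i))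
    (hA : MeasurableSet A) (hi : i ∈ deficientIndices μ E A ε) :
    cov[(E i).indicator 1, A.indicator 1; μ] ≤ -ε * μ.real (E i) := by
  have hdef : μ.real (A ∩ E i) ≤ (μ.real A - ε) * μ.real (E i) := hi
  rw [covariance_indicator_one_s2 hE hA, Set.inter_comm]
  linarith

theorem sum_measureReal_le_of_subset_deficientIndices (hE : ∀ i, MeasurableSet (E i))
    (hind : Pairwise fun i j => μ (E i ∩ E j) ≤ μ (E i) * μ (E j)) (hA : MeasurableSet A)
    (hε : 0 < ε) {s : Finset ι} (hs : ↑s ⊆ deficientIndices μ E A ε) :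
    ∑ i ∈ s, μ.real (E i) ≤ 1 / ε ^ 2 := by
  rw [le_div_iff₀' (pow_pos hε 2)]
  calc ε ^ 2 * ∑ i ∈ s, μ.real (E i)
      ≤ Var[A.indicator 1; μ] :=
        sq_mul_sum_le_variance_of_covariance_le hε.le (fun i _ => memLp_indicator_one_s2 (hE i) 2)
          (memLp_indicator_one_s2 hA 2)
          (fun i _ j _ hij => covariance_indicator_one_nonpos (hE i) (hE j) (hind hij))
          (fun i _ => variance_indicator_one_le (hE i))
          fun i hi => covariance_indicator_one_le_of_mem_deficientIndices (hE i) hA (hs hi)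
    _ ≤ μ.real A := variance_indicator_one_le hA
    _ ≤ 1 := measureReal_le_one

theorem tsum_measure_deficientIndices_lt_top (hE : ∀ i, MeasurableSet (E i))
    (hind : Pairwise fun i j => μ (E i ∩ E j) ≤ μ (E i) * μ (E j)) (hA : MeasurableSet A)
    (hε : 0 < ε) :
    ∑' i : deficientIndices μ E A ε, μ (E i) < ∞ := by
  have hsummable : Summable fun i : deficientIndices μ E A ε => μ.real (E i) := by
    refine summable_of_sum_le (c := 1 / ε ^ 2) (fun _ => measureReal_nonneg) fun s => ?_
    have hmap := sum_measureReal_le_of_subset_deficientIndices hE hind hA hε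
      (Finset.map_subtype_subset s)
    rwa [Finset.sum_map] at hmap
  calc ∑' i : deficientIndices μ E A ε, μ (E i)
      = ∑' i : deficientIndices μ E A ε, ENNReal.ofReal (μ.real (E i)) :=
        tsum_congr fun _ => (ofReal_measureReal).symm
    _ < ∞ := hsummable.tsum_ofReal_lt_top

end Events

theorem stmt2_general {ι X Y : Type*} [MeasurableSpace X] [MeasurableSpace Y]
    {γ : Measure X} {ν : Measure Y} [IsProbabilityMeasure γ] [IsProbabilityMeasure ν]
    {E : ι → Set X} {F : ι → Set Y}
    (hE : ∀ i, MeasurableSet (E i)) (hF : ∀ i, MeasurableSet (F i))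
    (hindE : Pairwise fun i j => γ (E i ∩ E j) ≤ γ (E i) * γ (E j))
    (hindF : Pairwise fun i j => ν (F i ∩ F j) ≤ ν (F i) * ν (F j))
    (hsum : ∑' i, min (γ (E i)) (ν (F i)) = ∞)
    {A : Set X} {B : Set Y} (hA : MeasurableSet A) (hB : MeasurableSet B) {ε : ℝ} (hε : 0 < ε) :
    ∃ i, (γ.real A - ε) * γ.real (E i) < γ.real (A ∩ E i) ∧
      (ν.real B - ε) * ν.real (F i) < ν.real (B ∩ F i) := by
  suffices ∃ i, i ∉ deficientIndices γ E A ε ∪ deficientIndices ν F B ε by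
    simpa [deficientIndices] using this
  by_contra! hcover
  refine hsum.not_lt ?_
  calc ∑' i, min (γ (E i)) (ν (F i))
      = ∑' i : ↑(deficientIndices γ E A ε ∪ deficientIndices ν F B ε),
          min (γ (E i)) (ν (F i)) := by
        rw [Set.eq_univ_of_forall hcover, tsum_univ fun i => min (γ (E i)) (ν (F i))]
    _ ≤ ∑' i : deficientIndices γ E A ε, min (γ (E i)) (ν (F i)) +
          ∑' i : deficientIndices ν F B ε, min (γ (E i)) (ν (F i)) :=
        ENNReal.tsum_union_le (fun i => min (γ (E i)) (ν (F i))) _ _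
    _ ≤ ∑' i : deficientIndices γ E A ε, γ (E i) + ∑' i : deficientIndices ν F B ε, ν (F i) :=
        add_le_add (ENNReal.tsum_le_tsum fun _ => min_le_left _ _)
          (ENNReal.tsum_le_tsum fun _ => min_le_right _ _)
    _ < ∞ := ENNReal.add_lt_top.2 ⟨tsum_measure_deficientIndices_lt_top hE hindE hA hε,
        tsum_measure_deficientIndices_lt_top hF hindF hB hε⟩

/-- Double Mixing Lemma. -/
theorem stmt2 {X Y : Type*} [MeasurableSpace X] [MeasurableSpace Y]
    (γ : Measure X) (ν : Measure Y) [IsProbabilityMeasure γ] [IsProbabilityMeasure ν]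
    (E : ℕ → Set X) (F : ℕ → Set Y)
    (hE : ∀ i, MeasurableSet (E i)) (hF : ∀ i, MeasurableSet (F i))
    (hindE : ∀ i j, i ≠ j → γ (E i ∩ E j) = γ (E i) * γ (E j))
    (hindF : ∀ i j, i ≠ j → ν (F i ∩ F j) = ν (F i) * ν (F j))
    (heq : ∀ i, γ (E i) = ν (F i))
    (hsum : ∑' i, γ (E i) = ⊤)
    (A : Set X) (B : Set Y) (hA : MeasurableSet A) (hB : MeasurableSet B)
    (ε : ℝ) (hε : 0 < ε) :
    ∃ i : ℕ, (γ (A ∩ E i)).toReal > ((γ A).toReal - ε) * (γ (E i)).toReal ∧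
      (ν (B ∩ F i)).toReal > ((ν B).toReal - ε) * (ν (F i)).toReal :=
  stmt2_general hE hF (fun i j hij => (hindE i j hij).le) (fun i j hij => (hindF i j hij).le)
    (by simpa only [← heq, min_self] using hsum) hA hB hε
end

section
/- For each subset R of ℚ ∩ (0,1), there exists a standard Borel space X with a nonatomic σ-finite Borel measure μ satisfying μ(X) = ∞, and an invertible measure-preserving transformation T : X → X, such that for all natural numbers p, q with 0 < p < q, the product transformation T^p × T^q on (X × X, μ × μ) is ergodic if and only if the rational number p/q belongs to R. -/
/-!
`T` is a rank-one map of infinite measure, built as a tower over the 2-adic odometer `x ↦ x + 1`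
with base-4 digits. Level `m` places four copies of the preceding stage at the heights `0`, `A`,
`p * L + s`, `A + q * L + t`, where `L` is much larger than `A` and `A` is much larger than
everything below. The quadruples `(p, q, s, t)` with `0 < p ≤ q` and `p / q ∈ R ∪ {1}` are exactly
those used, each at infinitely many levels.

If `p / q ∈ R`, a power of `T ^ p × T ^ q` can change a digit `0` to `2` in the first coordinate
and `1` to `3` in the second, with offsets `s`, `t` that carry one prescribed pair of cells to
another. It moves a sixteenth of any product cell into any other one, so two disjoint invariant
sets cannot both nearly fill a cell.

If `p / q ∉ R`, the separation of the scales implies that nonzero height differences between points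
of a suitable cell are never in ratio `p : q`. Hence a square of positive measure is wandering, and
the orbit of a quarter of it is an invariant set that is neither null nor conull.
-/

open MeasureTheory

/-- `T` is *conservative* w.r.t. `μ`: for every measurable set `A` of positive measure
there is a positive integer `n` with `μ (T⁻ⁿ A ∩ A) > 0`. -/
def IsConservativeMap {X : Type*} [MeasurableSpace X] (μ : Measure X) (T : X → X) : Prop :=
  ∀ A : Set X, MeasurableSet A → 0 < μ A →
    ∃ n : ℕ, 0 < n ∧ 0 < μ (T^[n] ⁻¹' A ∩ A)

/-- `T` is *ergodic* w.r.t. `μ`: every measurable set `A` with `T⁻¹ A = A` mod `μ`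
is null or conull. -/
def IsErgodicMap {X : Type*} [MeasurableSpace X] (μ : Measure X) (T : X → X) : Prop :=
  ∀ A : Set X, MeasurableSet A → μ (symmDiff (T ⁻¹' A) A) = 0 →
    μ A = 0 ∨ μ Aᶜ = 0

namespace OdometerTower

open Set Filter Topology Function Measure
open scoped ENNReal NNReal

section Ergodicity

variable {X : Type*} [MeasurableSpace X] {μ : Measure X} {τ : X → X}

lemma isErgodicMap_iff_preErgodic (hτ : QuasiMeasurePreserving τ μ μ) :
    IsErgodicMap μ τ ↔ PreErgodic τ μ := by
  have hconst (A : Set X) : EventuallyConst A (ae μ) ↔ μ A = 0 ∨ μ Aᶜ = 0 := by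
    rw [eventuallyConst_set', ae_eq_empty, ae_eq_univ]
  refine ⟨fun h => ⟨fun A hA hinv => ?_⟩, fun h A hA hinv => ?_⟩
  · rw [hconst]
    exact h A hA (by rw [hinv, symmDiff_self, bot_eq_empty, measure_empty])
  · obtain ⟨A', hA', heq, hinv'⟩ := hτ.exists_preimage_eq_of_preimage_ae hA.nullMeasurableSet
      (measure_symmDiff_eq_zero_iff.1 hinv)
    rw [← hconst]
    exact (h.aeconst_set hA' hinv').congr heq

lemma measurableEmbedding_iterate (hτ : MeasurableEmbedding τ) (n : ℕ) :
    MeasurableEmbedding τ^[n] := by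
  induction n with
  | zero => exact .id
  | succ n ih => exact ih.comp hτ

lemma not_preErgodic_of_disjoint_orbits (hτ : MeasurableEmbedding τ) {U V : Set X}
    (hU : MeasurableSet U) (hU0 : μ U ≠ 0) (hV0 : μ V ≠ 0)
    (hUV : ∀ u ∈ U, ∀ v ∈ V, ∀ m n : ℕ, τ^[m] u ≠ τ^[n] v) : ¬ PreErgodic τ μ := by
  intro h
  set A := ⋃ (m : ℕ) (n : ℕ), τ^[n] ⁻¹' (τ^[m] '' U) with hA
  have hmem (z : X) : z ∈ A ↔ ∃ m n, ∃ u ∈ U, τ^[m] u = τ^[n] z := by simp [hA]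
  have hAmeas : MeasurableSet A := .iUnion fun m => .iUnion fun n =>
    (measurableEmbedding_iterate hτ n).measurable
      ((measurableEmbedding_iterate hτ m).measurableSet_image' hU)
  have hinv : τ ⁻¹' A = A := by
    ext z
    simp only [mem_preimage, hmem]
    constructor
    · rintro ⟨m, n, u, hu, heq⟩
      exact ⟨m, n + 1, u, hu, heq⟩
    · rintro ⟨m, n, u, hu, heq⟩
      exact ⟨m + 1, n, u, hu, by
        rw [iterate_succ_apply', heq, ← iterate_succ_apply' τ, iterate_succ_apply]⟩
  have hUA : U ⊆ A := fun u hu => (hmem u).2 ⟨0, 0, u, hu, rfl⟩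
  have hVA : V ⊆ Aᶜ := fun v hv hvA => by
    obtain ⟨m, n, u, hu, heq⟩ := (hmem v).1 hvA
    exact hUV u hu v hv m n heq
  rcases eventuallyConst_set'.1 (h.aeconst_set hAmeas hinv) with h0 | h1
  · exact hU0 (measure_mono_null hUA (ae_eq_empty.1 h0))
  · exact hV0 (measure_mono_null hVA (ae_eq_univ.1 h1))

lemma eventually_exists_dense_cell {X ι : Type*} [PseudoMetricSpace X] [MeasurableSpace X]
    [BorelSpace X] {μ : Measure X} [IsFiniteMeasure μ] [Countable ι] {π : ℕ → X → ι}
    (hπ : ∀ k i, MeasurableSet (π k ⁻¹' {i}))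
    (hmesh : ∀ δ > 0, ∀ᶠ k in atTop, ∀ x y, π k x = π k y → dist x y < δ)
    {E : Set X} (hE : MeasurableSet E) (hE0 : μ E ≠ 0) (c : ℝ≥0) :
    ∀ᶠ k in atTop, ∃ x, c * μ (π k ⁻¹' {π k x} \ E) < μ (π k ⁻¹' {π k x}) := by
  obtain ⟨C, hCE, hC, hC0⟩ := hE.exists_lt_isClosed_of_ne_top (measure_ne_top μ E)
    (pos_iff_ne_zero.2 hE0)
  have hlim : Tendsto (fun δ => c * (μ (Metric.thickening δ C) - μ C)) (𝓝[>] 0) (𝓝 0) := by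
    have hthick := tendsto_measure_thickening_of_isClosed
      ⟨1, one_pos, measure_ne_top μ (Metric.thickening 1 C)⟩ hC
    have hgap := ENNReal.Tendsto.const_mul (a := c) (ENNReal.Tendsto.sub hthick
      (tendsto_const_nhds (x := μ C)) (.inl (measure_ne_top μ C))) (.inr ENNReal.coe_ne_top)
    rwa [tsub_self, mul_zero] at hgap
  obtain ⟨δ, hδC, hδ : 0 < δ⟩ :=
    ((hlim.eventually_lt_const hC0).and self_mem_nhdsWithin).exists
  filter_upwards [hmesh δ hδ] with k hk
  by_contra! hbad
  set s := π k '' C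
  have hcover : C ⊆ ⋃ i ∈ s, π k ⁻¹' {i} := fun x hx => mem_biUnion (mem_image_of_mem _ hx) rfl
  have hnear : ⋃ i ∈ s, π k ⁻¹' {i} \ E ⊆ Metric.thickening δ C \ C := by
    simp only [iUnion_subset_iff]
    rintro _ ⟨y, hy, rfl⟩ x ⟨hxy, hxE⟩
    exact ⟨Metric.mem_thickening_iff.2 ⟨y, hy, hk x y hxy⟩, fun hxC => hxE (hCE hxC)⟩
  have hdisj : s.PairwiseDisjoint fun i => π k ⁻¹' {i} \ E := fun i _ j _ hij =>
    ((disjoint_singleton.2 hij).preimage (π k)).mono sdiff_subset sdiff_subset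
  refine hδC.not_ge ?_
  calc μ C ≤ ∑' i : s, μ (π k ⁻¹' {(i : ι)}) :=
        (measure_mono hcover).trans (measure_biUnion_le μ s.to_countable _)
    _ ≤ ∑' i : s, c * μ (π k ⁻¹' {(i : ι)} \ E) := ENNReal.tsum_le_tsum <| by
        rintro ⟨_, x, -, rfl⟩
        exact hbad x
    _ = c * μ (⋃ i ∈ s, π k ⁻¹' {i} \ E) := by
        rw [ENNReal.tsum_mul_left,
          measure_biUnion s.to_countable hdisj fun i _ => (hπ k i).diff hE]
    _ ≤ c * μ (Metric.thickening δ C \ C) := by gcongr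
    _ = c * (μ (Metric.thickening δ C) - μ C) := by
        rw [measure_sdiff (Metric.self_subset_thickening hδ C) hC.nullMeasurableSet
          (measure_ne_top μ C)]

lemma measure_le_measure_sdiff_add {φ : X → X} (hφ : MeasurePreserving φ μ μ)
    {F C C' E E' : Set X} (hC' : MeasurableSet C') (hE' : MeasurableSet E') (hFC : F ⊆ C)
    (hFC' : MapsTo φ F C') (hFE : ∀ x ∈ F, x ∈ E → φ x ∉ E') :
    μ F ≤ μ (C \ E) + μ (C' \ E') := by
  rw [← hφ.measure_preimage (hC'.diff hE').nullMeasurableSet]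
  refine (measure_mono fun x hx => ?_).trans (measure_union_le _ _)
  by_cases hxE : x ∈ E
  · exact Or.inr ⟨hFC' hx, hFE x hx hxE⟩
  · exact Or.inl ⟨hFC hx, hxE⟩

end Ergodicity

section Skyscraper

variable {B : Type*} [MeasurableSpace B]

/-- The tower over `S` whose column over `x` has the floors `0, …, r x`: the map moves one floor up
and leads from the top floor over `x` to the bottom floor over `S x`. Points of `B × ℕ` outside the
tower are fixed, so that the map is an equivalence of the whole product. -/
def skyscraper (S : B ≃ᵐ B) {r : B → ℕ} (hr : Measurable r) : B × ℕ ≃ᵐ B × ℕ where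
  toFun z := if z.2 < r z.1 then (z.1, z.2 + 1) else if z.2 = r z.1 then (S z.1, 0) else z
  invFun z :=
    if z.2 = 0 then (S.symm z.1, r (S.symm z.1)) else if z.2 ≤ r z.1 then (z.1, z.2 - 1) else z
  left_inv := by
    rintro ⟨x, i⟩
    dsimp only
    split_ifs <;> simp_all
    omega
  right_inv := by
    rintro ⟨x, i⟩
    dsimp only
    split_ifs <;> simp_all <;> omega
  measurable_toFun :=
    .ite (measurableSet_lt measurable_snd (by fun_prop)) (by fun_prop)
      (.ite (measurableSet_eq_fun measurable_snd (by fun_prop)) (by fun_prop) measurable_id)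
  measurable_invFun :=
    .ite (measurable_snd (measurableSet_singleton 0)) (by fun_prop)
      (.ite (measurableSet_le measurable_snd (by fun_prop)) (by fun_prop) measurable_id)

/-- The measure `ν × count` restricted to the tower with top floors `r`. -/
noncomputable def skyscraperMeasure (ν : Measure B) (r : B → ℕ) : Measure (B × ℕ) :=
  (ν.prod count).restrict {z | z.2 ≤ r z.1}

section Measure

variable {ν : Measure B} {r : B → ℕ}

instance [SigmaFinite ν] : SigmaFinite (skyscraperMeasure ν r) := by
  unfold skyscraperMeasure; infer_instance

instance [NullSingletonClass ν] : NullSingletonClass (skyscraperMeasure ν r) := by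
  unfold skyscraperMeasure; infer_instance

lemma measurableSet_skyscraper (hr : Measurable r) : MeasurableSet {z : B × ℕ | z.2 ≤ r z.1} :=
  measurableSet_le measurable_snd (by fun_prop)

lemma lintegral_skyscraperMeasure [SFinite ν] (hr : Measurable r) {f : B × ℕ → ℝ≥0∞}
    (hf : Measurable f) :
    ∫⁻ z, f z ∂skyscraperMeasure ν r = ∫⁻ x, ∑ i ∈ Finset.range (r x + 1), f (x, i) ∂ν := by
  have hs := measurableSet_skyscraper hr
  rw [skyscraperMeasure, ← lintegral_indicator hs, lintegral_prod _ (hf.indicator hs).aemeasurable]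
  refine lintegral_congr fun x => ?_
  rw [lintegral_count, tsum_eq_sum (s := Finset.range (r x + 1)) fun i hi => ?_]
  · refine Finset.sum_congr rfl fun i hi => indicator_of_mem ?_ _
    exact Nat.lt_succ_iff.1 (Finset.mem_range.1 hi)
  · refine indicator_of_notMem (fun hi' => hi ?_) _
    exact Finset.mem_range.2 (Nat.lt_succ_iff.2 hi')

lemma skyscraperMeasure_univ [SFinite ν] (hr : Measurable r) :
    skyscraperMeasure ν r univ = ∫⁻ x, ((r x + 1 : ℕ) : ℝ≥0∞) ∂ν := by
  rw [← lintegral_one, lintegral_skyscraperMeasure hr measurable_const]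
  simp

lemma skyscraperMeasure_floor_zero [SFinite ν] (r : B → ℕ) (s : Set B) :
    skyscraperMeasure ν r (s ×ˢ {0}) = ν s := by
  rw [skyscraperMeasure, restrict_eq_self, prod_prod, count_singleton, mul_one]
  rintro ⟨x, i⟩ ⟨-, rfl⟩
  exact Nat.zero_le _

lemma skyscraperMeasure_eq_sum [SFinite ν] (hr : Measurable r) :
    skyscraperMeasure ν r = .sum fun i => (ν.restrict {x | i ≤ r x}).map (·, i) := by
  have hs := measurableSet_skyscraper hr
  rw [skyscraperMeasure, count, prod_sum_right, restrict_sum _ hs]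
  congr 1
  funext i
  rw [prod_dirac, restrict_map (by fun_prop) hs]
  rfl

lemma exists_prod_section_ne_zero [SFinite ν] (hr : Measurable r) {A : Set ((B × ℕ) × B × ℕ)}
    (hA : MeasurableSet A)
    (h : (skyscraperMeasure ν r).prod (skyscraperMeasure ν r) A ≠ 0) :
    ∃ i j, ν.prod ν {z | (i ≤ r z.1 ∧ j ≤ r z.2) ∧ ((z.1, i), (z.2, j)) ∈ A} ≠ 0 := by
  contrapose! h
  have hfloor (i : ℕ) : Measurable fun x : B => (x, i) := by fun_prop
  rw [skyscraperMeasure_eq_sum hr, prod_sum, Measure.sum_apply _ hA, ENNReal.tsum_eq_zero]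
  rintro ⟨i, j⟩
  rw [map_prod_map _ _ (hfloor i) (hfloor j), prod_restrict,
    map_apply ((hfloor i).prodMap (hfloor j)) hA,
    restrict_apply (((hfloor i).prodMap (hfloor j)) hA)]
  exact measure_mono_null (fun z hz => by exact ⟨hz.2, hz.1⟩) (h i j)

end Measure

section Dynamics

variable (S : B ≃ᵐ B) {r : B → ℕ} (hr : Measurable r)

lemma skyscraper_apply_of_lt {x : B} {i : ℕ} (h : i < r x) :
    skyscraper S hr (x, i) = (x, i + 1) := if_pos h

lemma skyscraper_apply_top (x : B) : skyscraper S hr (x, r x) = (S x, 0) :=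
  (if_neg (lt_irrefl _)).trans (if_pos rfl)

lemma measurePreserving_skyscraper {ν : Measure B} [SFinite ν] (hS : MeasurePreserving S ν ν) :
    MeasurePreserving (skyscraper S hr) (skyscraperMeasure ν r) (skyscraperMeasure ν r) := by
  refine ⟨(skyscraper S hr).measurable, ext_of_lintegral _ fun f hf => ?_⟩
  rw [lintegral_map hf (skyscraper S hr).measurable, lintegral_skyscraperMeasure hr hf,
    lintegral_skyscraperMeasure hr (f := fun z => f (skyscraper S hr z)) (by fun_prop)]
  have hshift : ∀ x, ∑ i ∈ Finset.range (r x + 1), f (skyscraper S hr (x, i)) =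
      ∑ i ∈ Finset.range (r x), f (x, i + 1) + f (S x, 0) := fun x => by
    rw [Finset.sum_range_succ, skyscraper_apply_top]
    congr 1
    exact Finset.sum_congr rfl fun i hi => by
      rw [skyscraper_apply_of_lt S hr (Finset.mem_range.1 hi)]
  simp only [hshift, Finset.sum_range_succ']
  have hbottom : Measurable fun x => f (x, 0) := by fun_prop
  rw [lintegral_add_right _ (by fun_prop), lintegral_add_right _ hbottom,
    hS.lintegral_comp hbottom]

lemma iterate_skyscraper_floor {x : B} {i : ℕ} (h : i ≤ r x) :
    (skyscraper S hr)^[i] (x, 0) = (x, i) := by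
  induction i with
  | zero => rfl
  | succ i ih => rw [iterate_succ_apply', ih (by omega), skyscraper_apply_of_lt S hr h]

lemma iterate_skyscraper_column (x : B) : (skyscraper S hr)^[r x + 1] (x, 0) = (S x, 0) := by
  rw [iterate_succ_apply', iterate_skyscraper_floor S hr le_rfl, skyscraper_apply_top]

lemma iterate_skyscraper_birkhoffSum (n : ℕ) (x : B) :
    (skyscraper S hr)^[birkhoffSum S (fun y => r y + 1) n x] (x, 0) = (S^[n] x, 0) := by
  induction n with
  | zero => simp
  | succ n ih =>
    rw [birkhoffSum_succ, add_comm, iterate_add_apply, ih, iterate_skyscraper_column,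
      iterate_succ_apply']

lemma exists_birkhoffSum_eq_of_iterate_skyscraper {N : ℕ} {x x' : B}
    (h : (skyscraper S hr)^[N] (x, 0) = (x', 0)) :
    ∃ n, x' = S^[n] x ∧ N = birkhoffSum S (fun y => r y + 1) n x := by
  induction N using Nat.strong_induction_on generalizing x with
  | _ N ih =>
    rcases le_or_gt N (r x) with hN | hN
    · rw [iterate_skyscraper_floor S hr hN, Prod.mk.injEq] at h
      exact ⟨0, h.1.symm, by rw [h.2, birkhoffSum_zero]⟩
    · obtain ⟨M, rfl⟩ := Nat.exists_eq_add_of_le' hN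
      rw [iterate_add_apply, iterate_skyscraper_column] at h
      obtain ⟨n, hx', hM⟩ := ih M (by omega) h
      exact ⟨n + 1, by rw [hx', iterate_succ_apply],
        by rw [birkhoffSum_succ', ← hM, add_comm]⟩

end Dynamics

end Skyscraper

section Heights

variable (pos : ℕ → Fin 4 → ℕ)

/-- The base-4 digit of `v` of weight `4 ^ l`. -/
def digit (l v : ℕ) : Fin 4 := Fin.ofNat 4 (v / 4 ^ l)

/-- The height of `v` in a tower of `K` levels: the `l`-th base-4 digit `i` of `v` places the
point in the `i`-th copy of the preceding stage, which level `l` puts at position `pos l i`. -/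
def height (K v : ℕ) : ℕ := ∑ l ∈ Finset.range K, pos l (digit l v)

/-- The height of the last copy after `m` levels. -/
def totalHeight (m : ℕ) : ℕ := ∑ l ∈ Finset.range m, pos l 3

/-- Each level starts with a copy at position `0`, and the gaps between its positions exceed the
total height of the levels below. -/
structure IsStacked : Prop where
  pos_zero (m : ℕ) : pos m 0 = 0
  gap (m : ℕ) ⦃i j : Fin 4⦄ (hij : i < j) : totalHeight pos m + pos m i < pos m j

lemma digit_add_pow_mul {l K : ℕ} (hl : l < K) (v c : ℕ) : digit l (v + 4 ^ K * c) = digit l v := by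
  obtain ⟨j, rfl⟩ := Nat.exists_eq_add_of_lt hl
  have h : v + 4 ^ (l + j + 1) * c = v + 4 ^ l * (4 * (4 ^ j * c)) := by ring
  ext
  simp only [digit, Fin.val_ofNat, h]
  rw [Nat.add_mul_div_left _ _ (by positivity), Nat.add_mul_mod_self_left]

lemma digit_mod_pow (l v : ℕ) : digit l (v % 4 ^ (l + 1)) = digit l v := by
  conv_rhs => rw [← Nat.mod_add_div v (4 ^ (l + 1)), digit_add_pow_mul l.lt_succ_self]

lemma digit_eq_zero {l v : ℕ} (hv : v < 4 ^ l) : digit l v = 0 := by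
  rw [digit, Nat.div_eq_of_lt hv]; rfl

lemma digit_add_pow_mul_self (l v : ℕ) (c : Fin 4) :
    digit l (v + 4 ^ l * c) = digit l v + c := by
  ext
  simp only [digit, Fin.val_ofNat, Fin.val_add]
  rw [Nat.add_mul_div_left _ _ (by positivity), Nat.mod_add_mod]

lemma digit_low_add {k l u : ℕ} (hkl : k ≤ l) (hu : u < 4 ^ k) (c : ℕ) :
    digit l (u + 4 ^ k * c) = digit l (4 ^ k * c) := by
  obtain ⟨j, rfl⟩ := Nat.exists_eq_add_of_le hkl
  ext
  simp only [digit, Fin.val_ofNat]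
  rw [pow_add, ← Nat.div_div_eq_div_mul, ← Nat.div_div_eq_div_mul,
    Nat.add_mul_div_left _ _ (by positivity), Nat.div_eq_of_lt hu, zero_add,
    Nat.mul_div_cancel_left _ (by positivity)]

lemma exists_eq_add_pow_mul {K v : ℕ} (hv : v < 4 ^ (K + 1)) :
    ∃ r < 4 ^ K, ∃ c : Fin 4, v = r + 4 ^ K * c :=
  ⟨v % 4 ^ K, Nat.mod_lt _ (by positivity),
    ⟨v / 4 ^ K, Nat.div_lt_of_lt_mul (by rwa [← pow_succ])⟩, (Nat.mod_add_div v _).symm⟩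

lemma height_succ (K v : ℕ) : height pos (K + 1) v = height pos K v + pos K (digit K v) :=
  Finset.sum_range_succ ..

lemma height_add_pow_mul (K v c : ℕ) : height pos K (v + 4 ^ K * c) = height pos K v :=
  Finset.sum_congr rfl fun _ hl => by rw [digit_add_pow_mul (Finset.mem_range.1 hl)]

lemma height_succ_add {K v : ℕ} (hv : v < 4 ^ K) (c : Fin 4) :
    height pos (K + 1) (v + 4 ^ K * c) = height pos K v + pos K c := by
  rw [height_succ, height_add_pow_mul, digit_add_pow_mul_self, digit_eq_zero hv, zero_add]

variable {pos}

namespace IsStacked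

variable (h : IsStacked pos)
include h

lemma pos_le_pos_three (m : ℕ) (i : Fin 4) : pos m i ≤ pos m 3 := by
  rcases (Fin.le_last i).eq_or_lt with rfl | hi
  · rfl
  · exact (Nat.le_add_left ..).trans (h.gap m hi).le

lemma height_le (K v : ℕ) : height pos K v ≤ totalHeight pos K :=
  Finset.sum_le_sum fun l _ => h.pos_le_pos_three l _

lemma height_zero (K : ℕ) : height pos K 0 = 0 :=
  Finset.sum_eq_zero fun l _ => by simp [digit, h.pos_zero]

lemma height_low_add {k M u : ℕ} (hkM : k ≤ M) (hu : u < 4 ^ k) (c : ℕ) :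
    height pos M (u + 4 ^ k * c) = height pos k u + height pos M (4 ^ k * c) := by
  induction M, hkM using Nat.le_induction with
  | base => rw [height_add_pow_mul, ← zero_add (4 ^ k * c), height_add_pow_mul, h.height_zero]; rfl
  | succ M hM ih => rw [height_succ, height_succ, ih, digit_low_add hM hu, add_assoc]

lemma height_lt_height {K v w : ℕ} (hvw : v < w) (hw : w < 4 ^ K) :
    height pos K v < height pos K w := by
  induction K generalizing v w with
  | zero => simp_all
  | succ K ih =>
    obtain ⟨r, hr, c, rfl⟩ := exists_eq_add_pow_mul (hvw.trans hw)
    obtain ⟨r', hr', c', rfl⟩ := exists_eq_add_pow_mul hw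
    rw [height_succ_add pos hr, height_succ_add pos hr']
    rcases lt_trichotomy c c' with hc | rfl | hc
    · have := h.gap K hc
      have := h.height_le K r
      omega
    · have := ih (show r < r' by omega) hr'
      omega
    · have : 4 ^ K * ((c' : ℕ) + 1) ≤ 4 ^ K * c := Nat.mul_le_mul_left _ hc
      rw [mul_add] at this
      omega

end IsStacked

lemma abs_mul_sub_mul_le {P Q u v c : ℤ} (hP : 0 ≤ P) (hQ : 0 ≤ Q) (hu : |u| ≤ c) (hv : |v| ≤ c) :
    |Q * u - P * v| ≤ (P + Q) * c := by
  calc |Q * u - P * v| ≤ Q * |u| + P * |v| := by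
        simpa only [abs_mul, abs_of_nonneg hP, abs_of_nonneg hQ] using abs_sub (Q * u) (P * v)
    _ ≤ Q * c + P * c := by gcongr
    _ = (P + Q) * c := by ring

/-- Rigidity of level `m` for the ratio `p / q`: differences of positions in ratio `p / q`, up to
an error controlled by the levels below, are trivial. -/
def IsRigidLevel (pos : ℕ → Fin 4 → ℕ) (p q m : ℕ) : Prop :=
  ∀ i i' j j' : Fin 4,
    |(q : ℤ) * ((pos m i' : ℤ) - pos m i) - p * ((pos m j' : ℤ) - pos m j)|
      ≤ (p + q) * totalHeight pos m → i = i' ∧ j = j'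

lemma IsStacked.abs_height_sub_le (h : IsStacked pos) (K v w : ℕ) :
    |(height pos K v : ℤ) - height pos K w| ≤ totalHeight pos K := by
  have hv := h.height_le K v
  have hw := h.height_le K w
  rw [abs_le]
  omega

lemma dvd_of_dvd_add_pow_mul {k K r c : ℕ} (hK : k ≤ K) (h : 4 ^ k ∣ r + 4 ^ K * c) : 4 ^ k ∣ r :=
  (Nat.dvd_add_left ((pow_dvd_pow 4 hK).mul_right c)).1 h

lemma IsStacked.eq_of_mul_height_sub_eq (h : IsStacked pos) {p q k K : ℕ}
    (hrigid : ∀ m ≥ k, IsRigidLevel pos p q m) (hK : k ≤ K) {v v' w w' : ℕ}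
    (hv : v < 4 ^ K) (hv' : v' < 4 ^ K) (hw : w < 4 ^ K) (hw' : w' < 4 ^ K)
    (dv : 4 ^ k ∣ v) (dv' : 4 ^ k ∣ v') (dw : 4 ^ k ∣ w) (dw' : 4 ^ k ∣ w')
    (heq : (q : ℤ) * ((height pos K v' : ℤ) - height pos K v)
      = p * ((height pos K w' : ℤ) - height pos K w)) : v = v' ∧ w = w' := by
  induction K, hK using Nat.le_induction generalizing v v' w w' with
  | base =>
    rw [Nat.eq_zero_of_dvd_of_lt dv hv, Nat.eq_zero_of_dvd_of_lt dv' hv',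
      Nat.eq_zero_of_dvd_of_lt dw hw, Nat.eq_zero_of_dvd_of_lt dw' hw']
    exact ⟨rfl, rfl⟩
  | succ K hK ih =>
    obtain ⟨r, hr, c, rfl⟩ := exists_eq_add_pow_mul hv
    obtain ⟨r', hr', c', rfl⟩ := exists_eq_add_pow_mul hv'
    obtain ⟨t, ht, d, rfl⟩ := exists_eq_add_pow_mul hw
    obtain ⟨t', ht', d', rfl⟩ := exists_eq_add_pow_mul hw'
    rw [height_succ_add pos hr, height_succ_add pos hr', height_succ_add pos ht,
      height_succ_add pos ht'] at heq
    push_cast at heq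
    obtain ⟨rfl, rfl⟩ : c = c' ∧ d = d' := by
      refine hrigid K hK c c' d d' ?_
      have herr := abs_mul_sub_mul_le (P := p) (Q := q) (by positivity) (by positivity)
        (h.abs_height_sub_le K r r') (h.abs_height_sub_le K t t')
      convert herr using 2
      linear_combination heq
    obtain ⟨rfl, rfl⟩ := ih hr hr' ht ht' (dvd_of_dvd_add_pow_mul hK dv)
      (dvd_of_dvd_add_pow_mul hK dv') (dvd_of_dvd_add_pow_mul hK dw)
      (dvd_of_dvd_add_pow_mul hK dw') (by linear_combination heq)
    exact ⟨rfl, rfl⟩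

end Heights

section Residues

lemma card_mul_measure_preimage_inter {G H : Type*} [MeasurableSpace G] [AddGroup G]
    [MeasurableAdd G] [AddGroup H] [Fintype H] (μ : Measure G) [μ.IsAddRightInvariant] {f : G → H}
    {g : H → G} {D : Set G} (hf : ∀ h, MeasurableSet (f ⁻¹' {h}))
    (hadd : ∀ x h, f (x + g h) = f x + h) (hD : ∀ h x, x + g h ∈ D ↔ x ∈ D) (h : H) :
    Fintype.card H * μ (f ⁻¹' {h} ∩ D) = μ D := by
  have hconst (h : H) : μ (f ⁻¹' {h} ∩ D) = μ (f ⁻¹' {0} ∩ D) := by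
    rw [← measure_preimage_add_right μ (g h)]
    congr 1
    ext x
    simp [hadd, hD]
  have hsum := sum_measure_preimage_singleton (μ := μ.restrict D) Finset.univ fun h _ => hf h
  simp only [restrict_apply (hf _), hconst] at hsum
  rw [hconst, ← nsmul_eq_mul, ← Finset.card_univ, ← Finset.sum_const, hsum]
  simp

/-- The residue of `x` modulo `4 ^ K`. -/
noncomputable def residue (K : ℕ) (x : ℤ_[2]) : ℕ := (PadicInt.toZModPow (2 * K) x).val

lemma two_pow_two_mul (K : ℕ) : 2 ^ (2 * K) = 4 ^ K := by rw [pow_mul]; norm_num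

instance (K : ℕ) : NeZero (2 ^ (2 * K)) := ⟨by positivity⟩

lemma residue_lt (K : ℕ) (x : ℤ_[2]) : residue K x < 4 ^ K := by
  rw [← two_pow_two_mul]
  exact ZMod.val_lt _

lemma residue_mod {k K : ℕ} (h : k ≤ K) (x : ℤ_[2]) : residue K x % 4 ^ k = residue k x := by
  unfold residue
  rw [← PadicInt.cast_toZModPow (2 * k) (2 * K) (by omega) x, ← two_pow_two_mul, ZMod.cast_eq_val,
    ZMod.val_natCast]

lemma exists_residue_eq {k K : ℕ} (hkK : k ≤ K) (x : ℤ_[2]) :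
    ∃ c, residue K x = residue k x + 4 ^ k * c ∧ ∀ u < 4 ^ k, u + 4 ^ k * c < 4 ^ K := by
  refine ⟨residue K x / 4 ^ k, by rw [← residue_mod hkK, Nat.mod_add_div], fun u hu => ?_⟩
  obtain ⟨j, rfl⟩ := Nat.exists_eq_add_of_le hkK
  have hlt : residue (k + j) x / 4 ^ k + 1 ≤ 4 ^ j :=
    Nat.div_lt_of_lt_mul (by rw [← pow_add]; exact residue_lt _ x)
  calc u + 4 ^ k * (residue (k + j) x / 4 ^ k)
      < 4 ^ k * (residue (k + j) x / 4 ^ k + 1) := by rw [mul_add_one, add_comm]; gcongr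
    _ ≤ 4 ^ (k + j) := by rw [pow_add]; gcongr

@[simp] lemma residue_zero (K : ℕ) : residue K 0 = 0 := by simp [residue]

lemma residue_add_natCast (K n : ℕ) (x : ℤ_[2]) :
    residue K (x + n) = (residue K x + n) % 4 ^ K := by
  unfold residue
  rw [← two_pow_two_mul, map_add, map_natCast, ZMod.val_add, ZMod.val_natCast, Nat.add_mod_mod]

lemma residue_add_natCast_of_lt {K n : ℕ} {x : ℤ_[2]} (h : residue K x + n < 4 ^ K) :
    residue K (x + n) = residue K x + n := by
  rw [residue_add_natCast, Nat.mod_eq_of_lt h]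

lemma residue_sub_residue (K : ℕ) (x : ℤ_[2]) : residue K (x - residue K x) = 0 := by
  unfold residue
  rw [map_sub, map_natCast, ZMod.natCast_zmod_val, sub_self, ZMod.val_zero]

lemma residue_add_pow_mul {k m : ℕ} (hkm : k ≤ m) (x : ℤ_[2]) (c : ℕ) :
    residue k (x + (4 ^ m * c : ℕ)) = residue k x := by
  obtain ⟨d, hd⟩ := (pow_dvd_pow 4 hkm).mul_right c
  rw [residue_add_natCast, hd, Nat.add_mul_mod_self_left, Nat.mod_eq_of_lt (residue_lt k x)]

lemma residue_add_sub_residue {k m u : ℕ} (hkm : k ≤ m) (hu : u < 4 ^ k) (x : ℤ_[2]) (c d : ℕ) :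
    residue k (x + ((u + 4 ^ m * d : ℕ) - (residue k x + 4 ^ m * c : ℕ))) = u := by
  have hsum : x + ((u + 4 ^ m * d : ℕ) - (residue k x + 4 ^ m * c : ℕ)) + (4 ^ m * c : ℕ) =
      x - residue k x + u + (4 ^ m * d : ℕ) := by push_cast; ring
  rw [← residue_add_pow_mul hkm _ c, hsum, residue_add_pow_mul hkm, residue_add_natCast,
    residue_sub_residue, zero_add, Nat.mod_eq_of_lt hu]

lemma residue_eq_iff {K : ℕ} {x y : ℤ_[2]} :
    residue K x = residue K y ↔ ‖x - y‖ ≤ (4 ^ K : ℝ)⁻¹ := by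
  have h4 : (4 ^ K : ℝ)⁻¹ = ((2 : ℕ) : ℝ) ^ (-((2 * K : ℕ) : ℤ)) := by
    rw [zpow_neg, zpow_natCast, pow_mul]; norm_num
  rw [h4, PadicInt.norm_le_pow_iff_mem_span_pow, ← PadicInt.ker_toZModPow, RingHom.mem_ker,
    map_sub, sub_eq_zero]
  exact (ZMod.val_injective _).eq_iff

lemma tendsto_inv_four_pow : Tendsto (fun K : ℕ => (4 ^ K : ℝ)⁻¹) atTop (𝓝 0) := by
  simpa only [inv_pow] using
    tendsto_pow_atTop_nhds_zero_of_lt_one (r := (4⁻¹ : ℝ)) (by norm_num) (by norm_num)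

lemma eq_of_residue_eq {x y : ℤ_[2]} (h : ∀ K, residue K x = residue K y) : x = y := by
  rw [← sub_eq_zero, ← norm_le_zero_iff]
  exact ge_of_tendsto' tendsto_inv_four_pow fun K => residue_eq_iff.1 (h K)

lemma exists_residue_add_one_lt {x : ℤ_[2]} (hx : x ≠ -1) : ∃ K, residue K x + 1 < 4 ^ K := by
  contrapose! hx
  rw [eq_neg_iff_add_eq_zero]
  refine eq_of_residue_eq fun K => ?_
  have htop : residue K x + 1 = 4 ^ K := le_antisymm (residue_lt K x) (hx K)
  rw [← Nat.cast_one, residue_add_natCast, htop, Nat.mod_self, residue_zero]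

lemma residue_add_lt_of_le {k K n : ℕ} (hkK : k ≤ K) {x : ℤ_[2]} (h : residue k x + n < 4 ^ k) :
    residue K x + n < 4 ^ K := by
  obtain ⟨c, hc, hlt⟩ := exists_residue_eq hkK x
  rw [hc, add_right_comm]
  exact hlt _ h

lemma exists_residue_succ_eq {k m : ℕ} (hkm : k ≤ m) (x : ℤ_[2]) :
    ∃ r, residue (m + 1) x = residue k x + 4 ^ k * r + 4 ^ m * digit m (residue (m + 1) x) ∧
      ∀ u < 4 ^ k, u + 4 ^ k * r < 4 ^ m := by
  obtain ⟨v, hv, c, hc⟩ := exists_eq_add_pow_mul (residue_lt (m + 1) x)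
  obtain ⟨r, hr, hlt⟩ := exists_residue_eq hkm x
  have hvx : v = residue m x := by
    rw [← residue_mod m.le_succ, hc, Nat.add_mul_mod_self_left, Nat.mod_eq_of_lt hv]
  refine ⟨r, ?_, hlt⟩
  rw [hc, digit_add_pow_mul_self, digit_eq_zero hv, zero_add, hvx, hr]

/-- Adding `n` to `x` changes only finitely many digits, unless `x` is a negative integer. -/
lemma exists_residue_add_lt {x : ℤ_[2]} (hx : x ∉ range ((↑) : ℤ → ℤ_[2])) (n : ℕ) :
    ∃ K, residue K x + n < 4 ^ K := by
  induction n with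
  | zero => exact ⟨0, residue_lt 0 x⟩
  | succ n ih =>
    obtain ⟨K, hK⟩ := ih
    have hxn : x + n ≠ -1 := fun h => hx ⟨-1 - n, by push_cast; rw [← h]; ring⟩
    obtain ⟨K', hK'⟩ := exists_residue_add_one_lt hxn
    have hn := residue_add_lt_of_le (le_max_left K K') hK
    have hn1 := residue_add_lt_of_le (le_max_right K K') hK'
    rw [residue_add_natCast_of_lt hn] at hn1
    exact ⟨max K K', hn1⟩

lemma continuous_residue (K : ℕ) : Continuous (residue K) := by
  rw [continuous_discrete_rng]
  intro u
  rw [Metric.isOpen_iff]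
  intro x hx
  refine ⟨(4 ^ K : ℝ)⁻¹, by positivity, fun y hy => ?_⟩
  rw [Metric.mem_ball, dist_eq_norm] at hy
  exact (residue_eq_iff.2 hy.le).trans hx

noncomputable instance : MeasurableSpace ℤ_[2] := borel _
instance : BorelSpace ℤ_[2] := ⟨rfl⟩

@[fun_prop] lemma measurable_residue (K : ℕ) : Measurable (residue K) :=
  (continuous_residue K).measurable

/-- The Haar probability measure on the 2-adic integers. -/
noncomputable def padicHaar : Measure ℤ_[2] := addHaarMeasure ⊤

instance : IsAddHaarMeasure padicHaar := by unfold padicHaar; infer_instance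

instance : IsProbabilityMeasure padicHaar :=
  ⟨addHaarMeasure_self (K₀ := (⊤ : TopologicalSpace.PositiveCompacts ℤ_[2]))⟩

lemma measure_residue_eq {K u : ℕ} (hu : u < 4 ^ K) :
    padicHaar {x | residue K x = u} = (4 ^ K)⁻¹ := by
  have hu' : u < 2 ^ (2 * K) := by rwa [two_pow_two_mul]
  have hfiber (z : ZMod (2 ^ (2 * K))) :
      PadicInt.toZModPow (2 * K) ⁻¹' {z} = {x : ℤ_[2] | residue K x = z.val} := by
    ext x
    exact (ZMod.val_injective _).eq_iff.symm
  have h := card_mul_measure_preimage_inter padicHaar (f := PadicInt.toZModPow (2 * K))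
    (g := fun z => (z.val : ℤ_[2])) (D := univ)
    (fun z => by rw [hfiber]; exact measurable_residue K (measurableSet_singleton _))
    (fun x z => by rw [map_add, map_natCast, ZMod.natCast_zmod_val]) (by simp) u
  rw [hfiber, ZMod.val_natCast, Nat.mod_eq_of_lt hu', inter_univ, measure_univ, ZMod.card,
    two_pow_two_mul, mul_comm] at h
  exact ENNReal.eq_inv_of_mul_eq_one_left (by exact_mod_cast h)

lemma measure_digit_inter_residue {k m : ℕ} (hkm : k ≤ m) (u : ℕ) (c : Fin 4) :
    4 * padicHaar ({x | digit m (residue (m + 1) x) = c} ∩ {x | residue k x = u}) =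
      padicHaar {x | residue k x = u} := by
  have hdigit (x : ℤ_[2]) (c : Fin 4) :
      digit m (residue (m + 1) (x + (4 ^ m * c : ℕ))) = digit m (residue (m + 1) x) + c := by
    rw [residue_add_natCast, digit_mod_pow, digit_add_pow_mul_self]
  have hmeas : Measurable fun x => digit m (residue (m + 1) x) :=
    (measurable_of_countable (digit m)).comp (measurable_residue (m + 1))
  exact_mod_cast card_mul_measure_preimage_inter padicHaar
    (fun c => hmeas (measurableSet_singleton c)) hdigit
    (fun c x => by rw [mem_ofPred_eq, mem_ofPred_eq, residue_add_pow_mul hkm]) c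

instance : NullSingletonClass padicHaar := ⟨fun x => by
  have hlim : Tendsto (fun K : ℕ => ((4 : ℝ≥0∞) ^ K)⁻¹) atTop (𝓝 0) := by
    simpa only [ENNReal.inv_pow] using
      ENNReal.tendsto_pow_atTop_nhds_zero_of_lt_one (ENNReal.inv_lt_one.2 (by norm_num))
  refine nonpos_iff_eq_zero.1 (ge_of_tendsto' hlim fun K => ?_)
  rw [← measure_residue_eq (residue_lt K x)]
  exact measure_mono (singleton_subset_iff.2 rfl)⟩

end Residues

section Odometer

/-- The top floor of the column over `x`, chosen so that the columns over `n` consecutive points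
`x, x + 1, …` have total height `height pos K (u + n) - height pos K u`, where `u = residue K x`,
as soon as `u + n < 4 ^ K`. The levels `K` at which `x + 1` overflows do not contribute to the
supremum, by truncated subtraction. -/
noncomputable def topFloor (pos : ℕ → Fin 4 → ℕ) (x : ℤ_[2]) : ℕ :=
  (⨆ K, (height pos K (residue K x + 1) - height pos K (residue K x))) - 1

@[fun_prop] lemma measurable_topFloor (pos : ℕ → Fin 4 → ℕ) : Measurable (topFloor pos) := by
  have hstep (K : ℕ) : Measurable fun x =>
      height pos K (residue K x + 1) - height pos K (residue K x) :=
    (measurable_of_countable fun u => height pos K (u + 1) - height pos K u).comp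
      (measurable_residue K)
  exact (Measurable.iSup hstep).sub_const 1

/-- The tower over the odometer `x ↦ x + 1`. -/
noncomputable def odometerTower (pos : ℕ → Fin 4 → ℕ) : ℤ_[2] × ℕ ≃ᵐ ℤ_[2] × ℕ :=
  skyscraper (MeasurableEquiv.addRight 1) (measurable_topFloor pos)

/-- The invariant measure of the tower over the odometer. -/
noncomputable abbrev towerMeasure (pos : ℕ → Fin 4 → ℕ) : Measure (ℤ_[2] × ℕ) :=
  skyscraperMeasure padicHaar (topFloor pos)

lemma measurePreserving_odometerTower (pos : ℕ → Fin 4 → ℕ) :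
    MeasurePreserving (odometerTower pos) (towerMeasure pos) (towerMeasure pos) :=
  measurePreserving_skyscraper _ _ (measurePreserving_add_right padicHaar 1)

variable {pos : ℕ → Fin 4 → ℕ}

lemma IsStacked.height_residue_add (h : IsStacked pos) {k K n : ℕ} (hkK : k ≤ K) {x : ℤ_[2]}
    (hx : residue k x + n < 4 ^ k) :
    height pos K (residue K x + n) - height pos K (residue K x) =
      height pos k (residue k x + n) - height pos k (residue k x) := by
  obtain ⟨c, hc, -⟩ := exists_residue_eq hkK x
  rw [hc, add_right_comm, h.height_low_add hkK hx, h.height_low_add hkK (residue_lt k x),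
    Nat.add_sub_add_right]

lemma IsStacked.height_residue_add_topFloor (h : IsStacked pos) {K : ℕ} {x : ℤ_[2]}
    (hx : residue K x + 1 < 4 ^ K) :
    height pos K (residue K x) + (topFloor pos x + 1) = height pos K (residue K x + 1) := by
  have hle (K' : ℕ) : height pos K' (residue K' x + 1) - height pos K' (residue K' x) ≤
      height pos K (residue K x + 1) - height pos K (residue K x) := by
    rcases (Nat.add_one_le_iff.2 (residue_lt K' x)).lt_or_eq with hx' | hx'
    · rw [← h.height_residue_add (le_max_left K K') hx,
        ← h.height_residue_add (le_max_right K K') hx']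
    · have h0 : height pos K' (residue K' x + 1) = 0 := by
        rw [hx', ← zero_add (4 ^ K'), ← mul_one (4 ^ K'), height_add_pow_mul, h.height_zero]
      rw [h0, zero_tsub]
      exact zero_le
  have hsup : ⨆ K', (height pos K' (residue K' x + 1) - height pos K' (residue K' x)) =
      height pos K (residue K x + 1) - height pos K (residue K x) :=
    le_antisymm (ciSup_le hle) (le_ciSup ⟨_, forall_mem_range.2 hle⟩ K)
  have hlt := h.height_lt_height (lt_add_one (residue K x)) hx
  rw [topFloor, hsup]
  omega

lemma IsStacked.height_residue_add_birkhoffSum (h : IsStacked pos) {K n : ℕ} {x : ℤ_[2]}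
    (hx : residue K x + n < 4 ^ K) :
    height pos K (residue K x) + birkhoffSum (MeasurableEquiv.addRight 1)
      (fun y => topFloor pos y + 1) n x = height pos K (residue K x + n) := by
  induction n with
  | zero => simp
  | succ n ih =>
    have hn := residue_add_natCast_of_lt (K := K) (x := x) (n := n) (by omega)
    have hiter : (MeasurableEquiv.addRight (1 : ℤ_[2]))^[n] x = x + n := by
      simp [add_right_iterate]
    rw [birkhoffSum_succ, ← add_assoc, ih (by omega), hiter, ← hn,
      h.height_residue_add_topFloor (by omega), hn, add_assoc]

lemma IsStacked.iterate_odometerTower (h : IsStacked pos) {K n N : ℕ} {x : ℤ_[2]}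
    (hx : residue K x + n < 4 ^ K)
    (hN : height pos K (residue K x) + N = height pos K (residue K x + n)) :
    (odometerTower pos)^[N] (x, 0) = (x + n, 0) := by
  rw [add_left_cancel (hN.trans (h.height_residue_add_birkhoffSum hx).symm), odometerTower,
    iterate_skyscraper_birkhoffSum]
  simp [add_right_iterate]

lemma IsStacked.exists_of_iterate_odometerTower (h : IsStacked pos) {N : ℕ} {x x' : ℤ_[2]}
    (hx : (odometerTower pos)^[N] (x, 0) = (x', 0)) :
    ∃ n : ℕ, x' = x + n ∧ ∀ K, residue K x + n < 4 ^ K →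
      height pos K (residue K x) + N = height pos K (residue K x + n) := by
  obtain ⟨n, rfl, rfl⟩ := exists_birkhoffSum_eq_of_iterate_skyscraper _ _ hx
  exact ⟨n, by simp [add_right_iterate], fun K hK => h.height_residue_add_birkhoffSum hK⟩

lemma IsStacked.le_topFloor_of_residue_eq (h : IsStacked pos) {m N : ℕ}
    (hN : totalHeight pos m + N ≤ pos m 1) {x : ℤ_[2]} (hx : residue (m + 1) x = 4 ^ m - 1) :
    N ≤ topFloor pos x + 1 := by
  have h4 : 0 < 4 ^ m := by positivity
  have hcolumn := h.height_residue_add_topFloor (K := m + 1) (x := x)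
    (by rw [hx, pow_succ]; omega)
  have htop : height pos (m + 1) (4 ^ m) = pos m 1 := by
    simpa [h.height_zero] using height_succ_add pos h4 1
  have hbottom : height pos (m + 1) (4 ^ m - 1) ≤ totalHeight pos m := by
    have hsplit := height_succ_add pos (Nat.sub_lt h4 one_pos) 0
    rw [Fin.val_zero, mul_zero, add_zero, h.pos_zero, add_zero] at hsplit
    exact hsplit.trans_le (h.height_le m _)
  rw [hx, Nat.sub_add_cancel h4, htop] at hcolumn
  omega

lemma IsStacked.towerMeasure_univ (h : IsStacked pos)
    (hgap : ∀ m, totalHeight pos m + (m + 1) * 4 ^ (m + 1) ≤ pos m 1) :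
    towerMeasure pos univ = ∞ := by
  refine ENNReal.eq_top_of_forall_nnreal_le fun r => ?_
  obtain ⟨m, hm⟩ := exists_nat_ge r
  have hlt : 4 ^ m - 1 < 4 ^ (m + 1) :=
    (Nat.sub_le _ _).trans_lt (Nat.pow_lt_pow_succ (by norm_num))
  calc (r : ℝ≥0∞) ≤ (m + 1 : ℕ) := by exact_mod_cast hm.trans (by simp)
    _ = ((m + 1) * 4 ^ (m + 1) : ℕ) * padicHaar {x | residue (m + 1) x = 4 ^ m - 1} := by
      rw [measure_residue_eq hlt]
      push_cast
      rw [mul_assoc, ENNReal.mul_inv_cancel (by simp) (by simp), mul_one]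
    _ ≤ ((m + 1) * 4 ^ (m + 1) : ℕ) *
        padicHaar {x | (((m + 1) * 4 ^ (m + 1) : ℕ) : ℝ≥0∞) ≤ (topFloor pos x + 1 : ℕ)} := by
      gcongr with x
      exact fun hx => Nat.cast_le.2 (h.le_topFloor_of_residue_eq (hgap m) hx)
    _ ≤ ∫⁻ x, (topFloor pos x + 1 : ℕ) ∂padicHaar := mul_meas_ge_le_lintegral (by fun_prop) _
    _ = towerMeasure pos univ := (skyscraperMeasure_univ (measurable_topFloor pos)).symm

end Odometer

section Resonance

/-- A sequence of positions is resonant for `p : q` if infinitely many levels `m` have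
displacements `pos m 2 - pos m 0` and `pos m 3 - pos m 1` of the form `p * n + s` and `q * n + t`,
for all offsets `s = a - a'` and `t = b - b'`. -/
def IsResonant (pos : ℕ → Fin 4 → ℕ) (p q : ℕ) : Prop :=
  ∀ a a' b b' : ℕ, ∃ᶠ m in atTop, ∃ n,
    p * n + a = a' + pos m 2 ∧ q * n + b + pos m 1 = b' + pos m 3

variable {pos : ℕ → Fin 4 → ℕ}

lemma IsStacked.iterate_odometerTower_eq (h : IsStacked pos) {K n i a b v : ℕ} {x : ℤ_[2]}
    (hx : residue K x = a + v) (hb : b + v < 4 ^ K)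
    (hni : n + height pos K (a + v) = i + height pos K (b + v)) :
    (odometerTower pos)^[n] (x, 0) = (odometerTower pos)^[i] (x + (b - a), 0) := by
  set y := x - residue K x
  have hreach {w : ℕ} (hw : w < 4 ^ K) :
      (odometerTower pos)^[height pos K w] (y, 0) = (y + w, 0) := by
    have hy : residue K y = 0 := residue_sub_residue K x
    refine h.iterate_odometerTower (K := K) (by rwa [hy, zero_add]) ?_
    rw [hy, h.height_zero, zero_add, zero_add]
  have hxy : y + (a + v : ℕ) = x := by rw [← hx, sub_add_cancel]
  have hxy' : y + (b + v : ℕ) = x + (b - a) := by rw [← hxy]; push_cast; ring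
  rw [← hxy', ← hreach hb, ← iterate_add_apply, ← hni, iterate_add_apply,
    hreach (hx ▸ residue_lt K x), hxy]

lemma IsStacked.height_succ_low_add (h : IsStacked pos) {k m u r : ℕ} (hkm : k ≤ m)
    (hu : u < 4 ^ k) (hr : u + 4 ^ k * r < 4 ^ m) (c : Fin 4) :
    height pos (m + 1) (u + 4 ^ m * c + 4 ^ k * r) =
      height pos k u + pos m c + height pos m (4 ^ k * r) := by
  rw [add_right_comm, height_succ_add pos hr, h.height_low_add hkm hu, add_right_comm]

lemma IsStacked.iterate_odometerTower_eq_of_digit_eq (h : IsStacked pos) {k m n i u : ℕ}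
    (hkm : k ≤ m) (hu : u < 4 ^ k) {c d : Fin 4} {x : ℤ_[2]}
    (hc : digit m (residue (m + 1) x) = c)
    (hni : n + (height pos k (residue k x) + pos m c) = i + (height pos k u + pos m d)) :
    (odometerTower pos)^[n] (x, 0) =
      (odometerTower pos)^[i] (x + ((u + 4 ^ m * d : ℕ) - (residue k x + 4 ^ m * c : ℕ)), 0) := by
  obtain ⟨r, hr, hlt⟩ := exists_residue_succ_eq hkm x
  rw [hc, add_right_comm] at hr
  refine h.iterate_odometerTower_eq hr ?_ ?_
  · have hd : 4 ^ m * (d : ℕ) ≤ 4 ^ m * 3 := Nat.mul_le_mul_left _ (Nat.le_of_lt_succ d.isLt)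
    have := hlt u hu
    rw [pow_succ]
    omega
  · have hx := residue_lt k x
    rw [h.height_succ_low_add hkm hx (hlt _ hx), h.height_succ_low_add hkm hu (hlt u hu),
      ← add_assoc, hni, add_assoc]

/-- The residues modulo `4 ^ k` of both coordinates. -/
noncomputable def residuePair (k : ℕ) (z : ℤ_[2] × ℤ_[2]) : ℕ × ℕ := (residue k z.1, residue k z.2)

lemma preimage_residuePair (k u v : ℕ) :
    residuePair k ⁻¹' {(u, v)} = {x | residue k x = u} ×ˢ {y | residue k y = v} := by
  ext z
  exact Prod.mk_inj

lemma measure_residuePair_preimage (k : ℕ) (z : ℤ_[2] × ℤ_[2]) :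
    (padicHaar.prod padicHaar) (residuePair k ⁻¹' {residuePair k z}) =
      (4 ^ k)⁻¹ * (4 ^ k)⁻¹ := by
  rw [residuePair, preimage_residuePair, prod_prod, measure_residue_eq (residue_lt k _),
    measure_residue_eq (residue_lt k _)]

@[fun_prop] lemma measurable_residuePair (k : ℕ) : Measurable (residuePair k) := by
  unfold residuePair
  fun_prop

lemma eventually_residuePair_eq_imp_dist_lt {δ : ℝ} (hδ : 0 < δ) :
    ∀ᶠ k in atTop, ∀ z w : ℤ_[2] × ℤ_[2], residuePair k z = residuePair k w → dist z w < δ := by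
  filter_upwards [tendsto_inv_four_pow.eventually_lt_const hδ] with k hk z w hzw
  obtain ⟨h₁, h₂⟩ := Prod.mk_inj.1 hzw
  rw [Prod.dist_eq, dist_eq_norm, dist_eq_norm]
  exact (max_le (residue_eq_iff.1 h₁) (residue_eq_iff.1 h₂)).trans_lt hk

/-- The pairs of points of the base that move into `A` when the two coordinates of their bottom
floors are raised by `i` and `j`. -/
def baseSection (pos : ℕ → Fin 4 → ℕ) (A : Set ((ℤ_[2] × ℕ) × ℤ_[2] × ℕ)) (i j : ℕ) :
    Set (ℤ_[2] × ℤ_[2]) :=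
  {z | ((odometerTower pos)^[i] (z.1, 0), (odometerTower pos)^[j] (z.2, 0)) ∈ A}

lemma measurableSet_baseSection {A : Set ((ℤ_[2] × ℕ) × ℤ_[2] × ℕ)} (hA : MeasurableSet A)
    (i j : ℕ) : MeasurableSet (baseSection pos A i j) := by
  have hiter (n : ℕ) : Measurable (odometerTower pos)^[n] :=
    (odometerTower pos).measurable.iterate n
  have hmap : Measurable fun z : ℤ_[2] × ℤ_[2] =>
      ((odometerTower pos)^[i] (z.1, 0), (odometerTower pos)^[j] (z.2, 0)) :=
    ((hiter i).comp (by fun_prop)).prodMk ((hiter j).comp (by fun_prop))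
  exact hmap hA

lemma exists_baseSection_ne_zero {A : Set ((ℤ_[2] × ℕ) × ℤ_[2] × ℕ)} (hA : MeasurableSet A)
    (h : (towerMeasure pos).prod (towerMeasure pos) A ≠ 0) :
    ∃ i j, (padicHaar.prod padicHaar) (baseSection pos A i j) ≠ 0 := by
  obtain ⟨i, j, hij⟩ := exists_prod_section_ne_zero (measurable_topFloor pos) hA h
  refine ⟨i, j, fun h0 => hij (measure_mono_null ?_ h0)⟩
  rintro z ⟨⟨hi, hj⟩, hz⟩
  rw [baseSection, mem_ofPred_eq, odometerTower, iterate_skyscraper_floor _ _ hi,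
    iterate_skyscraper_floor _ _ hj]
  exact hz

lemma mk_iterate_mul_mem_iff {X : Type*} {T : X → X} {p q : ℕ} {A : Set (X × X)}
    (hA : Prod.map T^[p] T^[q] ⁻¹' A = A) (n : ℕ) (x y : X) :
    (T^[p * n] x, T^[q * n] y) ∈ A ↔ (x, y) ∈ A := by
  have hiter : (Prod.map T^[p] T^[q])^[n] ⁻¹' A = A := by
    rw [preimage_iterate_eq]
    exact iterate_fixed hA n
  rw [Prod.map_iterate, ← iterate_mul, ← iterate_mul] at hiter
  exact Set.ext_iff.1 hiter (x, y)

lemma measure_residuePair_preimage_eq_mul {k m : ℕ} (hkm : k ≤ m) (z : ℤ_[2] × ℤ_[2])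
    (c d : Fin 4) :
    (padicHaar.prod padicHaar) (residuePair k ⁻¹' {residuePair k z}) = 16 *
      (padicHaar.prod padicHaar)
        (({x | digit m (residue (m + 1) x) = c} ∩ {x | residue k x = residue k z.1}) ×ˢ
          ({y | digit m (residue (m + 1) y) = d} ∩ {y | residue k y = residue k z.2})) := by
  rw [residuePair, preimage_residuePair, prod_prod, prod_prod,
    ← measure_digit_inter_residue hkm _ c, ← measure_digit_inter_residue hkm _ d, mul_mul_mul_comm]
  norm_num

/-- The displacements of a resonant level are realised by the digit changes `0 → 2` and `1 → 3`,
which act as translations on a sixteenth of the cell of `z`. -/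
lemma IsStacked.measure_cell_le_of_invariant (h : IsStacked pos) {p q n k m i j i' j' : ℕ}
    (hkm : k ≤ m) {A : Set ((ℤ_[2] × ℕ) × ℤ_[2] × ℕ)} (hA : MeasurableSet A)
    (hinv : Prod.map (odometerTower pos)^[p] (odometerTower pos)^[q] ⁻¹' A = A)
    {z z' : ℤ_[2] × ℤ_[2]}
    (hp : p * n + (i + height pos k (residue k z.1)) =
      i' + height pos k (residue k z'.1) + pos m 2)
    (hq : q * n + (j + height pos k (residue k z.2)) + pos m 1 =
      j' + height pos k (residue k z'.2) + pos m 3) :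
    (padicHaar.prod padicHaar) (residuePair k ⁻¹' {residuePair k z}) ≤ 16 *
      ((padicHaar.prod padicHaar) (residuePair k ⁻¹' {residuePair k z} \ baseSection pos A i j) +
        (padicHaar.prod padicHaar)
          (residuePair k ⁻¹' {residuePair k z'} \ baseSection pos Aᶜ i' j')) := by
  set t₁ : ℤ_[2] :=
    (residue k z'.1 + 4 ^ m * (2 : Fin 4) : ℕ) - (residue k z.1 + 4 ^ m * (0 : Fin 4) : ℕ)
  set t₂ : ℤ_[2] :=
    (residue k z'.2 + 4 ^ m * (3 : Fin 4) : ℕ) - (residue k z.2 + 4 ^ m * (1 : Fin 4) : ℕ)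
  conv_lhs => rw [measure_residuePair_preimage_eq_mul hkm z 0 1]
  gcongr
  refine measure_le_measure_sdiff_add
    ((measurePreserving_add_right padicHaar t₁).prod (measurePreserving_add_right padicHaar t₂))
    (measurable_residuePair k (measurableSet_singleton _))
    (measurableSet_baseSection hA.compl i' j')
    (fun x hx => Prod.ext hx.1.2 hx.2.2) ?_ ?_
  · rintro ⟨x, y⟩ ⟨⟨-, hx : residue k x = _⟩, ⟨-, hy : residue k y = _⟩⟩
    have hx' := residue_add_sub_residue hkm (residue_lt k z'.1) x (0 : Fin 4) (2 : Fin 4)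
    have hy' := residue_add_sub_residue hkm (residue_lt k z'.2) y (1 : Fin 4) (3 : Fin 4)
    rw [hx] at hx'
    rw [hy] at hy'
    exact Prod.ext hx' hy'
  · rintro ⟨x, y⟩ ⟨⟨hcx, hx : residue k x = _⟩, ⟨hcy, hy : residue k y = _⟩⟩ hmem
    have hx' := h.iterate_odometerTower_eq_of_digit_eq (n := p * n + i) (i := i') (d := 2) hkm
      (residue_lt k z'.1) hcx (by rw [h.pos_zero, hx]; omega)
    have hy' := h.iterate_odometerTower_eq_of_digit_eq (n := q * n + j) (i := j') (d := 3) hkm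
      (residue_lt k z'.2) hcy (by rw [hy]; omega)
    rw [hx, iterate_add_apply] at hx'
    rw [hy, iterate_add_apply] at hy'
    have hmoved := (mk_iterate_mul_mem_iff hinv n _ _).2 hmem
    rw [hx', hy'] at hmoved
    exact not_not_intro hmoved

theorem IsStacked.preErgodic_prodMap (h : IsStacked pos) {p q : ℕ} (hres : IsResonant pos p q) :
    PreErgodic (Prod.map (odometerTower pos)^[p] (odometerTower pos)^[q])
      ((towerMeasure pos).prod (towerMeasure pos)) := by
  refine ⟨fun A hA hinv => ?_⟩
  rw [eventuallyConst_set', ae_eq_empty, ae_eq_univ]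
  by_contra! hne
  obtain ⟨i, j, hE⟩ := exists_baseSection_ne_zero hA hne.1
  obtain ⟨i', j', hE'⟩ := exists_baseSection_ne_zero hA.compl hne.2
  have hdense {E : Set (ℤ_[2] × ℤ_[2])} := eventually_exists_dense_cell
    (μ := padicHaar.prod padicHaar) (E := E) (π := residuePair)
    (fun k i => measurable_residuePair k (measurableSet_singleton i))
    (fun δ hδ => eventually_residuePair_eq_imp_dist_lt hδ)
  obtain ⟨k, ⟨z, hz⟩, ⟨z', hz'⟩⟩ := ((hdense (measurableSet_baseSection hA i j) hE 32).and
    (hdense (measurableSet_baseSection hA.compl i' j') hE' 32)).exists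
  obtain ⟨m, ⟨n, hp, hq⟩, hkm⟩ := ((hres (i + height pos k (residue k z.1))
    (i' + height pos k (residue k z'.1)) (j + height pos k (residue k z.2))
    (j' + height pos k (residue k z'.2))).and_eventually (eventually_ge_atTop k)).exists
  have hle := h.measure_cell_le_of_invariant hkm hA hinv hp hq
  rw [measure_residuePair_preimage] at hz hz' hle
  have hadd := ENNReal.add_lt_add hz hz'
  rw [← mul_add, ← two_mul] at hadd
  refine hadd.not_ge ((mul_le_mul_right hle 2).trans_eq ?_)
  rw [← mul_assoc]
  norm_num

end Resonance

section Rigidity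

/-- The points of the bottom floor whose base point has residue `u` modulo `4 ^ K`. Integers are
left out, since adding a natural number to them may change infinitely many digits. -/
def bottomCell (K u : ℕ) : Set (ℤ_[2] × ℕ) :=
  ({x | residue K x = u} \ range ((↑) : ℤ → ℤ_[2])) ×ˢ {0}

lemma measurableSet_bottomCell (K u : ℕ) : MeasurableSet (bottomCell K u) :=
  ((measurable_residue K (measurableSet_singleton u)).diff
    (countable_range _).measurableSet).prod (measurableSet_singleton 0)

lemma towerMeasure_bottomCell_ne_zero (pos : ℕ → Fin 4 → ℕ) {K u : ℕ} (hu : u < 4 ^ K) :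
    towerMeasure pos (bottomCell K u) ≠ 0 := by
  rw [bottomCell, skyscraperMeasure_floor_zero,
    measure_sdiff_null ((countable_range _).measure_zero _), measure_residue_eq hu]
  simp

lemma bottomCell_subset {k K u v : ℕ} (hkK : k ≤ K) (hu : u % 4 ^ k = v) :
    bottomCell K u ⊆ bottomCell k v := by
  rintro ⟨x, i⟩ ⟨⟨rfl, hx⟩, hi⟩
  exact ⟨⟨(residue_mod hkK x).symm.trans hu, hx⟩, hi⟩

variable {pos : ℕ → Fin 4 → ℕ} {p q k : ℕ}

lemma dvd_residue_of_mem_bottomCell {K : ℕ} (hkK : k ≤ K) {x : ℤ_[2]} {i : ℕ}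
    (hx : (x, i) ∈ bottomCell k 0) : 4 ^ k ∣ residue K x :=
  Nat.dvd_of_mod_eq_zero ((residue_mod hkK x).trans hx.1.1)

lemma IsStacked.eq_of_iterate_mem_bottomCell (h : IsStacked pos)
    (hrigid : ∀ m ≥ k, IsRigidLevel pos p q m) {z z' : (ℤ_[2] × ℕ) × ℤ_[2] × ℕ} {n : ℕ}
    (hz : z ∈ bottomCell k 0 ×ˢ bottomCell k 0) (hz' : z' ∈ bottomCell k 0 ×ˢ bottomCell k 0)
    (hzz' : (Prod.map (odometerTower pos)^[p] (odometerTower pos)^[q])^[n] z = z') : z = z' := by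
  obtain ⟨⟨x, _⟩, ⟨y, _⟩⟩ := z
  obtain ⟨⟨x', _⟩, ⟨y', _⟩⟩ := z'
  obtain ⟨hx, hy⟩ := hz
  obtain ⟨hx', hy'⟩ := hz'
  obtain rfl := hx.2
  obtain rfl := hy.2
  obtain rfl := hx'.2
  obtain rfl := hy'.2
  rw [Prod.map_iterate, ← iterate_mul, ← iterate_mul] at hzz'
  obtain ⟨hreturn_x, hreturn_y⟩ := Prod.mk_inj.1 hzz'
  obtain ⟨a, rfl, ha⟩ := h.exists_of_iterate_odometerTower hreturn_x
  obtain ⟨b, rfl, hb⟩ := h.exists_of_iterate_odometerTower hreturn_y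
  obtain ⟨K₁, hK₁⟩ := exists_residue_add_lt (x := x) hx.1.2 a
  obtain ⟨K₂, hK₂⟩ := exists_residue_add_lt (x := y) hy.1.2 b
  obtain ⟨K, hkK, hK₁K, hK₂K⟩ : ∃ K, k ≤ K ∧ K₁ ≤ K ∧ K₂ ≤ K := ⟨k + K₁ + K₂, by omega⟩
  have hxa := residue_add_lt_of_le hK₁K hK₁
  have hyb := residue_add_lt_of_le hK₂K hK₂
  have dvd_x := dvd_residue_of_mem_bottomCell hkK hx'
  have dvd_y := dvd_residue_of_mem_bottomCell hkK hy'
  rw [residue_add_natCast_of_lt hxa] at dvd_x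
  rw [residue_add_natCast_of_lt hyb] at dvd_y
  obtain ⟨hxa0, hyb0⟩ := h.eq_of_mul_height_sub_eq hrigid hkK (residue_lt K x) hxa (residue_lt K y)
    hyb (dvd_residue_of_mem_bottomCell hkK hx) dvd_x (dvd_residue_of_mem_bottomCell hkK hy) dvd_y
    (by rw [← ha K hxa, ← hb K hyb]; push_cast; ring)
  obtain rfl : a = 0 := by omega
  obtain rfl : b = 0 := by omega
  simp

lemma IsStacked.eq_of_iterate_eq_iterate (h : IsStacked pos)
    (hrigid : ∀ m ≥ k, IsRigidLevel pos p q m) {z z' : (ℤ_[2] × ℕ) × ℤ_[2] × ℕ} {m n : ℕ}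
    (hz : z ∈ bottomCell k 0 ×ˢ bottomCell k 0) (hz' : z' ∈ bottomCell k 0 ×ˢ bottomCell k 0)
    (hzz' : (Prod.map (odometerTower pos)^[p] (odometerTower pos)^[q])^[m] z =
      (Prod.map (odometerTower pos)^[p] (odometerTower pos)^[q])^[n] z') : z = z' := by
  wlog hmn : m ≤ n generalizing z z' m n
  · exact (this hz' hz hzz'.symm (le_of_not_ge hmn)).symm
  have hinj := ((odometerTower pos).injective.iterate p).prodMap
    ((odometerTower pos).injective.iterate q)
  obtain ⟨c, rfl⟩ := Nat.exists_eq_add_of_le hmn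
  rw [iterate_add_apply] at hzz'
  exact (h.eq_of_iterate_mem_bottomCell hrigid hz' hz (hinj.iterate m hzz').symm).symm

theorem IsStacked.not_preErgodic_prodMap (h : IsStacked pos)
    (hrigid : ∀ m ≥ k, IsRigidLevel pos p q m) :
    ¬ PreErgodic (Prod.map (odometerTower pos)^[p] (odometerTower pos)^[q])
      ((towerMeasure pos).prod (towerMeasure pos)) := by
  have hiter (n : ℕ) : MeasurableEmbedding (odometerTower pos)^[n] :=
    measurableEmbedding_iterate (odometerTower pos).measurableEmbedding n
  have hk : 0 < 4 ^ k := by positivity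
  have hk' : 4 ^ k < 4 ^ (k + 1) := Nat.pow_lt_pow_succ (by norm_num)
  have hpos {u : ℕ} (hu : u < 4 ^ (k + 1)) : (towerMeasure pos).prod (towerMeasure pos)
      (bottomCell (k + 1) u ×ˢ bottomCell k 0) ≠ 0 := by
    rw [prod_prod]
    exact mul_ne_zero (towerMeasure_bottomCell_ne_zero pos hu)
      (towerMeasure_bottomCell_ne_zero pos hk)
  refine not_preErgodic_of_disjoint_orbits ((hiter p).prodMap (hiter q))
    ((measurableSet_bottomCell (k + 1) 0).prod (measurableSet_bottomCell k 0))
    (hpos (hk.trans hk')) (hpos hk') fun z hz z' hz' m n heq => ?_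
  obtain rfl := h.eq_of_iterate_eq_iterate hrigid
    ⟨bottomCell_subset k.le_succ (Nat.zero_mod _) hz.1, hz.2⟩
    ⟨bottomCell_subset k.le_succ (Nat.mod_self _) hz'.1, hz'.2⟩ heq
  have hres : residue (k + 1) z.1.1 = 0 := hz.1.1.1
  have hres' : residue (k + 1) z.1.1 = 4 ^ k := hz'.1.1.1
  omega

end Rigidity

section Levels

/-- The data of a level: the ratio `p / q` for which it is built and the offsets `s`, `t` of its
last two positions. -/
structure LevelData where
  p : ℕ
  q : ℕ
  s : ℕ
  t : ℕ
  p_pos : 0 < p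
  p_le_q : p ≤ q

namespace LevelData

variable (d : LevelData) (m G : ℕ)

/-- A bound for the height `G` of the levels below and for the offsets. The last summand makes the
total measure of the tower infinite. -/
def slack : ℕ := G + d.s + d.t + (m + 1) * 4 ^ (m + 1)

/-- The smaller scale of level `m`, larger than `slack` by a factor linear in `m`. -/
def smallScale : ℕ := (m + 1) * d.slack m G

/-- The larger scale of level `m`, larger than `smallScale` by a factor linear in `m`. -/
def largeScale : ℕ := (m + 1) * (d.smallScale m G + d.slack m G)

/-- The four positions of level `m` above levels of total height `G`. Moving the digit of one point
from `0` to `2` and the digit of another from `1` to `3` takes times in ratio `p / q`, up to the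
offsets. -/
def pos : Fin 4 → ℕ :=
  ![0, d.smallScale m G, d.p * d.largeScale m G + d.s,
    d.smallScale m G + d.q * d.largeScale m G + d.t]

lemma slack_le_smallScale : d.slack m G ≤ d.smallScale m G :=
  Nat.le_mul_of_pos_left _ m.succ_pos

lemma smallScale_add_slack_le : d.smallScale m G + d.slack m G ≤ d.largeScale m G :=
  Nat.le_mul_of_pos_left _ m.succ_pos

lemma add_lt_slack : G + d.s + d.t < d.slack m G :=
  Nat.lt_add_of_pos_right (by positivity)

lemma add_pos_lt_pos {i j : Fin 4} (hij : i < j) : G + d.pos m G i < d.pos m G j := by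
  have hG := d.add_lt_slack m G
  have hA := d.slack_le_smallScale m G
  have hL := d.smallScale_add_slack_le m G
  have hpL : d.largeScale m G ≤ d.p * d.largeScale m G := Nat.le_mul_of_pos_left _ d.p_pos
  have hqL : d.p * d.largeScale m G ≤ d.q * d.largeScale m G := Nat.mul_le_mul_right _ d.p_le_q
  fin_cases i <;> fin_cases j <;> simp [pos] at hij ⊢ <;> omega

end LevelData

lemma eq_zero_of_abs_mul_add_le {X L w e b : ℤ} (h : |X * L + w| ≤ e) (hw : |w| ≤ b)
    (hL : e + b < L) : X = 0 := by
  by_contra hne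
  have hL0 : 0 < L := by linarith [abs_nonneg w, abs_nonneg (X * L + w)]
  have hXL : |X| * L ≤ |X * L + w| + |w| := by
    simpa only [add_sub_cancel_right, abs_mul, abs_of_pos hL0] using abs_sub (X * L + w) w
  have : L ≤ |X| * L := le_mul_of_one_le_left hL0.le (Int.one_le_abs hne)
  linarith

lemma eq_zero_of_separated_scales {N G S A L X Y Z : ℤ} (hA : N * G + N * S < A)
    (hL : N * G + (N * A + N * S) < L) (hY : |Y| ≤ N) (hZ : |Z| ≤ N * S)
    (h : |X * L + Y * A + Z| ≤ N * G) : X = 0 ∧ Y = 0 := by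
  have hA0 : 0 < A := by linarith [abs_nonneg Z, (abs_nonneg _).trans h]
  have hX : X = 0 := by
    refine eq_zero_of_abs_mul_add_le (w := Y * A + Z) (by rwa [← add_assoc]) ?_ hL
    calc |Y * A + Z| ≤ |Y| * A + |Z| := by
          simpa only [abs_mul, abs_of_pos hA0] using abs_add_le (Y * A) Z
      _ ≤ N * A + N * S := by gcongr
  refine ⟨hX, eq_zero_of_abs_mul_add_le ?_ hZ hA⟩
  rwa [hX, zero_mul, zero_add] at h

namespace LevelData

variable (d : LevelData)

/-- The coefficients of `largeScale` in the four positions. -/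
def largeCoeff : Fin 4 → ℤ := ![0, 0, d.p, d.q]

/-- The coefficients of `smallScale` in the four positions. -/
def smallCoeff : Fin 4 → ℤ := ![0, 1, 0, 1]

/-- The offsets of the four positions. -/
def offset : Fin 4 → ℤ := ![0, 0, d.s, d.t]

lemma pos_eq (m G : ℕ) (i : Fin 4) : (d.pos m G i : ℤ) =
    d.largeCoeff i * d.largeScale m G + smallCoeff i * d.smallScale m G + d.offset i := by
  fin_cases i <;> simp [pos, largeCoeff, smallCoeff, offset]; ring

lemma smallCoeff_eq {P Q : ℤ} (hP : 0 < P) (hPQ : P < Q) {i i' j j' : Fin 4}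
    (h : Q * (smallCoeff i' - smallCoeff i) - P * (smallCoeff j' - smallCoeff j) = 0) :
    smallCoeff i = smallCoeff i' ∧ smallCoeff j = smallCoeff j' := by
  have h01 : ∀ k, smallCoeff k = 0 ∨ smallCoeff k = 1 := by
    intro k; fin_cases k <;> simp [smallCoeff]
  rcases h01 i with h1 | h1 <;> rcases h01 i' with h2 | h2 <;>
    rcases h01 j with h3 | h3 <;> rcases h01 j' with h4 | h4 <;>
    rw [h1, h2, h3, h4] at h ⊢ <;> constructor <;> first | rfl | linarith

/-- The small scale separates positions `0`, `2` from positions `1`, `3`, so that within one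
coordinate `p * L` is never compared with `q * L`. -/
lemma largeCoeff_sub_of_smallCoeff_eq {k k' : Fin 4} (h : smallCoeff k = smallCoeff k') :
    k = k' ∨ |d.largeCoeff k' - d.largeCoeff k| = d.p ∨
      |d.largeCoeff k' - d.largeCoeff k| = d.q := by
  fin_cases k <;> fin_cases k' <;> simp [smallCoeff] at h <;> simp [largeCoeff]

lemma eq_of_coeff_eq {P Q : ℤ} (hP : 0 < P) (hPQ : P < Q) (hne : P * d.q ≠ Q * d.p)
    {i i' j j' : Fin 4}
    (hA : Q * (smallCoeff i' - smallCoeff i) - P * (smallCoeff j' - smallCoeff j) = 0)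
    (hL : Q * (d.largeCoeff i' - d.largeCoeff i) - P * (d.largeCoeff j' - d.largeCoeff j) = 0) :
    i = i' ∧ j = j' := by
  obtain ⟨hi, hj⟩ := smallCoeff_eq hP hPQ hA
  have hQ : 0 < Q := hP.trans hPQ
  have hp : (0 : ℤ) < d.p := by exact_mod_cast d.p_pos
  have hpq : (d.p : ℤ) ≤ d.q := by exact_mod_cast d.p_le_q
  have habs : Q * |d.largeCoeff i' - d.largeCoeff i| = P * |d.largeCoeff j' - d.largeCoeff j| := by
    simpa only [abs_mul, abs_of_pos hP, abs_of_pos hQ] using congrArg abs (sub_eq_zero.1 hL)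
  have hPp := mul_lt_mul_of_pos_right hPQ hp
  have hPq := mul_lt_mul_of_pos_right hPQ (hp.trans_le hpq)
  have hQpq := mul_le_mul_of_nonneg_left hpq hQ.le
  have hPp0 := mul_pos hP hp
  have hPq0 := mul_pos hP (hp.trans_le hpq)
  rcases d.largeCoeff_sub_of_smallCoeff_eq hi with rfl | hi | hi <;>
    rcases d.largeCoeff_sub_of_smallCoeff_eq hj with rfl | hj | hj
  · exact ⟨rfl, rfl⟩
  all_goals
    exfalso
    simp only [sub_self, abs_zero, hi, hj] at habs
    first | exact hne habs.symm | linarith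

lemma abs_smallCoeff_sub_le (k k' : Fin 4) : |smallCoeff k - smallCoeff k'| ≤ 1 := by
  fin_cases k <;> fin_cases k' <;> simp [smallCoeff]

lemma abs_offset_sub_le (k k' : Fin 4) : |d.offset k - d.offset k'| ≤ d.s + d.t := by
  rw [abs_le]
  fin_cases k <;> fin_cases k' <;> simp [offset] <;> omega

lemma mul_lt_smallScale {N m : ℕ} (hN : N ≤ m) (G : ℕ) :
    N * G + N * (d.s + d.t) < d.smallScale m G := by
  have hslack := d.add_lt_slack m G
  calc N * G + N * (d.s + d.t) = N * (G + d.s + d.t) := by ring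
    _ ≤ m * d.slack m G := Nat.mul_le_mul hN hslack.le
    _ < d.smallScale m G := Nat.mul_lt_mul_of_pos_right m.lt_succ_self (by omega)

lemma mul_lt_largeScale {N m : ℕ} (hN : N ≤ m) (G : ℕ) :
    N * G + (N * d.smallScale m G + N * (d.s + d.t)) < d.largeScale m G := by
  have hslack := d.add_lt_slack m G
  calc N * G + (N * d.smallScale m G + N * (d.s + d.t))
        = N * (d.smallScale m G + (G + d.s + d.t)) := by ring
    _ ≤ m * (d.smallScale m G + d.slack m G) := Nat.mul_le_mul hN (by omega)
    _ < d.largeScale m G := Nat.mul_lt_mul_of_pos_right m.lt_succ_self (by omega)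

lemma isRigidLevel {pos : ℕ → Fin 4 → ℕ} {m : ℕ} (hpos : pos m = d.pos m (totalHeight pos m))
    {p q : ℕ} (hp : 0 < p) (hpq : p < q) (hm : p + q ≤ m) (hne : p * d.q ≠ q * d.p) :
    IsRigidLevel pos p q m := by
  intro i i' j j' h
  generalize totalHeight pos m = G at hpos h
  rw [hpos] at h
  simp only [pos_eq] at h
  have hp' : (0 : ℤ) < p := by exact_mod_cast hp
  have hpq' : (p : ℤ) < q := by exact_mod_cast hpq
  have hsmall := abs_mul_sub_mul_le hp'.le (hp'.trans hpq').le
    (abs_smallCoeff_sub_le i' i) (abs_smallCoeff_sub_le j' j)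
  have hoffset := abs_mul_sub_mul_le hp'.le (hp'.trans hpq').le
    (d.abs_offset_sub_le i' i) (d.abs_offset_sub_le j' j)
  rw [mul_one] at hsmall
  have hA : ((p : ℤ) + q) * G + (p + q) * (d.s + d.t) < d.smallScale m G := by
    exact_mod_cast d.mul_lt_smallScale hm G
  have hL : ((p : ℤ) + q) * G + ((p + q) * d.smallScale m G + (p + q) * (d.s + d.t))
      < d.largeScale m G := by
    exact_mod_cast d.mul_lt_largeScale hm G
  obtain ⟨hlarge0, hsmall0⟩ := eq_zero_of_separated_scales hA hL hsmall hoffset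
    (X := q * (d.largeCoeff i' - d.largeCoeff i) - p * (d.largeCoeff j' - d.largeCoeff j))
    (by convert h using 2; ring)
  exact d.eq_of_coeff_eq hp' hpq' (by exact_mod_cast hne) hsmall0 hlarge0

lemma exists_mul_add_eq {p q a a' b b' : ℕ} (hp : 0 < p) (hpq : p ≤ q) :
    ∃ d : LevelData, d.p = p ∧ d.q = q ∧ ∀ m G, ∃ n,
      p * n + a = a' + d.pos m G 2 ∧ q * n + b + d.pos m G 1 = b' + d.pos m G 3 := by
  have ha : a' ≤ p * (a' + b') := (Nat.le_add_right _ _).trans (Nat.le_mul_of_pos_left _ hp)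
  have hb : b' ≤ q * (a' + b') :=
    (Nat.le_add_left _ _).trans (Nat.le_mul_of_pos_left _ (hp.trans_le hpq))
  refine ⟨⟨p, q, p * (a' + b') + a - a', q * (a' + b') + b - b', hp, hpq⟩, rfl, rfl,
    fun m G => ?_⟩
  generalize hd : LevelData.mk p q _ _ hp hpq = d
  refine ⟨d.largeScale m G + (a' + b'), ?_, ?_⟩ <;>
    · simp only [pos, Matrix.cons_val, ← hd, mul_add (_ : ℕ) (largeScale _ _ _) _]
      omega

instance : Countable LevelData :=
  Injective.countable (f := fun d : LevelData => (d.p, d.q, d.s, d.t)) fun d d' h => by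
    cases d; cases d'; simp_all

end LevelData

variable (e : ℕ → LevelData)

/-- The total height of the first `m` levels with data `e`. -/
def stackHeight : ℕ → ℕ
  | 0 => 0
  | m + 1 => stackHeight m + (e m).pos m (stackHeight m) 3

/-- The positions of the successive levels with data `e`. -/
def levelPos (m : ℕ) : Fin 4 → ℕ := (e m).pos m (stackHeight e m)

lemma totalHeight_levelPos (m : ℕ) : totalHeight (levelPos e) m = stackHeight e m := by
  induction m with
  | zero => rfl
  | succ m ih => rw [totalHeight, Finset.sum_range_succ, ← totalHeight, ih]; rfl

lemma levelPos_eq (m : ℕ) :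
    levelPos e m = (e m).pos m (totalHeight (levelPos e) m) := by
  rw [totalHeight_levelPos, levelPos]

lemma isStacked_levelPos : IsStacked (levelPos e) where
  pos_zero _ := rfl
  gap m _ _ hij := by simpa only [levelPos_eq e m] using (e m).add_pos_lt_pos m _ hij

lemma totalHeight_add_le_levelPos_one (m : ℕ) :
    totalHeight (levelPos e) m + (m + 1) * 4 ^ (m + 1) ≤ levelPos e m 1 := by
  rw [levelPos_eq]
  refine le_trans ?_ ((e m).slack_le_smallScale m _)
  unfold LevelData.slack
  omega

variable {e}

lemma isResonant_levelPos {p q : ℕ} (hp : 0 < p) (hpq : p ≤ q)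
    (he : ∀ d : LevelData, d.p = p → d.q = q → ∃ᶠ m in atTop, e m = d) :
    IsResonant (levelPos e) p q := by
  intro a a' b b'
  obtain ⟨d, hdp, hdq, hd⟩ := LevelData.exists_mul_add_eq (a := a) (a' := a') (b := b) (b' := b')
    hp hpq
  refine (he d hdp hdq).mono fun m hm => ?_
  rw [levelPos, hm]
  exact hd m _

lemma isRigidLevel_levelPos {p q : ℕ} (hp : 0 < p) (hpq : p < q)
    (hne : ∀ m, p * (e m).q ≠ q * (e m).p) : ∀ m ≥ p + q, IsRigidLevel (levelPos e) p q m :=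
  fun m hm => (e m).isRigidLevel (levelPos_eq e m) hp hpq hm (hne m)

lemma exists_seq_frequently_eq (α : Type*) [Countable α] [Nonempty α] :
    ∃ f : ℕ → α, ∀ a, ∃ᶠ m in atTop, f m = a := by
  obtain ⟨g, hg⟩ := exists_surjective_nat α
  refine ⟨fun m => g m.unpair.1, fun a => frequently_atTop.2 fun N => ?_⟩
  obtain ⟨n, rfl⟩ := hg a
  exact ⟨Nat.pair n N, Nat.right_le_pair n N, by simp only [Nat.unpair_pair]⟩

lemma exists_levels (R : Set ℚ) : ∃ e : ℕ → LevelData,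
    (∀ m, ((e m).p : ℚ) / (e m).q ∈ insert 1 R) ∧
      ∀ d : LevelData, (d.p : ℚ) / d.q ∈ insert 1 R → ∃ᶠ m in atTop, e m = d := by
  let S := {d : LevelData // (d.p : ℚ) / d.q ∈ insert 1 R}
  have : Nonempty S := ⟨⟨⟨1, 1, 0, 0, one_pos, le_rfl⟩, by simp⟩⟩
  obtain ⟨f, hf⟩ := exists_seq_frequently_eq S
  exact ⟨fun m => f m, fun m => (f m).2, fun d hd =>
    (hf ⟨d, hd⟩).mono fun m hm => congrArg Subtype.val hm⟩

end Levels

section Main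

variable {e : ℕ → LevelData} {p q : ℕ}

theorem isErgodicMap_prodMap_odometerTower_iff {R : Set ℚ}
    (hR : ∀ m, ((e m).p : ℚ) / (e m).q ∈ insert 1 R)
    (he : ∀ d : LevelData, (d.p : ℚ) / d.q ∈ insert 1 R → ∃ᶠ m in atTop, e m = d)
    (hp : 0 < p) (hpq : p ≤ q) :
    IsErgodicMap ((towerMeasure (levelPos e)).prod (towerMeasure (levelPos e)))
        (Prod.map (odometerTower (levelPos e))^[p] (odometerTower (levelPos e))^[q]) ↔
      (p : ℚ) / q ∈ insert 1 R := by
  have hT := measurePreserving_odometerTower (levelPos e)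
  rw [isErgodicMap_iff_preErgodic ((hT.iterate p).prod (hT.iterate q)).quasiMeasurePreserving]
  refine ⟨fun herg => ?_, fun hmem => ?_⟩
  · by_contra hmem
    have hq : (q : ℚ) ≠ 0 := Nat.cast_ne_zero.2 (hp.trans_le hpq).ne'
    have hpq' : p < q := hpq.lt_of_ne fun heq => hmem (Or.inl (by rw [heq, div_self hq]))
    refine (isStacked_levelPos e).not_preErgodic_prodMap
      (isRigidLevel_levelPos hp hpq' fun m heq => hmem ?_) herg
    have hqm : ((e m).q : ℚ) ≠ 0 := Nat.cast_ne_zero.2 ((e m).p_pos.trans_le (e m).p_le_q).ne'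
    rw [(div_eq_div_iff hq hqm).2 (by rw [mul_comm ((e m).p : ℚ)]; exact_mod_cast heq)]
    exact hR m
  · exact (isStacked_levelPos e).preErgodic_prodMap
      (isResonant_levelPos hp hpq fun d hdp hdq => he d (by rwa [hdp, hdq]))

end Main

end OdometerTower

open OdometerTower

theorem stmt4_general (R : Set ℚ) :
    ∃ (X : Type) (_ : MeasurableSpace X) (_ : StandardBorelSpace X)
      (μ : Measure X) (_ : NullSingletonClass μ) (_ : SigmaFinite μ) (T : X ≃ᵐ X),
      μ Set.univ = ⊤ ∧ MeasurePreserving T μ μ ∧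
      ∀ p q : ℕ, 0 < p → p ≤ q →
        (IsErgodicMap (μ.prod μ) (Prod.map T^[p] T^[q]) ↔ (p : ℚ) / q ∈ insert 1 R) := by
  obtain ⟨e, hR, he⟩ := exists_levels R
  exact ⟨ℤ_[2] × ℕ, inferInstance, inferInstance, towerMeasure (levelPos e), inferInstance,
    inferInstance, odometerTower (levelPos e),
    (isStacked_levelPos e).towerMeasure_univ (totalHeight_add_le_levelPos_one e),
    measurePreserving_odometerTower _,
    fun _ _ hp hpq => isErgodicMap_prodMap_odometerTower_iff hR he hp hpq⟩

theorem stmt4 (R : Set ℚ) (hR : R ⊆ {r : ℚ | 0 < r ∧ r < 1}) :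
    ∃ (X : Type) (_ : MeasurableSpace X) (_ : StandardBorelSpace X)
      (μ : Measure X) (_ : NoAtoms μ) (_ : SigmaFinite μ) (T : X ≃ᵐ X),
      μ Set.univ = ⊤ ∧ MeasurePreserving T μ μ ∧
      ∀ p q : ℕ, 0 < p → p < q →
        (IsErgodicMap (μ.prod μ) (fun z : X × X => ((⇑T)^[p] z.1, (⇑T)^[q] z.2)) ↔
          ((p : ℚ) / (q : ℚ)) ∈ R) := by
  obtain ⟨X, _, _, μ, hμ, _, T, hμT, hT, hiff⟩ := stmt4_general R
  refine ⟨X, _, inferInstance, μ, hμ, inferInstance, T, hμT, hT, fun p q hp hpq => ?_⟩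
  have hne : (p : ℚ) / q ≠ 1 := ((div_lt_one (by exact_mod_cast hp.trans hpq)).2
    (by exact_mod_cast hpq)).ne
  exact (hiff p q hp hpq.le).trans (Set.mem_insert_iff.trans (or_iff_right hne))
end

section
/- If R₁ ⊆ R₂ ⊆ ℚ ∩ (0,1), then there exists a standard Borel space X with a nonatomic σ-finite Borel measure μ satisfying μ(X) = ∞, and an invertible measure-preserving transformation T : X → X, such that for all natural numbers p, q with 0 < p < q: (i) if p/q ∈ R₁, then T^p × T^q is conservative and ergodic; (ii) if p/q ∈ R₂ ∖ R₁, then T^p × T^q is conservative but not ergodic; (iii) if p/q ∈ (ℚ ∩ (0,1)) ∖ R₂, then T^p × T^q is not conservative. -/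
/-!
Time is advanced by an odometer-like tower: a point is a sequence of digits, and the digit at place
`n` contributes a certain number of units of time to the position of the point in its orbit, with
the contributions growing so fast that a displacement in time determines the digits which change.
The resulting coding of sequences in a space of two-sided sequences carries an infinite invariant
measure for the shift.

Changing digits at a single high place alters a set of pairs of sequences very little. So if the
two coordinates can be displaced at infinitely many places by `(N * p, N * q)`, then `T ^ p × T ^ q`
is conservative; if they can also be displaced by `(N * p + 1, N * q)` and by `(N * p, N * q + 1)`,
then a set invariant under `T ^ p × T ^ q` is invariant under `T × 1` and `1 × T`, hence is trivial.
Conversely, displacements of `(k * p, k * q)` have to be produced place by place in the ratio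
`p / q`, up to the error coming from lower places. If no place serves the ratio `p / q`, this forces
`k = 0`. If the places serving it only produce `(N * p, N * q)`, some digits of the second
coordinate are preserved, which rules out ergodicity. One sequence of places serves all ratios at
once.
-/

open MeasureTheory

namespace TagTower

open Filter Topology Function PiNat
open scoped symmDiff ENNReal

section Translation

variable {G : Type*} [AddCommGroup G] [TopologicalSpace G] [IsTopologicalAddGroup G]
  [CompactSpace G] [MeasurableSpace G] [BorelSpace G]
  (ν : Measure G) [ν.IsAddHaarMeasure] {s : Set G}

theorem measure_eq_zero_or_compl_of_dense [SecondCountableTopology G] [ν.InnerRegular]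
    (hs : MeasurableSet s) (hd : Dense {g : G | (g + ·) ⁻¹' s =ᵐ[ν] s}) : ν s = 0 ∨ ν sᶜ = 0 := by
  rcases eventuallyConst_set.1 (aeconst_of_dense_setOfPred_preimage_vadd_ae (M := G)
    hs.nullMeasurableSet hd) with h | h
  · exact .inr (mem_ae_iff.1 h)
  · exact .inl (by simpa [ae_iff] using h)

theorem tendsto_measure_symmDiff_preimage_const_add {g : ℕ → G} (hg : Tendsto g atTop (𝓝 0))
    (hs : MeasurableSet s) :
    Tendsto (fun n => ν (((g n + ·) ⁻¹' s) ∆ s)) atTop (𝓝 0) := by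
  let add : C(G × G, G) := ⟨fun z => z.1 + z.2, by fun_prop⟩
  have hadd : Tendsto (fun n => add.curry (g n)) atTop (𝓝 (add.curry 0)) :=
    (add.curry.continuous.tendsto 0).comp hg
  have key := tendsto_measure_symmDiff_preimage_nhds_zero (s := s) hadd
    (Eventually.of_forall fun n => measurePreserving_add_left ν (g n))
    (measurePreserving_add_left ν 0) hs.nullMeasurableSet (measure_ne_top _ _)
  have hzero : add.curry 0 ⁻¹' s = s := by ext z; simp [add]
  rwa [hzero] at key

/-- The translates `-H i n + (B ∩ E n)` cover all of `B` except for a small set, because `B` is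
almost invariant under all the translations involved. -/
theorem eventually_measure_pos_inter_preimage_const_add {ι : Type*} [Finite ι] {B : Set G}
    (hB : MeasurableSet B) (hpos : 0 < ν B) {E : ℕ → Set G} {g : ℕ → G} (hg : Tendsto g atTop (𝓝 0))
    {H : ι → ℕ → G} (hH : ∀ i, Tendsto (H i) atTop (𝓝 0)) (hcov : ∀ n z, ∃ i, H i n + z ∈ E n) :
    ∀ᶠ n in atTop, 0 < ν (B ∩ E n ∩ (g n + ·) ⁻¹' B) := by
  cases nonempty_fintype ι
  have hlim : Tendsto (fun n => ∑ i, (ν (((g n + ·) ⁻¹' B) ∆ B) + ν (((-H i n + ·) ⁻¹' B) ∆ B)))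
      atTop (𝓝 0) := by
    rw [show (0 : ℝ≥0∞) = ∑ _i : ι, (0 + 0) by simp]
    refine tendsto_finsetSum _ fun i _ => ?_
    exact (tendsto_measure_symmDiff_preimage_const_add ν hg hB).add
      (tendsto_measure_symmDiff_preimage_const_add ν (by simpa using (hH i).neg) hB)
  filter_upwards [hlim.eventually (gt_mem_nhds hpos)] with n hn
  by_contra hzero
  rw [not_lt, nonpos_iff_eq_zero] at hzero
  refine hn.not_ge ?_
  have hcover : B ⊆ ⋃ i, (H i n + ·) ⁻¹' (E n ∩ (-H i n + ·) ⁻¹' B) := by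
    intro z hz
    obtain ⟨i, hi⟩ := hcov n z
    exact Set.mem_iUnion.2 ⟨i, hi, by simpa using hz⟩
  have hpiece (i : ι) : E n ∩ (-H i n + ·) ⁻¹' B ⊆
      B ∩ E n ∩ (g n + ·) ⁻¹' B ∪ ((g n + ·) ⁻¹' B) ∆ B ∪ ((-H i n + ·) ⁻¹' B) ∆ B := by
    intro z hz
    simp only [Set.mem_inter_iff, Set.mem_preimage, Set.mem_union, Set.mem_symmDiff] at hz ⊢
    tauto
  calc ν B ≤ ∑ i, ν ((H i n + ·) ⁻¹' (E n ∩ (-H i n + ·) ⁻¹' B)) :=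
        (measure_mono hcover).trans (measure_iUnion_fintype_le _ _)
    _ = ∑ i, ν (E n ∩ (-H i n + ·) ⁻¹' B) := by simp only [measure_preimage_add]
    _ ≤ ∑ i, (ν (((g n + ·) ⁻¹' B) ∆ B) + ν (((-H i n + ·) ⁻¹' B) ∆ B)) := by
        refine Finset.sum_le_sum fun i _ => (measure_mono (hpiece i)).trans ?_
        refine (measure_union_le _ _).trans (add_le_add_left ?_ _)
        exact (measure_union_le _ _).trans_eq (by rw [hzero, zero_add])

end Translation

theorem forall_ge_of_eventually_of_succ {P : ℕ → Prop} {m : ℕ} (hev : ∀ᶠ n in atTop, P n)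
    (hstep : ∀ n ≥ m, P (n + 1) → P n) : ∀ n ≥ m, P n := by
  intro n hn
  obtain ⟨N, hN⟩ := eventually_atTop.1 hev
  exact Nat.decreasingInduction' (fun k _ hk => hstep k (hn.trans hk)) (le_max_right N n)
    (hN _ (le_max_left N n))

/-- Weights on the digits of a sequence: the digit `v` at place `n` advances a sequence by
`weight n v` units of time. All places below `n` together contribute at most `bound n`, which is
less than half the distance between two weights at place `n`. -/
structure WeightSystem (D : Type*) [Zero D] where
  weight : ℕ → D → ℕ
  bound : ℕ → ℕ
  weight_zero : ∀ n, weight n 0 = 0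
  weight_add_bound_lt : ∀ n v, weight n v + bound n < bound (n + 1)
  eq_of_abs_weight_sub_le : ∀ n u v, |(weight n u : ℤ) - weight n v| ≤ 2 * bound n → u = v

namespace WeightSystem

variable {D : Type*} [AddCommGroup D] (w : WeightSystem D)

theorem bound_strictMono : StrictMono w.bound :=
  strictMono_nat_of_lt_succ fun n => by simpa [w.weight_zero] using w.weight_add_bound_lt n 0

theorem injOn_add_weight (n : ℕ) :
    Set.InjOn (fun z : ℤ × D => z.1 + w.weight n z.2) {z | |z.1| ≤ w.bound n} := by
  rintro ⟨f, u⟩ hf ⟨g, v⟩ hg heq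
  simp only [Set.mem_ofPred_eq, abs_le] at hf hg heq
  obtain rfl : u = v := w.eq_of_abs_weight_sub_le n u v (abs_le.2 (by omega))
  simpa using heq

theorem card_mul_le_bound_succ_add [Fintype D] (n : ℕ) :
    Fintype.card D * (2 * w.bound n + 1) ≤ w.bound (n + 1) + w.bound n := by
  let s : Finset (ℤ × D) := Finset.Icc (-w.bound n : ℤ) (w.bound n) ×ˢ Finset.univ
  have hmaps : Set.MapsTo (fun z : ℤ × D => z.1 + w.weight n z.2) s
      (Finset.Ico (-w.bound n : ℤ) (w.bound (n + 1))) := by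
    rintro ⟨f, v⟩ hf
    have hv := w.weight_add_bound_lt n v
    simp only [s, Finset.coe_product, Finset.coe_Icc, Finset.coe_univ, Set.mem_prod, Set.mem_Icc,
      Set.mem_univ, and_true, Finset.coe_Ico, Set.mem_Ico] at hf ⊢
    omega
  have hinj : Set.InjOn (fun z : ℤ × D => z.1 + w.weight n z.2) s :=
    (w.injOn_add_weight n).mono fun z hz => abs_le.2 (by simpa [s] using hz)
  have hcard := Finset.card_le_card_of_injOn _ hmaps hinj
  simp only [s, Finset.card_product, Int.card_Icc, Int.card_Ico, Finset.card_univ] at hcard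
  calc Fintype.card D * (2 * w.bound n + 1)
      = ((w.bound n : ℤ) + 1 - -w.bound n).toNat * Fintype.card D := by
        rw [mul_comm]; congr 1; omega
    _ ≤ _ := hcard
    _ = w.bound (n + 1) + w.bound n := by omega

theorem pow_card_le_bound [Fintype D] [Nontrivial D] (n : ℕ) :
    3 ^ n * Fintype.card D ^ n ≤ 2 ^ n * (2 * w.bound n + 1) := by
  induction n with
  | zero => simp
  | succ n ih =>
    have hcard : 2 ≤ Fintype.card D := Fintype.one_lt_card
    have hstep := w.card_mul_le_bound_succ_add n
    calc 3 ^ (n + 1) * Fintype.card D ^ (n + 1)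
        = 3 * Fintype.card D * (3 ^ n * Fintype.card D ^ n) := by ring
      _ ≤ 3 * Fintype.card D * (2 ^ n * (2 * w.bound n + 1)) := by gcongr
      _ = 2 ^ n * (3 * Fintype.card D * (2 * w.bound n + 1)) := by ring
      _ ≤ 2 ^ n * (2 * (2 * w.bound (n + 1) + 1)) :=
        Nat.mul_le_mul_left _ (by linarith [Nat.mul_le_mul_right (2 * w.bound n + 1) hcard])
      _ = 2 ^ (n + 1) * (2 * w.bound (n + 1) + 1) := by ring

/-- The total weight of the digits of `x` at the places below `n`. -/
def partialWeight (x : ℕ → D) (n : ℕ) : ℕ := ∑ i ∈ Finset.range n, w.weight i (x i)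

theorem partialWeight_succ (x : ℕ → D) (n : ℕ) :
    w.partialWeight x (n + 1) = w.partialWeight x n + w.weight n (x n) :=
  Finset.sum_range_succ _ _

theorem partialWeight_le_bound (x : ℕ → D) (n : ℕ) : w.partialWeight x n ≤ w.bound n := by
  induction n with
  | zero => exact Nat.zero_le _
  | succ n ih =>
    rw [partialWeight_succ]
    exact (add_comm _ _).trans_le
      ((Nat.add_le_add_left ih _).trans (w.weight_add_bound_lt n (x n)).le)

theorem abs_partialWeight_sub_le (x x' : ℕ → D) (n : ℕ) :
    |(w.partialWeight x' n : ℤ) - w.partialWeight x n| ≤ w.bound n := by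
  have hx := w.partialWeight_le_bound x n
  have hx' := w.partialWeight_le_bound x' n
  rw [abs_le]
  omega

theorem partialWeight_congr {x x' : ℕ → D} {n : ℕ} (h : ∀ i < n, x' i = x i) :
    w.partialWeight x' n = w.partialWeight x n :=
  Finset.sum_congr rfl fun i hi => by rw [h i (Finset.mem_range.1 hi)]

/-- The increase of weight when the digit at place `n` changes from `u` to `v`. -/
def jump (n : ℕ) (u v : D) : ℤ := w.weight n v - w.weight n u

/-- Up to an error coming from the places below `n`, the changes of weight from `u` to `u'` and
from `v` to `v'` at place `n` have ratio `p / q`. -/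
def NearlyProportional (p q n : ℕ) (u u' v v' : D) : Prop :=
  |q * w.jump n u u' - p * w.jump n v v'| ≤ (p + q) * w.bound n

/-- The sequence `x'` lies `k` units of time ahead of `x` in the same orbit. By the separation of
the weights this forces `x` and `x'` to agree from some place on. -/
def Displaced (x x' : ℕ → D) (k : ℤ) : Prop :=
  ∀ᶠ n in atTop, (w.partialWeight x' n : ℤ) = w.partialWeight x n + k

namespace Displaced

variable {w} {x y z : ℕ → D} {k l : ℤ}

theorem symm (h : w.Displaced x y k) : w.Displaced y x (-k) := by
  filter_upwards [h] with n hn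
  omega

theorem trans (h : w.Displaced x y k) (h' : w.Displaced y z l) : w.Displaced x z (k + l) := by
  filter_upwards [h, h'] with n hn hn'
  omega

theorem offset_eq_zero (h : w.Displaced x x k) : k = 0 := by
  obtain ⟨n, hn⟩ := h.exists
  omega

/-- Beyond a place `m` with `|k| ≤ bound m`, an equality of total weights descends one place: the
digits there have weights differing by at most `2 * bound n`, so they agree. -/
theorem partialWeight_eq {m : ℕ} (h : w.Displaced x y k) (hk : |k| ≤ w.bound m) :
    ∀ n ≥ m, (w.partialWeight y n : ℤ) = w.partialWeight x n + k := by
  refine forall_ge_of_eventually_of_succ h fun n hn hsucc => ?_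
  simp only [partialWeight_succ, Nat.cast_add] at hsucc
  have hlow := abs_le.1 (w.abs_partialWeight_sub_le x y n)
  have hbound : w.bound m ≤ w.bound n := w.bound_strictMono.monotone hn
  rw [abs_le] at hk
  have hdigit : y n = x n := w.eq_of_abs_weight_sub_le n _ _ (abs_le.2 (by omega))
  rw [hdigit] at hsucc
  omega

theorem apply_eq {m : ℕ} (h : w.Displaced x y k) (hk : |k| ≤ w.bound m) {n : ℕ} (hn : m ≤ n) :
    y n = x n := by
  have heq := h.partialWeight_eq hk n hn
  have hsucc := h.partialWeight_eq hk (n + 1) (hn.trans n.le_succ)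
  simp only [partialWeight_succ, Nat.cast_add] at hsucc
  refine w.eq_of_abs_weight_sub_le n _ _ (abs_le.2 ?_)
  omega

theorem eq_of_zero (h : w.Displaced x y 0) : y = x :=
  funext fun n => h.apply_eq (m := 0) (by simp) n.zero_le

theorem unique (h : w.Displaced x y k) (h' : w.Displaced x z k) : y = z :=
  eq_of_zero (by simpa using h'.symm.trans h)

theorem eventually_eq (h : w.Displaced x y k) : ∀ᶠ n in atTop, y n = x n := by
  have hk : |k| ≤ w.bound k.natAbs := by
    rw [Int.abs_eq_natAbs]
    exact_mod_cast w.bound_strictMono.le_apply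
  filter_upwards [eventually_ge_atTop k.natAbs] with n hn using h.apply_eq hk hn

end Displaced

variable {w} {x x' y y' : ℕ → D}

theorem displaced_of_forall_ge {N : ℕ} (h : ∀ i ≥ N, y i = x i) :
    w.Displaced x y (w.partialWeight y N - w.partialWeight x N) := by
  filter_upwards [eventually_ge_atTop N] with n hn
  induction n, hn using Nat.le_induction with
  | base => omega
  | succ n hn ih => rw [partialWeight_succ, partialWeight_succ, h n hn]; omega

theorem Displaced.refl (x : ℕ → D) : w.Displaced x x 0 := by
  simpa using displaced_of_forall_ge (w := w) (N := 0) fun i _ => (rfl : x i = x i)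

theorem displaced_single_add (x : ℕ → D) (n : ℕ) (v : D) :
    w.Displaced x (Pi.single n v + x) (w.jump n (x n) (v + x n)) := by
  have hne (i : ℕ) (hi : i ≠ n) : (Pi.single n v + x : ℕ → D) i = x i := by simp [hi]
  have h := displaced_of_forall_ge (w := w) fun i (hi : i ≥ n + 1) => hne i (by omega)
  simp only [partialWeight_succ, w.partialWeight_congr fun i hi => hne i (Nat.ne_of_lt hi)] at h
  simpa [jump] using h

theorem Displaced.eventually_sub_add {k : ℤ} (h : w.Displaced x x' k) :
    ∀ᶠ n in atTop, ∀ y ∈ cylinder x n, w.Displaced y (x' - x + y) k := by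
  obtain ⟨N, hN⟩ := eventually_atTop.1 h.eventually_eq
  filter_upwards [h, eventually_ge_atTop N] with n hk hn y hy
  have hlow : w.partialWeight (x' - x + y) n = w.partialWeight x' n :=
    w.partialWeight_congr fun i hi => by simp [mem_cylinder_iff.1 hy i hi]
  have hdisp := displaced_of_forall_ge (w := w) (x := y) (y := x' - x + y) (N := n)
    fun i hi => by simp [hN i (hn.trans hi)]
  rwa [hlow, w.partialWeight_congr (mem_cylinder_iff.1 hy), hk, add_sub_cancel_left] at hdisp

/-- The induction descends from a place beyond which the displacements have ratio exactly
`p / q`. -/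
theorem Displaced.nearlyProportional {p q m : ℕ} (hrigid : ∀ n ≥ m, ∀ u u' v v',
      w.NearlyProportional p q n u u' v v' → q * w.jump n u u' = p * w.jump n v v')
    {k : ℤ} (hx : w.Displaced x x' (p * k)) (hy : w.Displaced y y' (q * k)) {i : ℕ} (hi : m ≤ i) :
    w.NearlyProportional p q i (x i) (x' i) (y i) (y' i) := by
  let P (n : ℕ) : Prop := (q : ℤ) * (w.partialWeight x' n - w.partialWeight x n) =
    p * (w.partialWeight y' n - w.partialWeight y n)
  have hsmall (n : ℕ) (hn : P (n + 1)) :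
      w.NearlyProportional p q n (x n) (x' n) (y n) (y' n) := by
    have hjump : q * w.jump n (x n) (x' n) - p * w.jump n (y n) (y' n) =
        p * ((w.partialWeight y' n : ℤ) - w.partialWeight y n) -
          q * ((w.partialWeight x' n : ℤ) - w.partialWeight x n) := by
      simp only [P, partialWeight_succ, Nat.cast_add] at hn
      simp only [jump]
      linear_combination hn
    rw [NearlyProportional, hjump, add_mul]
    refine (abs_sub _ _).trans ?_
    rw [abs_mul, abs_mul, Nat.abs_cast, Nat.abs_cast]
    gcongr <;> exact w.abs_partialWeight_sub_le _ _ n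
  have hev : ∀ᶠ n in atTop, P n := by
    filter_upwards [hx, hy] with n hxn hyn
    simp only [P, hxn, hyn]
    ring
  have hP := forall_ge_of_eventually_of_succ hev fun n hn hsucc => by
    have hzero := hrigid n hn _ _ _ _ (hsmall n hsucc)
    simp only [P, partialWeight_succ, Nat.cast_add, jump] at hsucc hzero ⊢
    linear_combination hsucc - hzero
  exact hsmall i (hP _ (hi.trans i.le_succ))

end WeightSystem

/-- The space in which the orbits of a weight system are recorded: a point lists, at each time,
which digits occur at which places. -/
abbrev PhaseSpace (D : Type*) := ℤ → ℕ → D → Prop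

/-- Translation of time by `j`; the transformation of the theorem is `shift 1`. -/
def shift {D : Type*} (j : ℤ) : PhaseSpace D ≃ᵐ PhaseSpace D where
  toFun s k := s (k + j)
  invFun s k := s (k - j)
  left_inv s := by funext k; simp
  right_inv s := by funext k; simp
  measurable_toFun := measurable_pi_lambda _ fun k => measurable_pi_apply (k + j)
  measurable_invFun := measurable_pi_lambda _ fun k => measurable_pi_apply (k - j)

theorem shift_apply {D : Type*} (j : ℤ) (s : PhaseSpace D) (k : ℤ) : shift j s k = s (k + j) := rfl

theorem shift_zero {D : Type*} (s : PhaseSpace D) : shift 0 s = s := by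
  funext k
  rw [shift_apply, add_zero]

theorem shift_shift {D : Type*} (i j : ℤ) (s : PhaseSpace D) :
    shift i (shift j s) = shift (i + j) s := by
  funext k
  simp only [shift_apply, add_assoc]

theorem shift_iterate {D : Type*} (j : ℤ) (n : ℕ) :
    (shift j : PhaseSpace D → _)^[n] = shift (n * j) := by
  induction n with
  | zero => funext s; simp [shift_zero]
  | succ n ih =>
    funext s
    rw [iterate_succ_apply', ih, shift_shift, add_comm, Nat.cast_succ, add_one_mul]

/-- The points of the phase space at which the digits of `x` at the places below `m` are recorded
at time `0`. -/
def codeCylinder {D : Type*} (x : ℕ → D) (m : ℕ) : Set (PhaseSpace D) := {s | ∀ i < m, s 0 i (x i)}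

theorem measurableSet_codeCylinder {D : Type*} (x : ℕ → D) (m : ℕ) :
    MeasurableSet (codeCylinder x m) := by
  refine measurableSet_setOfPred.2 (Measurable.forall fun i => measurable_const.imp ?_)
  exact (measurable_pi_apply (x i)).comp ((measurable_pi_apply i).comp (measurable_pi_apply 0))

/-- The points which record a digit at time `0`. -/
def base (D : Type*) : Set (PhaseSpace D) := {s | ∃ v, s 0 0 v}

theorem measurableSet_base {D : Type*} [Countable D] : MeasurableSet (base D) :=
  measurableSet_setOfPred.2 (Measurable.exists fun v =>
    (measurable_pi_apply v).comp ((measurable_pi_apply 0).comp (measurable_pi_apply 0)))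

theorem codeCylinder_subset_base {D : Type*} (x : ℕ → D) {m : ℕ} (hm : 0 < m) :
    codeCylinder x m ⊆ base D :=
  fun _ hs => ⟨x 0, hs 0 hm⟩

namespace WeightSystem

variable {D : Type*} [AddCommGroup D] (w : WeightSystem D)

/-- The coding of digit sequences in the phase space: at time `k` it records the digits of the
sequence lying `k` units of time ahead, and nothing when there is no such sequence. -/
def code (x : ℕ → D) : PhaseSpace D := fun k n v => ∃ x', w.Displaced x x' k ∧ x' n = v

variable {w}

theorem Displaced.code_eq {x x' : ℕ → D} {k : ℤ} (h : w.Displaced x x' k) :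
    w.code x' = shift k (w.code x) := by
  funext j n v
  refine propext ⟨?_, ?_⟩
  · rintro ⟨y, hy, rfl⟩
    exact ⟨y, add_comm k j ▸ h.trans hy, rfl⟩
  · rintro ⟨y, hy, rfl⟩
    exact ⟨y, by simpa using h.symm.trans hy, rfl⟩

theorem code_zero_apply {x : ℕ → D} {n : ℕ} {v : D} : w.code x 0 n v ↔ x n = v := by
  refine ⟨?_, fun h => ⟨x, Displaced.refl x, h⟩⟩
  rintro ⟨x', hx', rfl⟩
  rw [hx'.eq_of_zero]

theorem code_mem_codeCylinder_iff {x y : ℕ → D} {m : ℕ} :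
    w.code x ∈ codeCylinder y m ↔ x ∈ cylinder y m := by
  simp only [codeCylinder, Set.mem_ofPred_eq, code_zero_apply, mem_cylinder_iff]

theorem shift_code_mem_base_iff {x : ℕ → D} {f : ℤ} :
    shift f (w.code x) ∈ base D ↔ ∃ x', w.Displaced x x' f := by
  simp [base, shift_apply, code]

theorem displaced_of_shift_code_eq {x y : ℕ → D} {k : ℤ} (h : shift k (w.code x) = w.code y) :
    w.Displaced x y k := by
  have hdigit (n : ℕ) : w.code x k n (y n) := by
    have := (code_zero_apply (w := w) (x := y) (n := n)).2 rfl
    rwa [← h, shift_apply, zero_add] at this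
  obtain ⟨x', hx', -⟩ := hdigit 0
  convert hx'
  funext n
  obtain ⟨z, hz, hzn⟩ := hdigit n
  rw [← hzn, hz.unique hx']

theorem code_injective : Injective w.code := fun x y h =>
  (displaced_of_shift_code_eq (k := 0) (by rw [shift_zero, h])).eq_of_zero.symm

variable (w)

theorem measurable_code [TopologicalSpace D] [DiscreteTopology D] [MeasurableSpace D]
    [OpensMeasurableSpace (ℕ → D)] : Measurable w.code := by
  refine measurable_pi_lambda _ fun k => measurable_pi_lambda _ fun n =>
    measurable_pi_lambda _ fun v => measurableSet_setOfPred.1 (IsOpen.measurableSet ?_)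
  rw [isOpen_iff_mem_nhds]
  rintro x ⟨x', hx', rfl⟩
  obtain ⟨m, hm, hnm⟩ := (hx'.eventually_sub_add.and (eventually_gt_atTop n)).exists
  refine mem_of_superset ((isOpen_cylinder _ x m).mem_nhds (self_mem_cylinder x m)) fun y hy =>
    ⟨_, hm y hy, ?_⟩
  simp [mem_cylinder_iff.1 hy n hnm]

theorem measurable_shift_code [TopologicalSpace D] [DiscreteTopology D] [MeasurableSpace D]
    [OpensMeasurableSpace (ℕ → D)] (f : ℤ) : Measurable (shift f ∘ w.code) :=
  (shift f).measurable.comp w.measurable_code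

end WeightSystem

/-- Normalized Haar measure on digit sequences: the digits are independent and uniform. -/
noncomputable def digitMeasure (D : Type*) [AddCommGroup D] [TopologicalSpace D]
    [DiscreteTopology D] [Finite D] [MeasurableSpace D] [BorelSpace D] : Measure (ℕ → D) :=
  Measure.addHaarMeasure ⊤

section DigitMeasure

theorem tendsto_pi_single_zero {D : Type*} [Zero D] [TopologicalSpace D] (v : ℕ → D) :
    Tendsto (fun n => (Pi.single n (v n) : ℕ → D)) atTop (𝓝 0) := by
  refine tendsto_pi_nhds.2 fun i => tendsto_const_nhds.congr' ?_
  filter_upwards [eventually_gt_atTop i] with n hn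
  simp [Pi.single_eq_of_ne hn.ne]

variable {D : Type*} [AddCommGroup D] [TopologicalSpace D] [DiscreteTopology D]
  [MeasurableSpace D] [BorelSpace D]

section Finite

variable [Finite D]

instance : IsProbabilityMeasure (digitMeasure D) :=
  ⟨by simpa [digitMeasure] using
    Measure.addHaarMeasure_self (K₀ := (⊤ : TopologicalSpace.PositiveCompacts (ℕ → D)))⟩

instance : (digitMeasure D).IsAddHaarMeasure := by unfold digitMeasure; infer_instance

instance [Nontrivial D] : NullSingletonClass (digitMeasure D) := by
  obtain ⟨v, hv⟩ := exists_ne (0 : D)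
  have hne : ∀ᶠ n in atTop, (Pi.single n v : ℕ → D) ∈ ({0}ᶜ : Set (ℕ → D)) :=
    Eventually.of_forall fun n => by simpa using hv
  have : (𝓝[≠] (0 : ℕ → D)).NeBot :=
    (tendsto_nhdsWithin_iff.2 ⟨tendsto_pi_single_zero fun _ => v, hne⟩).neBot
  infer_instance

end Finite

variable [Fintype D]

theorem restrict_digitMeasure_cylinder (n : ℕ) :
    (digitMeasure D).restrict (cylinder 0 n) =
      ∑ v, ((digitMeasure D).restrict (cylinder 0 (n + 1))).map (Pi.single n v + ·) := by
  have hpre (v : D) : (Pi.single n v + · : (ℕ → D) → _) ⁻¹' cylinder (Pi.single n v) (n + 1) =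
      cylinder 0 (n + 1) := by
    ext x
    simp [mem_cylinder_iff]
  have hmeas (v : D) : MeasurableSet (cylinder (Pi.single n v : ℕ → D) (n + 1)) :=
    (isOpen_cylinder _ _ _).measurableSet
  have hdisj : Pairwise (Disjoint on fun v : D => cylinder (Pi.single n v : ℕ → D) (n + 1)) := by
    refine fun u v huv => Set.disjoint_left.2 fun x hu hv => huv ?_
    simpa using (mem_cylinder_iff.1 hu n n.lt_succ_self).symm.trans
      (mem_cylinder_iff.1 hv n n.lt_succ_self)
  rw [← iUnion_cylinder_update]
  refine (Measure.restrict_iUnion hdisj hmeas).trans ?_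
  rw [Measure.sum_fintype]
  refine Finset.sum_congr rfl fun v _ => ?_
  rw [← hpre v, ((measurePreserving_add_left (digitMeasure D) (Pi.single n v)).restrict_preimage
    (hmeas v)).map_eq]

theorem pow_card_mul_digitMeasure_cylinder (n : ℕ) :
    (Fintype.card D : ℝ≥0∞) ^ n * digitMeasure D (cylinder 0 n) = 1 := by
  induction n with
  | zero => simp
  | succ n ih =>
    have hsplit := congrArg (fun ν : Measure (ℕ → D) => ν Set.univ)
      (restrict_digitMeasure_cylinder n)
    simp only [Measure.restrict_apply_univ, Measure.finsetSum_apply,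
      Measure.map_apply (measurable_const_add _) MeasurableSet.univ, Set.preimage_univ,
      Finset.sum_const, Finset.card_univ, nsmul_eq_mul] at hsplit
    rw [pow_succ, mul_assoc, ← hsplit, ih]

end DigitMeasure

theorem iSup_measure_apply {α : Type*} [MeasurableSpace α] {m : ℕ → Measure α} (hm : Monotone m)
    {s : Set α} (hs : MeasurableSet s) : (⨆ n, m n) s = ⨆ n, m n s := by
  let ν : Measure α := Measure.ofMeasurable (fun s _ => ⨆ n, m n s) (by simp) fun f hf hdisj => by
    simp only [measure_iUnion hdisj hf, ← lintegral_count]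
    exact (lintegral_iSup (fun n => measurable_from_top) fun n k hnk i => hm hnk (f i)).symm
  have hν {s : Set α} (hs : MeasurableSet s) : ν s = ⨆ n, m n s := Measure.ofMeasurable_apply s hs
  refine le_antisymm ?_ (iSup_le fun n => le_iSup m n s)
  rw [← hν hs]
  refine iSup_le (fun n => Measure.le_iff.2 fun t ht => ?_) s
  rw [hν ht]
  exact le_iSup (fun n => m n t) n

namespace WeightSystem

section InvariantMeasure

variable {D : Type*} [AddCommGroup D] [Fintype D] [TopologicalSpace D] [DiscreteTopology D]
  [MeasurableSpace D] [BorelSpace D] (w : WeightSystem D)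

/-- The distribution of the code, shifted by `f`, of a sequence whose first `n` digits vanish and
whose other digits are random. -/
noncomputable def layer (n : ℕ) (f : ℤ) : Measure (PhaseSpace D) :=
  ((digitMeasure D).restrict (cylinder 0 n)).map (shift f ∘ w.code)

theorem map_shift_layer (n : ℕ) (f j : ℤ) : (w.layer n f).map (shift j) = w.layer n (f + j) := by
  rw [layer, Measure.map_map (shift j).measurable (w.measurable_shift_code f), ← comp_assoc]
  congr 2
  funext s
  rw [comp_apply, shift_shift, add_comm]

theorem layer_eq_sum (n : ℕ) (f : ℤ) :
    w.layer n f = ∑ v, w.layer (n + 1) (f + w.weight n v) := by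
  simp only [layer]
  rw [restrict_digitMeasure_cylinder,
    Measure.map_finset_sum (w.measurable_shift_code f).aemeasurable]
  refine Finset.sum_congr rfl fun v _ => ?_
  rw [Measure.map_map (w.measurable_shift_code f) (measurable_const_add _)]
  refine Measure.map_congr ?_
  filter_upwards [ae_restrict_mem (isOpen_cylinder _ _ _).measurableSet] with x hx
  have hx0 : x n = 0 := mem_cylinder_iff.1 hx n n.lt_succ_self
  simp [(displaced_single_add (w := w) x n v).code_eq, shift_shift, hx0, jump, w.weight_zero]

theorem layer_apply_le (n : ℕ) (f : ℤ) (s : Set (PhaseSpace D)) :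
    w.layer n f s ≤ digitMeasure D (cylinder 0 n) := by
  refine (measure_mono (Set.subset_univ s)).trans_eq ?_
  rw [layer, Measure.map_apply (w.measurable_shift_code f) MeasurableSet.univ, Set.preimage_univ,
    Measure.restrict_apply_univ]

theorem layer_le_map (n : ℕ) (f : ℤ) :
    w.layer n f ≤ (digitMeasure D).map (shift f ∘ w.code) :=
  Measure.map_mono Measure.restrict_le_self (w.measurable_shift_code f)

/-- The sum of the layers that belong to displacements bounded by `bound n`. -/
noncomputable def stage (n : ℕ) : Measure (PhaseSpace D) :=
  ∑ f ∈ Finset.Icc (-w.bound n : ℤ) (w.bound n), w.layer n f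

theorem map_shift_stage_le (n : ℕ) {j : ℤ} (hj : |j| ≤ 1) :
    (w.stage n).map (shift j) ≤ w.stage (n + 1) := by
  rw [stage, Measure.map_finset_sum (shift j).measurable.aemeasurable]
  simp only [map_shift_layer]
  simp only [w.layer_eq_sum n]
  rw [← Finset.sum_product', stage]
  refine Measure.le_iff.2 fun s _ => ?_
  simp only [Measure.finsetSum_apply]
  have hinj : Set.InjOn (fun z : ℤ × D => z.1 + j + w.weight n z.2)
      (Finset.Icc (-w.bound n : ℤ) (w.bound n) ×ˢ Finset.univ : Finset (ℤ × D)) := by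
    refine fun y hy z hz heq => w.injOn_add_weight n ?_ ?_ ?_
    · exact abs_le.2 (by simpa using hy)
    · exact abs_le.2 (by simpa using hz)
    · simpa only [add_right_comm _ j, add_left_inj] using heq
  rw [← Finset.sum_image (f := fun f => w.layer (n + 1) f s) hinj]
  refine Finset.sum_le_sum_of_subset (Finset.image_subset_iff.2 fun ⟨f, v⟩ hf => ?_)
  have hv := w.weight_add_bound_lt n v
  rw [abs_le] at hj
  simp only [Finset.mem_product, Finset.mem_Icc, Finset.mem_univ, and_true] at hf ⊢
  omega

theorem stage_mono : Monotone w.stage :=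
  monotone_nat_of_le_succ fun n => by
    simpa [funext shift_zero] using w.map_shift_stage_le n (j := 0) (by simp)

/-- The shift-invariant measure carried by the codes of digit sequences and their shifts. -/
noncomputable def invariantMeasure : Measure (PhaseSpace D) := ⨆ n, w.stage n

theorem invariantMeasure_apply {s : Set (PhaseSpace D)} (hs : MeasurableSet s) :
    w.invariantMeasure s = ⨆ n, w.stage n s :=
  iSup_measure_apply w.stage_mono hs

theorem map_shift_invariantMeasure_le {j : ℤ} (hj : |j| ≤ 1) :
    w.invariantMeasure.map (shift j) ≤ w.invariantMeasure := by
  refine Measure.le_iff.2 fun s hs => ?_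
  rw [Measure.map_apply (shift j).measurable hs,
    w.invariantMeasure_apply ((shift j).measurable hs)]
  refine iSup_le fun n => ?_
  rw [← Measure.map_apply (shift j).measurable hs]
  exact (w.map_shift_stage_le n hj s).trans (le_iSup w.stage (n + 1) s)

theorem measurePreserving_shift_one :
    MeasurePreserving (shift 1) w.invariantMeasure w.invariantMeasure := by
  refine ⟨(shift 1).measurable, le_antisymm (w.map_shift_invariantMeasure_le (by simp)) ?_⟩
  have h := Measure.map_mono (w.map_shift_invariantMeasure_le (j := -1) (by simp))
    (shift 1).measurable
  rwa [Measure.map_map (shift 1).measurable (shift (-1)).measurable,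
    show (shift 1 : PhaseSpace D → _) ∘ shift (-1) = id from
      funext fun s => by simp [shift_shift, shift_zero], Measure.map_id] at h

theorem measurePreserving_shift (j : ℤ) :
    MeasurePreserving (shift j) w.invariantMeasure w.invariantMeasure := by
  have hnat (n : ℕ) : MeasurePreserving (shift n) w.invariantMeasure w.invariantMeasure := by
    simpa [shift_iterate] using w.measurePreserving_shift_one.iterate n
  obtain ⟨n, rfl | rfl⟩ := j.eq_nat_or_neg
  · exact hnat n
  · exact (hnat n).symm (shift n)

theorem map_code_le_invariantMeasure : (digitMeasure D).map w.code ≤ w.invariantMeasure := by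
  refine le_trans (le_of_eq ?_)
    ((Measure.le_iff'.2 fun s => ?_ : w.layer 0 0 ≤ w.stage 0).trans (le_iSup w.stage 0))
  · simp [layer, show (shift 0 : PhaseSpace D → _) = id from funext shift_zero]
  · rw [stage, Measure.finsetSum_apply]
    exact Finset.single_le_sum (f := fun f => w.layer 0 f s) (fun _ _ => zero_le) (by simp)

theorem invariantMeasure_absolutelyContinuous :
    w.invariantMeasure ≪ Measure.sum fun f : ℤ => (digitMeasure D).map (shift f ∘ w.code) := by
  refine Measure.AbsolutelyContinuous.mk fun s hs h => ?_
  rw [Measure.sum_apply _ hs, ENNReal.tsum_eq_zero] at h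
  simp only [w.invariantMeasure_apply hs, ENNReal.iSup_eq_zero, stage, Measure.finsetSum_apply]
  exact fun n => Finset.sum_eq_zero fun f _ => le_antisymm ((w.layer_le_map n f s).trans_eq (h f))
    zero_le

theorem invariantMeasure_eq_zero {s : Set (PhaseSpace D)} (hs : MeasurableSet s)
    (h : ∀ f : ℤ, digitMeasure D (shift f ∘ w.code ⁻¹' s) = 0) : w.invariantMeasure s = 0 := by
  refine w.invariantMeasure_absolutelyContinuous ?_
  rw [Measure.sum_apply _ hs, ENNReal.tsum_eq_zero]
  intro f
  rw [Measure.map_apply (w.measurable_shift_code f) hs, h f]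

theorem stage_univ (n : ℕ) :
    w.stage n Set.univ = (2 * w.bound n + 1) * digitMeasure D (cylinder 0 n) := by
  have hlayer (f : ℤ) : w.layer n f Set.univ = digitMeasure D (cylinder 0 n) := by
    simp [layer, Measure.map_apply (w.measurable_shift_code f)]
  rw [stage, Measure.finsetSum_apply, Finset.sum_congr rfl fun f _ => hlayer f, Finset.sum_const,
    Int.card_Icc, show ((w.bound n : ℤ) + 1 - -w.bound n).toNat = 2 * w.bound n + 1 by omega,
    nsmul_eq_mul]
  push_cast
  rfl

theorem invariantMeasure_univ [Nontrivial D] : w.invariantMeasure Set.univ = ⊤ := by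
  have hmass (n : ℕ) : (3 / 2 : ℝ≥0∞) ^ n ≤ w.invariantMeasure Set.univ := by
    have hgrowth : (3 : ℝ≥0∞) ^ n * Fintype.card D ^ n ≤ 2 ^ n * (2 * w.bound n + 1) := by
      exact_mod_cast w.pow_card_le_bound n
    refine le_trans ?_ (le_iSup w.stage n Set.univ)
    rw [stage_univ, div_eq_mul_inv, mul_pow, ← ENNReal.inv_pow, ← div_eq_mul_inv,
      ENNReal.div_le_iff' (by simp) (by simp)]
    calc (3 : ℝ≥0∞) ^ n
        = 3 ^ n * Fintype.card D ^ n * digitMeasure D (cylinder 0 n) := by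
          rw [mul_assoc, pow_card_mul_digitMeasure_cylinder, mul_one]
      _ ≤ 2 ^ n * (2 * w.bound n + 1) * digitMeasure D (cylinder 0 n) := by gcongr
      _ = _ := mul_assoc _ _ _
  have htop : Tendsto (fun n => (3 / 2 : ℝ≥0∞) ^ n) atTop (𝓝 ⊤) :=
    ENNReal.tendsto_pow_atTop_nhds_top_iff.2
      ((ENNReal.lt_div_iff_mul_lt (by simp) (by simp)).2 (by norm_num))
  exact top_le_iff.1 (le_of_tendsto' htop hmass)

theorem stage_base_le_one (n : ℕ) : w.stage n (base D) ≤ 1 := by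
  let S : Finset ℤ := Finset.univ.image fun u : Fin n → D => ∑ i : Fin n, (w.weight i (u i) : ℤ)
  have hcard : S.card ≤ Fintype.card D ^ n := Finset.card_image_le.trans (by simp)
  have hnull (f : ℤ) (hf : f ∈ Finset.Icc (-w.bound n : ℤ) (w.bound n)) (hfS : f ∉ S) :
      w.layer n f (base D) = 0 := by
    rw [layer, Measure.map_apply (w.measurable_shift_code f) measurableSet_base,
      Measure.restrict_apply' (isOpen_cylinder _ _ _).measurableSet]
    refine measure_mono_null (fun x ⟨hx, hx0⟩ => hfS ?_) measure_empty
    obtain ⟨x', hx'⟩ := shift_code_mem_base_iff.1 hx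
    have hweight := hx'.partialWeight_eq (abs_le.2 (Finset.mem_Icc.1 hf)) n le_rfl
    rw [w.partialWeight_congr (mem_cylinder_iff.1 hx0)] at hweight
    simp only [partialWeight, Pi.zero_apply, w.weight_zero, Finset.sum_const_zero,
      Nat.cast_zero, zero_add, Finset.sum_range, Nat.cast_sum] at hweight
    exact Finset.mem_image.2 ⟨fun i => x' i, Finset.mem_univ _, hweight⟩
  calc w.stage n (base D)
      = ∑ f ∈ (Finset.Icc (-w.bound n : ℤ) (w.bound n)).filter (· ∈ S), w.layer n f (base D) := by
        rw [stage, Measure.finsetSum_apply, Finset.sum_filter_of_ne]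
        exact fun f hf hne => by_contra fun hfS => hne (hnull f hf hfS)
    _ ≤ ∑ f ∈ S, w.layer n f (base D) :=
        Finset.sum_le_sum_of_subset fun f hf => (Finset.mem_filter.1 hf).2
    _ ≤ S.card * digitMeasure D (cylinder 0 n) := by
        rw [← nsmul_eq_mul]
        exact Finset.sum_le_card_nsmul _ _ _ fun f _ => w.layer_apply_le n f _
    _ ≤ (Fintype.card D : ℝ≥0∞) ^ n * digitMeasure D (cylinder 0 n) := by
        gcongr
        exact_mod_cast hcard
    _ = 1 := pow_card_mul_digitMeasure_cylinder n

instance : SigmaFinite w.invariantMeasure := by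
  have hbase : w.invariantMeasure (base D) < ⊤ := by
    rw [w.invariantMeasure_apply measurableSet_base]
    exact (iSup_le w.stage_base_le_one).trans_lt ENNReal.one_lt_top
  let Z : Set (PhaseSpace D) := ⋂ j : ℤ, (shift j ⁻¹' base D)ᶜ
  have hZ : w.invariantMeasure Z = 0 := by
    have hmeas : MeasurableSet Z :=
      MeasurableSet.iInter fun j => ((shift j).measurable measurableSet_base).compl
    refine w.invariantMeasure_eq_zero hmeas fun f =>
      measure_mono_null (fun x hx => Set.mem_iInter.1 hx (-f) ?_) measure_empty
    rw [Set.mem_preimage, comp_apply, shift_shift]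
    exact shift_code_mem_base_iff.2 ⟨x, by simpa using Displaced.refl x⟩
  refine Measure.sigmaFinite_of_countable
    (S := insert Z (Set.range fun j : ℤ => shift j ⁻¹' base D))
    ((Set.countable_range _).insert _) ?_ ?_
  · rintro s (rfl | ⟨j, rfl⟩)
    · simp [hZ]
    · rwa [(w.measurePreserving_shift j).measure_preimage measurableSet_base.nullMeasurableSet]
  · refine Set.eq_univ_iff_forall.2 fun s => ?_
    by_cases hs : s ∈ Z
    · exact ⟨Z, Set.mem_insert _ _, hs⟩
    · obtain ⟨j, hj⟩ : ∃ j : ℤ, s ∈ shift j ⁻¹' base D := by simpa [Z] using hs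
      exact ⟨_, Set.mem_insert_of_mem _ ⟨j, rfl⟩, hj⟩

instance [Nontrivial D] : NullSingletonClass w.invariantMeasure where
  measure_singleton s :=
    w.invariantMeasure_eq_zero (measurableSet_singleton s) fun f =>
      (Set.subsingleton_singleton.preimage
        ((shift f).injective.comp code_injective)).measure_zero _

end InvariantMeasure

end WeightSystem

/-- The transformation of pairs which shifts the coordinates by `f.1` and `f.2`; the
transformation `T ^ p × T ^ q` of the theorem is `pairShift (p, q)`. -/
def pairShift {D : Type*} (f : ℤ × ℤ) : PhaseSpace D × PhaseSpace D → PhaseSpace D × PhaseSpace D :=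
  Prod.map (shift f.1) (shift f.2)

theorem measurable_pairShift {D : Type*} (f : ℤ × ℤ) :
    Measurable (pairShift f : PhaseSpace D × PhaseSpace D → _) :=
  (shift f.1).measurable.prodMap (shift f.2).measurable

theorem pairShift_zero {D : Type*} :
    (pairShift 0 : PhaseSpace D × PhaseSpace D → PhaseSpace D × PhaseSpace D) = id :=
  funext fun _ => Prod.ext (shift_zero _) (shift_zero _)

theorem pairShift_pairShift {D : Type*} (f g : ℤ × ℤ) (s : PhaseSpace D × PhaseSpace D) :
    pairShift f (pairShift g s) = pairShift (f + g) s :=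
  Prod.ext (shift_shift _ _ _) (shift_shift _ _ _)

theorem pairShift_comp {D : Type*} (f g : ℤ × ℤ) :
    (pairShift f ∘ pairShift g : PhaseSpace D × PhaseSpace D → _) = pairShift (f + g) :=
  funext (pairShift_pairShift f g)

theorem pairShift_iterate {D : Type*} (f : ℤ × ℤ) (n : ℕ) :
    (pairShift f : PhaseSpace D × PhaseSpace D → _)^[n] = pairShift (n • f) := by
  induction n with
  | zero => simp [pairShift_zero]
  | succ n ih => rw [iterate_succ, ih, pairShift_comp, succ_nsmul]

namespace WeightSystem

section Pairs

variable {D : Type*} [AddCommGroup D] {w : WeightSystem D}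

variable (w) in
/-- The pair of the codes of two digit sequences. -/
def pairCode : (ℕ → D) × (ℕ → D) → PhaseSpace D × PhaseSpace D := Prod.map w.code w.code

variable (w) in
theorem measurable_pairCode [TopologicalSpace D] [DiscreteTopology D] [MeasurableSpace D]
    [OpensMeasurableSpace (ℕ → D)] : Measurable w.pairCode :=
  w.measurable_code.prodMap w.measurable_code

theorem pairCode_eq {z z' : (ℕ → D) × (ℕ → D)} {f : ℤ × ℤ} (h₁ : w.Displaced z.1 z'.1 f.1)
    (h₂ : w.Displaced z.2 z'.2 f.2) : w.pairCode z' = pairShift f (w.pairCode z) :=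
  Prod.ext h₁.code_eq h₂.code_eq

theorem pairCode_mem_codeCylinder_prod_iff {x y : ℕ → D} {k m : ℕ} {z : (ℕ → D) × (ℕ → D)} :
    w.pairCode z ∈ codeCylinder x k ×ˢ codeCylinder y m ↔ z ∈ cylinder x k ×ˢ cylinder y m :=
  and_congr code_mem_codeCylinder_iff code_mem_codeCylinder_iff

theorem exists_displaced_of_pairShift_mem_base {z : (ℕ → D) × (ℕ → D)} {f : ℤ × ℤ}
    (h : pairShift f (w.pairCode z) ∈ base D ×ˢ base D) :
    ∃ z' : (ℕ → D) × (ℕ → D), w.Displaced z.1 z'.1 f.1 ∧ w.Displaced z.2 z'.2 f.2 := by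
  obtain ⟨x, hx⟩ := shift_code_mem_base_iff.1 h.1
  obtain ⟨y, hy⟩ := shift_code_mem_base_iff.1 h.2
  exact ⟨(x, y), hx, hy⟩

theorem exists_nearlyProportional {p q m : ℕ} (hrigid : ∀ n ≥ m, ∀ u u' v v',
      w.NearlyProportional p q n u u' v v' → q * w.jump n u u' = p * w.jump n v v')
    {z : (ℕ → D) × (ℕ → D)} {k : ℤ}
    (h : pairShift (k • ((p : ℤ), (q : ℤ))) (w.pairCode z) ∈ base D ×ˢ base D) :
    ∃ z' : (ℕ → D) × (ℕ → D), w.pairCode z' = pairShift (k • ((p : ℤ), (q : ℤ))) (w.pairCode z) ∧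
      w.Displaced z.1 z'.1 (p * k) ∧
      ∀ i ≥ m, w.NearlyProportional p q i (z.1 i) (z'.1 i) (z.2 i) (z'.2 i) := by
  obtain ⟨z', h₁, h₂⟩ := exists_displaced_of_pairShift_mem_base h
  refine ⟨z', pairCode_eq h₁ h₂, ?_⟩
  simp only [Prod.smul_mk, smul_eq_mul, mul_comm k] at h₁ h₂
  exact ⟨h₁, fun i hi => Displaced.nearlyProportional hrigid h₁ h₂ hi⟩

end Pairs

section PairMeasure

variable {D : Type*} [AddCommGroup D] [Fintype D] [TopologicalSpace D] [DiscreteTopology D]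
  [MeasurableSpace D] [BorelSpace D] (w : WeightSystem D)

/-- The square of the invariant measure. -/
noncomputable abbrev pairMeasure : Measure (PhaseSpace D × PhaseSpace D) :=
  w.invariantMeasure.prod w.invariantMeasure

theorem measurePreserving_pairShift (f : ℤ × ℤ) :
    MeasurePreserving (pairShift f) w.pairMeasure w.pairMeasure :=
  (w.measurePreserving_shift f.1).prod (w.measurePreserving_shift f.2)

theorem quasiMeasurePreserving_pairCode :
    Measure.QuasiMeasurePreserving w.pairCode ((digitMeasure D).prod (digitMeasure D))
      w.pairMeasure := by
  have hac := w.map_code_le_invariantMeasure.absolutelyContinuous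
  refine ⟨w.measurable_pairCode, ?_⟩
  rw [pairCode, ← Measure.map_prod_map _ _ w.measurable_code w.measurable_code]
  exact hac.prod hac

theorem pairMeasure_pos {B : Set (PhaseSpace D × PhaseSpace D)}
    (h : 0 < (digitMeasure D).prod (digitMeasure D) (w.pairCode ⁻¹' B)) : 0 < w.pairMeasure B :=
  pos_iff_ne_zero.2 fun h0 => h.ne' (w.quasiMeasurePreserving_pairCode.preimage_null h0)

theorem pairMeasure_codeCylinder_prod_pos (x y : ℕ → D) (k m : ℕ) :
    0 < w.pairMeasure (codeCylinder x k ×ˢ codeCylinder y m) := by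
  refine w.pairMeasure_pos ?_
  rw [show w.pairCode ⁻¹' (codeCylinder x k ×ˢ codeCylinder y m) = cylinder x k ×ˢ cylinder y m
    from Set.ext fun z => pairCode_mem_codeCylinder_prod_iff]
  exact ((isOpen_cylinder _ x k).prod (isOpen_cylinder _ y m)).measure_pos _
    ⟨(x, y), self_mem_cylinder x k, self_mem_cylinder y m⟩

theorem pairMeasure_eq_zero {B : Set (PhaseSpace D × PhaseSpace D)} (hB : MeasurableSet B)
    (h : ∀ f, (digitMeasure D).prod (digitMeasure D) (pairShift f ∘ w.pairCode ⁻¹' B) = 0) :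
    w.pairMeasure B = 0 := by
  refine (w.invariantMeasure_absolutelyContinuous.prod w.invariantMeasure_absolutelyContinuous) ?_
  rw [Measure.prod_sum, Measure.sum_apply _ hB, ENNReal.tsum_eq_zero]
  rintro ⟨f, f'⟩
  rw [Measure.map_prod_map _ _ (w.measurable_shift_code f) (w.measurable_shift_code f'),
    Measure.map_apply ((w.measurable_shift_code f).prodMap (w.measurable_shift_code f')) hB]
  exact h (f, f')

theorem pairMeasure_eq_zero_of_subset_base {B : Set (PhaseSpace D × PhaseSpace D)}
    (hB : MeasurableSet B) (hsub : B ⊆ base D ×ˢ base D) (h : ∀ z, w.pairCode z ∉ B) :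
    w.pairMeasure B = 0 := by
  refine w.pairMeasure_eq_zero hB fun f => measure_mono_null (fun z hz => ?_) measure_empty
  obtain ⟨z', h₁, h₂⟩ := exists_displaced_of_pairShift_mem_base (hsub hz)
  exact h z' (pairCode_eq h₁ h₂ ▸ hz)

theorem eventually_pairMeasure_pos_inter_preimage {B : Set (PhaseSpace D × PhaseSpace D)}
    (hB : MeasurableSet B) (hpos : 0 < w.pairMeasure B) (u u' v v' : D) :
    ∀ᶠ n in atTop,
      0 < w.pairMeasure (B ∩ pairShift (w.jump n u u', w.jump n v v') ⁻¹' B) := by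
  obtain ⟨f, hf⟩ : ∃ f,
      0 < (digitMeasure D).prod (digitMeasure D) (pairShift f ∘ w.pairCode ⁻¹' B) := by
    by_contra! hnull
    exact hpos.ne' (w.pairMeasure_eq_zero hB fun f => nonpos_iff_eq_zero.1 (hnull f))
  let single (z : D × D) (n : ℕ) : (ℕ → D) × (ℕ → D) := (Pi.single n z.1, Pi.single n z.2)
  have hsingle (z : D × D) : Tendsto (single z) atTop (𝓝 0) :=
    (tendsto_pi_single_zero fun _ => z.1).prodMk_nhds (tendsto_pi_single_zero fun _ => z.2)
  filter_upwards [eventually_measure_pos_inter_preimage_const_add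
    ((digitMeasure D).prod (digitMeasure D))
    (((measurable_pairShift f).comp w.measurable_pairCode) hB) hf
    (E := fun n => {z | z.1 n = u ∧ z.2 n = v}) (hsingle (u' - u, v' - v)) hsingle
    fun n z => ⟨(u - z.1 n, v - z.2 n), by simp [single]⟩] with n hn
  have hshift := (w.measurePreserving_pairShift f).quasiMeasurePreserving.comp
    w.quasiMeasurePreserving_pairCode
  refine pos_iff_ne_zero.2 fun h0 =>
    hn.ne' (measure_mono_null ?_ (hshift.preimage_null h0))
  rintro z ⟨⟨hz, hu, hv⟩, hz'⟩
  have h₁ := displaced_single_add (w := w) z.1 n (u' - u)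
  have h₂ := displaced_single_add (w := w) z.2 n (v' - v)
  rw [hu, sub_add_cancel] at h₁
  rw [hv, sub_add_cancel] at h₂
  have hcode := pairCode_eq (z' := single (u' - u, v' - v) n + z)
    (f := (w.jump n u u', w.jump n v v')) h₁ h₂
  refine ⟨hz, ?_⟩
  simp only [Set.mem_preimage, comp_apply, hcode, pairShift_pairShift] at hz' ⊢
  rwa [add_comm]

/-- The displacements under which a set of pairs is invariant up to null sets. -/
def aeStabilizer (A : Set (PhaseSpace D × PhaseSpace D)) : AddSubgroup (ℤ × ℤ) where
  carrier := {f | pairShift f ⁻¹' A =ᵐ[w.pairMeasure] A}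
  zero_mem' := by rw [Set.mem_ofPred_eq, pairShift_zero, Set.preimage_id]; exact EventuallyEq.rfl
  add_mem' {f g} hf hg := by
    rw [Set.mem_ofPred_eq, ← pairShift_comp, Set.preimage_comp]
    exact ((w.measurePreserving_pairShift g).quasiMeasurePreserving.preimage_ae_eq hf).trans hg
  neg_mem' {f} hf := by
    have h := (w.measurePreserving_pairShift (-f)).quasiMeasurePreserving.preimage_ae_eq hf
    rw [← Set.preimage_comp, pairShift_comp, add_neg_cancel, pairShift_zero, Set.preimage_id] at h
    exact h.symm

variable {w} {A : Set (PhaseSpace D × PhaseSpace D)}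

theorem mem_aeStabilizer {f : ℤ × ℤ} :
    f ∈ w.aeStabilizer A ↔ pairShift f ⁻¹' A =ᵐ[w.pairMeasure] A := Iff.rfl

theorem aeStabilizer_compl : w.aeStabilizer Aᶜ = w.aeStabilizer A := by
  ext f
  simp only [mem_aeStabilizer, Set.preimage_compl]
  exact ⟨fun h => by simpa using h.compl, fun h => h.compl⟩

theorem measure_diff_preimage_pairShift_eq_zero (hA : MeasurableSet A) {f : ℤ × ℤ}
    (hrec : ∀ B, MeasurableSet B → 0 < w.pairMeasure B →
      ∃ g ∈ w.aeStabilizer A, 0 < w.pairMeasure (B ∩ pairShift (g + f) ⁻¹' B)) :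
    w.pairMeasure (A \ pairShift f ⁻¹' A) = 0 := by
  by_contra hne
  obtain ⟨g, hg, hpos⟩ := hrec _ (hA.diff (measurable_pairShift f hA)) (pos_iff_ne_zero.2 hne)
  have hinv := (w.measurePreserving_pairShift f).quasiMeasurePreserving.preimage_ae_eq hg
  refine hpos.ne' (measure_mono_null ?_ (ae_iff.1 hinv.mem_iff))
  rintro s ⟨⟨-, hs⟩, hs', -⟩ hiff
  exact hs (hiff.1 (by rwa [← pairShift_pairShift] at hs'))

theorem mem_aeStabilizer_of_recurrent (hA : MeasurableSet A) {f : ℤ × ℤ}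
    (hrec : ∀ B, MeasurableSet B → 0 < w.pairMeasure B →
      ∃ g ∈ w.aeStabilizer A, 0 < w.pairMeasure (B ∩ pairShift (g + f) ⁻¹' B)) :
    f ∈ w.aeStabilizer A := by
  refine ae_eq_set.2 ⟨?_, measure_diff_preimage_pairShift_eq_zero hA hrec⟩
  rw [← aeStabilizer_compl] at hrec
  simpa [Set.sdiff_eq, Set.inter_comm] using
    measure_diff_preimage_pairShift_eq_zero hA.compl hrec

/-- Pairs of sequences which differ in finitely many digits lie in the same orbit, and the
translations of digit sequences by finitely supported ones are dense. -/
theorem measure_eq_zero_or_compl_of_aeStabilizer_eq_top (hA : MeasurableSet A)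
    (htop : w.aeStabilizer A = ⊤) : w.pairMeasure A = 0 ∨ w.pairMeasure Aᶜ = 0 := by
  have hae : ∀ᵐ z ∂((digitMeasure D).prod (digitMeasure D)), ∀ f,
      pairShift f (w.pairCode z) ∈ A ↔ w.pairCode z ∈ A :=
    w.quasiMeasurePreserving_pairCode.ae (ae_all_iff.2 fun f =>
      (mem_aeStabilizer.1 (htop ▸ AddSubgroup.mem_top f)).mem_iff)
  have hshift (f : ℤ × ℤ) : pairShift f ∘ w.pairCode ⁻¹' A
      =ᵐ[(digitMeasure D).prod (digitMeasure D)] w.pairCode ⁻¹' A := by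
    filter_upwards [hae] with z hz using propext (hz f)
  have htranslate (g : (ℕ → D) × (ℕ → D)) (N : ℕ) (hN : ∀ i ≥ N, g.1 i = 0 ∧ g.2 i = 0) :
      (g + ·) ⁻¹' (w.pairCode ⁻¹' A)
        =ᵐ[(digitMeasure D).prod (digitMeasure D)] w.pairCode ⁻¹' A := by
    filter_upwards [hae] with z hz
    have hcode := pairCode_eq (w := w) (z := z) (z' := g + z) (f := (_, _))
      (displaced_of_forall_ge (N := N) fun i hi => by simp [(hN i hi).1])
      (displaced_of_forall_ge (N := N) fun i hi => by simp [(hN i hi).2])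
    exact propext ((iff_of_eq (congrArg (· ∈ A) hcode)).trans (hz _))
  have htruncate (x : ℕ → D) : Tendsto (fun N i => if i < N then x i else 0) atTop (𝓝 x) := by
    refine tendsto_pi_nhds.2 fun i => tendsto_const_nhds.congr' ?_
    filter_upwards [eventually_gt_atTop i] with N hN
    simp [hN]
  have hdense : Dense {g | (g + ·) ⁻¹' (w.pairCode ⁻¹' A)
      =ᵐ[(digitMeasure D).prod (digitMeasure D)] w.pairCode ⁻¹' A} := fun g =>
    mem_closure_of_tendsto ((htruncate g.1).prodMk_nhds (htruncate g.2))
      (Eventually.of_forall fun N => htranslate _ N fun i hi => by simp [hi.not_gt])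
  rcases measure_eq_zero_or_compl_of_dense ((digitMeasure D).prod (digitMeasure D))
    (w.measurable_pairCode hA) hdense with h | h
  · exact .inl (w.pairMeasure_eq_zero hA fun f => (measure_congr (hshift f)).trans h)
  · exact .inr (w.pairMeasure_eq_zero hA.compl fun f => (measure_congr (hshift f).compl).trans h)

end PairMeasure

end WeightSystem

namespace WeightSystem

variable {D : Type*} [AddCommGroup D] [Fintype D] [TopologicalSpace D] [DiscreteTopology D]
  [MeasurableSpace D] [BorelSpace D] {w : WeightSystem D}

theorem isConservativeMap_pairShift {f : ℤ × ℤ} {u u' v v' : D}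
    (h : ∃ᶠ n in atTop, ∃ N > 0, (w.jump n u u', w.jump n v v') = N • f) :
    IsConservativeMap w.pairMeasure (pairShift f) := by
  intro B hB hpos
  obtain ⟨n, ⟨N, hN, hjump⟩, hn⟩ :=
    (h.and_eventually (w.eventually_pairMeasure_pos_inter_preimage hB hpos u u' v v')).exists
  refine ⟨N, hN, ?_⟩
  rwa [pairShift_iterate, Set.inter_comm, ← hjump]

theorem mem_aeStabilizer_of_frequently {A : Set (PhaseSpace D × PhaseSpace D)}
    (hA : MeasurableSet A) {f : ℤ × ℤ} {u u' v v' : D}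
    (h : ∃ᶠ n in atTop, ∃ g ∈ w.aeStabilizer A, (w.jump n u u', w.jump n v v') = g + f) :
    f ∈ w.aeStabilizer A := by
  refine mem_aeStabilizer_of_recurrent hA fun B hB hpos => ?_
  obtain ⟨n, ⟨g, hg, hjump⟩, hn⟩ :=
    (h.and_eventually (w.eventually_pairMeasure_pos_inter_preimage hB hpos u u' v v')).exists
  exact ⟨g, hg, hjump ▸ hn⟩

theorem not_isConservativeMap_pairShift {p q m : ℕ} (hp : 0 < p) (hm : 0 < m)
    (hrigid : ∀ n ≥ m, ∀ u u' v v', w.NearlyProportional p q n u u' v v' → u' = u ∧ v' = v) :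
    ¬ IsConservativeMap w.pairMeasure (pairShift (p, q)) := by
  intro hcons
  let B : Set (PhaseSpace D × PhaseSpace D) := codeCylinder 0 m ×ˢ codeCylinder 0 m
  have hB : MeasurableSet B :=
    (measurableSet_codeCylinder 0 m).prod (measurableSet_codeCylinder 0 m)
  have hbase : B ⊆ base D ×ˢ base D :=
    Set.prod_mono (codeCylinder_subset_base 0 hm) (codeCylinder_subset_base 0 hm)
  obtain ⟨n, hn, hpos⟩ := hcons B hB (w.pairMeasure_codeCylinder_prod_pos 0 0 m m)
  rw [pairShift_iterate, ← natCast_zsmul] at hpos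
  refine hpos.ne' (w.pairMeasure_eq_zero_of_subset_base ((measurable_pairShift _ hB).inter hB)
    (Set.inter_subset_right.trans hbase) ?_)
  rintro z ⟨hz', hz⟩
  obtain ⟨z', hcode, hdisp, hnear⟩ := exists_nearlyProportional
    (fun n hn u u' v v' h => by obtain ⟨rfl, rfl⟩ := hrigid n hn u u' v v' h; simp [jump])
    (hbase hz')
  rw [Set.mem_preimage, ← hcode] at hz'
  have heq : z'.1 = z.1 := funext fun i => by
    rcases lt_or_ge i m with hi | hi
    · have h' := (pairCode_mem_codeCylinder_prod_iff.1 hz').1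
      have h := (pairCode_mem_codeCylinder_prod_iff.1 hz).1
      exact (mem_cylinder_iff.1 h' i hi).trans (mem_cylinder_iff.1 h i hi).symm
    · exact (hrigid i hi _ _ _ _ (hnear i hi)).1
  rw [heq] at hdisp
  have hzero : p * n = 0 := by exact_mod_cast hdisp.offset_eq_zero
  exact (Nat.mul_pos hp hn).ne' hzero

theorem not_isErgodicMap_of_orbit_inter_null {f : ℤ × ℤ}
    {C C' : Set (PhaseSpace D × PhaseSpace D)} (hC : MeasurableSet C)
    (hpos : 0 < w.pairMeasure C) (hpos' : 0 < w.pairMeasure C')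
    (hnull : ∀ k : ℤ, w.pairMeasure (C' ∩ pairShift (k • f) ⁻¹' C) = 0) :
    ¬ IsErgodicMap w.pairMeasure (pairShift f) := by
  intro herg
  let A : Set (PhaseSpace D × PhaseSpace D) := ⋃ k : ℤ, pairShift (k • f) ⁻¹' C
  have hA : MeasurableSet A := MeasurableSet.iUnion fun k => measurable_pairShift _ hC
  have hinv : pairShift f ⁻¹' A = A := by
    simp only [A, Set.preimage_iUnion, ← Set.preimage_comp, pairShift_comp, ← add_one_zsmul]
    exact (Equiv.addRight (1 : ℤ)).surjective.iUnion_comp fun k => pairShift (k • f) ⁻¹' C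
  have hsub : C ⊆ A := by
    refine Set.subset_iUnion_of_subset 0 ?_
    rw [zero_zsmul, pairShift_zero, Set.preimage_id]
  rcases herg A hA (by rw [hinv, symmDiff_self]; exact measure_empty) with h | h
  · exact hpos.ne' (measure_mono_null hsub h)
  · rw [← Set.inter_union_compl C' A, Set.inter_iUnion] at hpos'
    exact hpos'.ne' (measure_union_null (measure_iUnion_null hnull)
      (measure_mono_null Set.inter_subset_right h))

theorem not_isErgodicMap_pairShift {p q m : ℕ} (hm : 0 < m)
    (hrigid : ∀ n ≥ m, ∀ u u' v v',
      w.NearlyProportional p q n u u' v v' → q * w.jump n u u' = p * w.jump n v v')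
    {v : D} (hv : ∀ u u', ¬ w.NearlyProportional p q m u u' v 0) :
    ¬ IsErgodicMap w.pairMeasure (pairShift (p, q)) := by
  let C (v : D) : Set (PhaseSpace D × PhaseSpace D) :=
    codeCylinder 0 m ×ˢ codeCylinder (Pi.single m v) (m + 1)
  have hC (v : D) : MeasurableSet (C v) :=
    (measurableSet_codeCylinder _ _).prod (measurableSet_codeCylinder _ _)
  have hbase (v : D) : C v ⊆ base D ×ˢ base D :=
    Set.prod_mono (codeCylinder_subset_base _ hm) (codeCylinder_subset_base _ m.succ_pos)
  have hdigit {v : D} {z : (ℕ → D) × (ℕ → D)} (hz : w.pairCode z ∈ C v) : z.2 m = v := by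
    simpa using mem_cylinder_iff.1 (pairCode_mem_codeCylinder_prod_iff.1 hz).2 m m.lt_succ_self
  have hpos (v : D) : 0 < w.pairMeasure (C v) := w.pairMeasure_codeCylinder_prod_pos _ _ _ _
  refine not_isErgodicMap_of_orbit_inter_null (hC 0) (hpos 0) (hpos v) fun k => ?_
  refine w.pairMeasure_eq_zero_of_subset_base ((hC v).inter (measurable_pairShift _ (hC 0)))
    (Set.inter_subset_left.trans (hbase v)) ?_
  rintro z ⟨hz, hk⟩
  obtain ⟨z', hcode, -, hnear⟩ := exists_nearlyProportional hrigid (hbase 0 hk)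
  rw [Set.mem_preimage, ← hcode] at hk
  exact hv _ _ (hdigit hz ▸ hdigit hk ▸ hnear m le_rfl)

end WeightSystem

theorem eq_zero_of_abs_mul_add_lt {c l e : ℤ} (h : |c * l + e| + |e| < l) : c = 0 := by
  have hl : |c * l| < l := by
    calc |c * l| = |(c * l + e) - e| := by rw [add_sub_cancel_right]
      _ ≤ |c * l + e| + |e| := abs_sub _ _
      _ < l := h
  have hzero := Int.eq_zero_of_abs_lt_dvd (Dvd.intro_left c rfl) hl
  exact (mul_eq_zero.1 hzero).resolve_right ((abs_nonneg _).trans_lt hl).ne'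

theorem eq_of_abs_sign_mul_sub_le {x y κ σ ρ : ℤ} (hx : κ < x) (hy : κ < y) (hσ : |σ| ≤ 1)
    (hρ : |ρ| ≤ 1) (h : |x * σ - y * ρ| ≤ κ) : ρ = σ ∧ (σ ≠ 0 → |x - y| ≤ κ) := by
  rw [Int.abs_le_one_iff] at hσ hρ
  simp only [abs_le] at h ⊢
  rcases hσ with rfl | rfl | rfl <;> rcases hρ with rfl | rfl | rfl <;> omega

theorem eq_zero_of_mul_sign_eq_mul_sign {x y σ ρ : ℤ} (hy : 0 < y) (hxy : y < x) (hσ : |σ| ≤ 1)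
    (hρ : |ρ| ≤ 1) (h : x * σ = y * ρ) : σ = 0 ∧ ρ = 0 := by
  rw [Int.abs_le_one_iff] at hσ hρ
  rcases hσ with rfl | rfl | rfl <;> rcases hρ with rfl | rfl | rfl <;> omega

/-- An instruction for one place of the tower: from infinitely many places with the same tag one
obtains recurrence along the displacements `N • (p, q) + offset`, for suitable `N`. -/
@[ext]
structure Tag where
  p : ℕ
  q : ℕ
  p_pos : 0 < p
  p_le_q : p ≤ q
  offset : Fin 2 × Fin 2

namespace Tag

instance : Countable Tag :=
  Injective.countable (f := fun τ : Tag => (τ.p, τ.q, τ.offset)) fun τ τ' h => by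
    simp only [Prod.mk.injEq] at h
    exact Tag.ext h.1 h.2.1 h.2.2

/-- The ratio of the exponents served by the tag. -/
def ratio (τ : Tag) : ℚ := τ.p / τ.q

theorem ratio_eq_div_iff {τ : Tag} {p q : ℕ} (hq : 0 < q) :
    τ.ratio = p / q ↔ τ.p * q = p * τ.q := by
  have hτ : (τ.q : ℚ) ≠ 0 := by exact_mod_cast (τ.p_pos.trans_le τ.p_le_q).ne'
  rw [ratio, div_eq_div_iff hτ (by exact_mod_cast hq.ne')]
  norm_cast

/-- The multiple of `(p, q)` which a tag produces at place `n`, where `k` bounds the contribution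
of the places below. -/
def multiplier (n k : ℕ) : ℕ := 2 * (n + 1) * (k + 1)

/-- The displacements of the two coordinates produced by a tag. -/
def step (τ : Tag) (n k : ℕ) : Fin 2 → ℕ :=
  ![τ.p * multiplier n k + τ.offset.1, τ.q * multiplier n k + τ.offset.2]

/-- The unit in which the two levels of a place are separated; it exceeds the contribution of the
steps and of the places below. -/
def spread (τ : Tag) (n k : ℕ) : ℕ := τ.step n k 0 + τ.step n k 1 + k

/-- A digit consists of a level and a bit. The bit carries the step belonging to the level, and
the levels are kept far apart. -/
def weight (τ : Tag) (n k : ℕ) (d : Fin 2 × Fin 2) : ℕ :=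
  d.1 * ((n + 1) * τ.spread n k) + d.2 * τ.step n k d.1

variable (τ : Tag) (n k : ℕ)

theorem multiplier_le_step (l : Fin 2) : multiplier n k ≤ τ.step n k l := by
  have hp := Nat.le_mul_of_pos_left (multiplier n k) τ.p_pos
  have hq := Nat.le_mul_of_pos_left (multiplier n k) (τ.p_pos.trans_le τ.p_le_q)
  fin_cases l
  exacts [hp.trans le_self_add, hq.trans le_self_add]

theorem step_add_le_spread (l : Fin 2) : τ.step n k l + k ≤ τ.spread n k := by
  fin_cases l <;> simp [spread]

/-- The increase of weight when the digit changes from `u` to `v`. -/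
def jump (u v : Fin 2 × Fin 2) : ℤ := τ.weight n k v - τ.weight n k u

theorem jump_eq (u v : Fin 2 × Fin 2) : τ.jump n k u v =
    ((v.1 : ℤ) - u.1) * ((n + 1) * τ.spread n k) +
      (v.2 * τ.step n k v.1 - u.2 * τ.step n k u.1) := by
  simp only [jump, weight, Nat.cast_add, Nat.cast_mul, Nat.cast_one]
  ring

theorem abs_bit_step_sub_add_le (u v : Fin 2 × Fin 2) :
    |(v.2 : ℤ) * τ.step n k v.1 - u.2 * τ.step n k u.1| + k ≤ τ.spread n k := by
  have hbit (d : Fin 2 × Fin 2) :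
      0 ≤ (d.2 : ℤ) * τ.step n k d.1 ∧ (d.2 : ℤ) * τ.step n k d.1 + k ≤ τ.spread n k := by
    have hd := τ.step_add_le_spread n k d.1
    obtain h | h : (d.2 : ℤ) = 0 ∨ (d.2 : ℤ) = 1 := by omega
    all_goals rw [h]; omega
  have hu := hbit u
  have hv := hbit v
  rw [← le_sub_iff_add_le, abs_le]
  omega

theorem two_mul_lt_step (l : Fin 2) : 2 * k < τ.step n k l := by
  refine lt_of_lt_of_le ?_ (τ.multiplier_le_step n k l)
  rw [multiplier]
  nlinarith

theorem eq_of_abs_weight_sub_le {u v : Fin 2 × Fin 2}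
    (h : |(τ.weight n k u : ℤ) - τ.weight n k v| ≤ 2 * k) : u = v := by
  have hlevel : τ.spread n k ≤ (n + 1) * τ.spread n k := Nat.le_mul_of_pos_left _ n.succ_pos
  have hspread : τ.spread n k = τ.step n k 0 + τ.step n k 1 + k := rfl
  have hstep₀ := τ.two_mul_lt_step n k 0
  have hstep₁ := τ.two_mul_lt_step n k 1
  rcases u with ⟨l, b⟩
  rcases v with ⟨l', b'⟩
  rw [abs_le] at h
  fin_cases l <;> fin_cases b <;> fin_cases l' <;> fin_cases b' <;>
    simp only [weight, Fin.zero_eta, Fin.mk_one, Fin.isValue, zero_mul, one_mul, zero_add,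
      add_zero] at h ⊢ <;> omega

theorem weight_add_lt (d : Fin 2 × Fin 2) :
    τ.weight n k d + k < (n + 1) * τ.spread n k + τ.spread n k + 1 := by
  have hlevel : (d.1 : ℕ) * ((n + 1) * τ.spread n k) ≤ 1 * ((n + 1) * τ.spread n k) :=
    Nat.mul_le_mul_right _ (by omega)
  have hbit : (d.2 : ℕ) * τ.step n k d.1 ≤ 1 * τ.step n k d.1 :=
    Nat.mul_le_mul_right _ (by omega)
  have hstep := τ.step_add_le_spread n k d.1
  rw [weight]
  omega

variable {τ n k} {p q : ℕ} {u u' v v' : Fin 2 × Fin 2}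

theorem add_mul_succ_lt_multiplier (hn : p + q ≤ n) : (p + q) * (k + 1) < multiplier n k := by
  rw [multiplier]
  nlinarith

theorem level_eq_of_abs_jump_sub_le (hp : 0 < p) (hpq : p < q) (hn : p + q ≤ n)
    (h : |q * τ.jump n k u u' - p * τ.jump n k v v'| ≤ (p + q) * k) :
    u'.1 = u.1 ∧ v'.1 = v.1 := by
  have hspread : 0 < τ.spread n k := by
    have hstep := τ.two_mul_lt_step n k 0
    have hle := τ.step_add_le_spread n k 0
    omega
  have hu := τ.abs_bit_step_sub_add_le n k u u'
  have hv := τ.abs_bit_step_sub_add_le n k v v'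
  rw [jump_eq, jump_eq] at h
  set e : ℤ := u'.2 * τ.step n k u'.1 - u.2 * τ.step n k u.1
  set e' : ℤ := v'.2 * τ.step n k v'.1 - v.2 * τ.step n k v.1
  have herror : |q * e - p * e'| ≤ (p + q) * (τ.spread n k - k) := by
    refine (abs_sub _ _).trans ?_
    rw [abs_mul, abs_mul, Nat.abs_cast, Nat.abs_cast]
    nlinarith
  have hlevels : q * ((u'.1 : ℤ) - u.1) - p * ((v'.1 : ℤ) - v.1) = 0 := by
    refine eq_zero_of_abs_mul_add_lt (l := (n + 1) * τ.spread n k) (e := q * e - p * e') ?_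
    calc _ ≤ ((p : ℤ) + q) * k + (p + q) * (τ.spread n k - k) := by
          refine add_le_add (le_of_eq_of_le (congrArg _ ?_) h) herror
          ring
      _ = (p + q) * τ.spread n k := by ring
      _ < (n + 1) * τ.spread n k :=
          mul_lt_mul_of_pos_right (by omega) (by exact_mod_cast hspread)
  obtain ⟨hs, hs'⟩ := eq_zero_of_mul_sign_eq_mul_sign (by omega) (by omega)
    (abs_le.2 (by omega)) (abs_le.2 (by omega)) (sub_eq_zero.1 hlevels)
  omega

theorem eq_div_of_abs_step_sub_le {l l' : Fin 2} (hpq : p < q) (hn : p + q ≤ n)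
    (h : |(q : ℤ) * τ.step n k l - p * τ.step n k l'| ≤ (p + q) * k) :
    l = 0 ∧ l' = 1 ∧ τ.ratio = p / q := by
  let r : Fin 2 → ℕ := ![τ.p, τ.q]
  let a : Fin 2 → Fin 2 := ![τ.offset.1, τ.offset.2]
  have hstep (l : Fin 2) : (τ.step n k l : ℤ) = r l * multiplier n k + a l := by
    fin_cases l <;> simp [step, r, a]
  have hoffset : |(q : ℤ) * a l - p * a l'| ≤ p + q := by
    have hl : (q : ℤ) * a l ≤ q * 1 := by gcongr; omega
    have hl' : (p : ℤ) * a l' ≤ p * 1 := by gcongr; omega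
    rw [abs_le]
    constructor <;> nlinarith
  have hratio : (q : ℤ) * r l - p * r l' = 0 := by
    refine eq_zero_of_abs_mul_add_lt (l := multiplier n k) (e := q * a l - p * a l') ?_
    calc _ ≤ ((p : ℤ) + q) * k + (p + q) := by
          refine add_le_add (le_of_eq_of_le (congrArg _ ?_) h) hoffset
          rw [hstep, hstep]
          ring
      _ = (p + q) * (k + 1) := by ring
      _ < multiplier n k := by exact_mod_cast add_mul_succ_lt_multiplier hn
  have hle := τ.p_le_q
  have hpos := τ.p_pos
  rw [ratio_eq_div_iff (by omega)]
  fin_cases l <;> fin_cases l' <;>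
    simp only [r, Fin.zero_eta, Fin.mk_one, Fin.isValue, Matrix.cons_val_zero,
      Matrix.cons_val_one, zero_ne_one, one_ne_zero, true_and, false_and] at hratio ⊢ <;>
    nlinarith

theorem jump_eq_of_level_eq (h : u'.1 = u.1) :
    τ.jump n k u u' = ((u'.2 : ℤ) - u.2) * τ.step n k u.1 := by
  rw [jump_eq, h]
  ring

theorem eq_or_ratio_eq_of_abs_jump_sub_le (hp : 0 < p) (hpq : p < q) (hn : p + q ≤ n)
    (h : |q * τ.jump n k u u' - p * τ.jump n k v v'| ≤ (p + q) * k) :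
    u' = u ∧ v' = v ∨ τ.ratio = p / q ∧ v.1 = 1 ∧
      ∃ σ : ℤ, τ.jump n k u u' = σ * τ.step n k 0 ∧ τ.jump n k v v' = σ * τ.step n k 1 := by
  obtain ⟨hu, hv⟩ := level_eq_of_abs_jump_sub_le hp hpq hn h
  have hlarge {r : ℕ} (hr : 0 < r) (l : Fin 2) : ((p : ℤ) + q) * k < r * τ.step n k l := by
    calc ((p : ℤ) + q) * k ≤ (p + q) * (k + 1) := by gcongr; omega
      _ < multiplier n k := by exact_mod_cast add_mul_succ_lt_multiplier hn
      _ ≤ τ.step n k l := by exact_mod_cast τ.multiplier_le_step n k l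
      _ ≤ r * τ.step n k l := by exact_mod_cast Nat.le_mul_of_pos_left _ hr
  rw [jump_eq_of_level_eq hu, jump_eq_of_level_eq hv] at h ⊢
  obtain ⟨hσ, hstep⟩ := eq_of_abs_sign_mul_sub_le (σ := (u'.2 : ℤ) - u.2) (ρ := (v'.2 : ℤ) - v.2)
    (hlarge (hp.trans hpq) u.1) (hlarge hp v.1) (abs_le.2 (by omega)) (abs_le.2 (by omega))
    (le_of_eq_of_le (congrArg _ (by ring)) h)
  by_cases hzero : (u'.2 : ℤ) - u.2 = 0
  · exact Or.inl ⟨Prod.ext hu (by omega), Prod.ext hv (by omega)⟩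
  · obtain ⟨hl, hl', hratio⟩ := eq_div_of_abs_step_sub_le hpq hn (hstep hzero)
    exact Or.inr ⟨hratio, hl', _, by rw [hl], by rw [hl', hσ]⟩

end Tag

/-- The values of `WeightSystem.bound` for `tower t`. -/
def towerBound (t : ℕ → Tag) : ℕ → ℕ
  | 0 => 0
  | n + 1 => (n + 1) * (t n).spread n (towerBound t n) + (t n).spread n (towerBound t n) + 1

/-- The weight system whose place `n` carries the tag `t n`. -/
def tower (t : ℕ → Tag) : WeightSystem (Fin 2 × Fin 2) where
  weight n := (t n).weight n (towerBound t n)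
  bound := towerBound t
  weight_zero n := by simp [Tag.weight]
  weight_add_bound_lt n := (t n).weight_add_lt n (towerBound t n)
  eq_of_abs_weight_sub_le n _ _ := (t n).eq_of_abs_weight_sub_le n (towerBound t n)

section Tower

variable {t : ℕ → Tag}

theorem exists_tower_jump_eq (t : ℕ → Tag) (n : ℕ) :
    ∃ N > 0, ((tower t).jump n (0, 0) (0, 1), (tower t).jump n (1, 0) (1, 1)) =
      N • (((t n).p : ℤ), ((t n).q : ℤ)) + (((t n).offset.1 : ℤ), ((t n).offset.2 : ℤ)) := by
  refine ⟨Tag.multiplier n (towerBound t n), by simp [Tag.multiplier], ?_⟩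
  simp [tower, WeightSystem.jump, Tag.weight, Tag.step, mul_comm]

theorem eq_or_ratio_eq_of_nearlyProportional {p q n : ℕ} (hp : 0 < p) (hpq : p < q) (hn : p + q ≤ n)
    {u u' v v' : Fin 2 × Fin 2} (h : (tower t).NearlyProportional p q n u u' v v') :
    u' = u ∧ v' = v ∨ (t n).ratio = p / q ∧ v.1 = 1 ∧
      ∃ σ : ℤ, (tower t).jump n u u' = σ * (t n).step n (towerBound t n) 0 ∧
        (tower t).jump n v v' = σ * (t n).step n (towerBound t n) 1 :=
  Tag.eq_or_ratio_eq_of_abs_jump_sub_le hp hpq hn h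

theorem isConservativeMap_pairShift_tower {p q : ℕ} {hp : 0 < p} {hpq : p ≤ q}
    (h : ∃ᶠ n in atTop, t n = ⟨p, q, hp, hpq, 0⟩) :
    IsConservativeMap (tower t).pairMeasure (pairShift (p, q)) :=
  WeightSystem.isConservativeMap_pairShift <| h.mono fun n hn => by
    simpa [hn] using exists_tower_jump_eq t n

theorem offset_mem_aeStabilizer_tower {A : Set (PhaseSpace (Fin 2 × Fin 2) × PhaseSpace _)}
    (hA : MeasurableSet A) {τ : Tag} (h : ∃ᶠ n in atTop, t n = τ)
    (hτ : ((τ.p : ℤ), (τ.q : ℤ)) ∈ (tower t).aeStabilizer A) :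
    ((τ.offset.1 : ℤ), (τ.offset.2 : ℤ)) ∈ (tower t).aeStabilizer A :=
  WeightSystem.mem_aeStabilizer_of_frequently hA <| h.mono fun n hn => by
    obtain ⟨N, -, hN⟩ := exists_tower_jump_eq t n
    exact ⟨_, AddSubgroup.nsmul_mem _ hτ N, hn ▸ hN⟩

theorem isErgodicMap_pairShift_tower {p q : ℕ} {hp : 0 < p} {hpq : p ≤ q}
    (h : ∀ a, ∃ᶠ n in atTop, t n = ⟨p, q, hp, hpq, a⟩) :
    IsErgodicMap (tower t).pairMeasure (pairShift (p, q)) := by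
  intro A hA hinv
  have hmem : ((p, q) : ℤ × ℤ) ∈ (tower t).aeStabilizer A :=
    WeightSystem.mem_aeStabilizer.2 (measure_symmDiff_eq_zero_iff.1 hinv)
  have h₁ : ((1, 0) : ℤ × ℤ) ∈ (tower t).aeStabilizer A := by
    simpa using offset_mem_aeStabilizer_tower hA (h (1, 0)) hmem
  have h₂ : ((0, 1) : ℤ × ℤ) ∈ (tower t).aeStabilizer A := by
    simpa using offset_mem_aeStabilizer_tower hA (h (0, 1)) hmem
  refine WeightSystem.measure_eq_zero_or_compl_of_aeStabilizer_eq_top hA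
    ((AddSubgroup.eq_top_iff' _).2 fun f => ?_)
  have hf : f = f.1 • (1, 0) + f.2 • (0, 1) := by ext <;> simp
  rw [hf]
  exact add_mem (AddSubgroup.zsmul_mem _ h₁ _) (AddSubgroup.zsmul_mem _ h₂ _)

theorem not_isConservativeMap_pairShift_tower {p q : ℕ} (hp : 0 < p) (hpq : p < q)
    (h : ∀ n, (t n).ratio ≠ p / q) :
    ¬ IsConservativeMap (tower t).pairMeasure (pairShift (p, q)) :=
  WeightSystem.not_isConservativeMap_pairShift (m := p + q) hp (by omega)
    fun n hn _ _ _ _ hnear =>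
      (eq_or_ratio_eq_of_nearlyProportional hp hpq hn hnear).resolve_right fun hex => h n hex.1

theorem not_isErgodicMap_pairShift_tower {p q : ℕ} (hp : 0 < p) (hpq : p < q)
    (h : ∀ n, (t n).ratio = p / q → (t n).offset = 0) :
    ¬ IsErgodicMap (tower t).pairMeasure (pairShift (p, q)) := by
  refine WeightSystem.not_isErgodicMap_pairShift (m := p + q) (v := (0, 1)) (by omega)
    (fun n hn u u' v v' hnear => ?_) fun u u' hnear => ?_
  · rcases eq_or_ratio_eq_of_nearlyProportional hp hpq hn hnear with
      ⟨rfl, rfl⟩ | ⟨hratio, -, σ, hu, hv⟩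
    · simp [WeightSystem.jump]
    · have hpq' : ((t n).p : ℤ) * q = p * (t n).q := by
        exact_mod_cast (Tag.ratio_eq_div_iff (hp.trans hpq)).1 hratio
      rw [hu, hv]
      simp only [Tag.step, h n hratio, Matrix.cons_val_zero, Matrix.cons_val_one, Prod.fst_zero,
        Prod.snd_zero, Fin.val_zero, add_zero, Nat.cast_mul]
      linear_combination σ * Tag.multiplier n (towerBound t n) * hpq'
  · rcases eq_or_ratio_eq_of_nearlyProportional hp hpq le_rfl hnear with ⟨-, hv⟩ | ⟨-, hlevel, -⟩
    · exact absurd hv (by decide)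
    · exact absurd hlevel (by decide)

end Tower

theorem exists_frequently_eq_of_countable {α : Type*} [Countable α] {S : Set α}
    (hS : S.Nonempty) : ∃ t : ℕ → α, (∀ n, t n ∈ S) ∧ ∀ a ∈ S, ∃ᶠ n in atTop, t n = a := by
  obtain ⟨e, rfl⟩ := S.to_countable.exists_eq_range hS
  refine ⟨fun n => e n.unpair.1, fun n => Set.mem_range_self _, ?_⟩
  rintro _ ⟨i, rfl⟩
  exact frequently_atTop.2 fun k => ⟨Nat.pair i k, Nat.right_le_pair i k, by simp⟩

/-- The tags which produce the prescribed behaviour: all offsets for ratios in `R₁`, and the offset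
`0` for ratios in `R₂`. The ratio `1`, which concerns no pair `p < q`, ensures that there is a
tag. -/
def tags (R₁ R₂ : Set ℚ) : Set Tag :=
  {τ | τ.ratio ∈ R₁ ∨ τ.offset = 0 ∧ (τ.ratio ∈ R₂ ∨ τ.ratio = 1)}

theorem tags_nonempty (R₁ R₂ : Set ℚ) : (tags R₁ R₂).Nonempty :=
  ⟨⟨1, 1, one_pos, le_rfl, 0⟩, Or.inr ⟨rfl, Or.inr (by simp [Tag.ratio])⟩⟩

end TagTower

theorem stmt5 (R₁ R₂ : Set ℚ) (h12 : R₁ ⊆ R₂) (hR : R₂ ⊆ {r : ℚ | 0 < r ∧ r < 1}) :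
    ∃ (X : Type) (_ : MeasurableSpace X) (_ : StandardBorelSpace X)
      (μ : Measure X) (_ : NoAtoms μ) (_ : SigmaFinite μ) (T : X ≃ᵐ X),
      μ Set.univ = ⊤ ∧ MeasurePreserving T μ μ ∧
      ∀ p q : ℕ, 0 < p → p < q →
        (((p : ℚ) / (q : ℚ) ∈ R₁ →
            IsConservativeMap (μ.prod μ)
              (fun z : X × X => ((⇑T)^[p] z.1, (⇑T)^[q] z.2)) ∧
            IsErgodicMap (μ.prod μ)
              (fun z : X × X => ((⇑T)^[p] z.1, (⇑T)^[q] z.2))) ∧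
         ((p : ℚ) / (q : ℚ) ∈ R₂ \ R₁ →
            IsConservativeMap (μ.prod μ)
              (fun z : X × X => ((⇑T)^[p] z.1, (⇑T)^[q] z.2)) ∧
            ¬ IsErgodicMap (μ.prod μ)
              (fun z : X × X => ((⇑T)^[p] z.1, (⇑T)^[q] z.2))) ∧
         ((p : ℚ) / (q : ℚ) ∉ R₂ →
            ¬ IsConservativeMap (μ.prod μ)
              (fun z : X × X => ((⇑T)^[p] z.1, (⇑T)^[q] z.2)))) := by
  obtain ⟨t, ht, hfreq⟩ := TagTower.exists_frequently_eq_of_countable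
    (TagTower.tags_nonempty R₁ R₂)
  refine ⟨TagTower.PhaseSpace (Fin 2 × Fin 2), inferInstance, inferInstance,
    (TagTower.tower t).invariantMeasure, inferInstanceAs (NullSingletonClass _), inferInstance,
    TagTower.shift 1, (TagTower.tower t).invariantMeasure_univ,
    (TagTower.tower t).measurePreserving_shift 1, fun p q hp hpq => ?_⟩
  simp only [TagTower.shift_iterate, mul_one]
  refine ⟨fun h₁ => ⟨?_, ?_⟩, fun ⟨h₂, h₁⟩ => ⟨?_, ?_⟩, fun h₂ => ?_⟩
  · exact TagTower.isConservativeMap_pairShift_tower (hfreq ⟨p, q, hp, hpq.le, 0⟩ (Or.inl h₁))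
  · exact TagTower.isErgodicMap_pairShift_tower
      fun a => hfreq ⟨p, q, hp, hpq.le, a⟩ (Or.inl h₁)
  · exact TagTower.isConservativeMap_pairShift_tower
      (hfreq ⟨p, q, hp, hpq.le, 0⟩ (Or.inr ⟨rfl, Or.inl h₂⟩))
  · exact TagTower.not_isErgodicMap_pairShift_tower hp hpq fun n hn =>
      ((ht n).resolve_left (hn ▸ h₁)).1
  · have hne : (p : ℚ) / q ≠ 1 :=
      ((div_lt_one (by exact_mod_cast hp.trans hpq)).2 (by exact_mod_cast hpq)).ne
    refine TagTower.not_isConservativeMap_pairShift_tower hp hpq fun n hn => ?_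
    rcases ht n with h | ⟨-, h | h⟩
    · exact h₂ (h12 (hn ▸ h))
    · exact h₂ (hn ▸ h)
    · exact hne (hn.symm.trans h)
end
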